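/- arXiv:2109.00502 — 3 statements merged into one kernel-verified Lean document; each statement's English description precedes it below -/
import Mathlib

section
/- A bicrucial permutation of length n exists if and only if n = 9, or n is odd with n ≥ 13, or n is even with n ≥ 32 and n ≠ 38. -/
/-- The permutation `σ` of length `n` has a square starting at position `k`
with half-length `ℓ`: the factors `(σ k, …, σ (k+ℓ-1))` and
`(σ (k+ℓ), …, σ (k+2ℓ-1))` are order-isomorphic. -/
def HasSquareAt {n : ℕ} (σ : Fin n → Fin n) (k ℓ : ℕ) : Prop :=
  2 ≤ ℓ ∧ ∃ hb : k + 2 * ℓ ≤ n, ∀ (i j : ℕ) (hi : i < ℓ) (hj : j < ℓ),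
    (σ ⟨k + i, by omega⟩ < σ ⟨k + j, by omega⟩ ↔
      σ ⟨k + ℓ + i, by omega⟩ < σ ⟨k + ℓ + j, by omega⟩)

/-- `σ` contains a square. -/
def ContainsSquare {n : ℕ} (σ : Fin n → Fin n) : Prop :=
  ∃ k ℓ : ℕ, HasSquareAt σ k ℓ

/-- `σ` is square-free: it contains no square. -/
def SquareFree {n : ℕ} (σ : Fin n → Fin n) : Prop :=
  ¬ ContainsSquare σ

/-- `π` (of length `n+1`) is a right-extension of `σ` (of length `n`):
the prefix `(π 0, …, π (n-1))` is order-isomorphic to `σ`. -/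
def IsRightExtension {n : ℕ} (σ : Fin n → Fin n) (π : Fin (n + 1) → Fin (n + 1)) : Prop :=
  ∀ i j : Fin n, π i.castSucc < π j.castSucc ↔ σ i < σ j

/-- `π` (of length `n+1`) is a left-extension of `σ` (of length `n`):
the suffix `(π 1, …, π n)` is order-isomorphic to `σ`. -/
def IsLeftExtension {n : ℕ} (σ : Fin n → Fin n) (π : Fin (n + 1) → Fin (n + 1)) : Prop :=
  ∀ i j : Fin n, π i.succ < π j.succ ↔ σ i < σ j

/-- `σ` is right-crucial: square-free, and every right-extension contains a square. -/
def RightCrucial {n : ℕ} (σ : Equiv.Perm (Fin n)) : Prop :=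
  SquareFree ⇑σ ∧ ∀ π : Equiv.Perm (Fin (n + 1)), IsRightExtension ⇑σ ⇑π → ContainsSquare ⇑π

/-- `σ` is left-crucial: square-free, and every left-extension contains a square. -/
def LeftCrucial {n : ℕ} (σ : Equiv.Perm (Fin n)) : Prop :=
  SquareFree ⇑σ ∧ ∀ π : Equiv.Perm (Fin (n + 1)), IsLeftExtension ⇑σ ⇑π → ContainsSquare ⇑π

/-- `σ` is bicrucial: both left-crucial and right-crucial. -/
def Bicrucial {n : ℕ} (σ : Equiv.Perm (Fin n)) : Prop :=
  LeftCrucial σ ∧ RightCrucial σ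

/-!
In a square-free sequence the ascents alternate with period `4`, since there are no squares of
half-length `2`; every other square therefore has a half-length divisible by `4`.

Nonexistence: in even length one of the two ends has its two outer steps in the same direction, say
`y 1 < y 2 < y 3`. A new entry in front of `y 1` just above `y 1`, `y 2` or `y 3` avoids squares of
half-length `2`, so three squares of distinct half-lengths divisible by `4` arise. A length of at
most `30` leaves only the half-lengths `4`, `8` and `12`, whose coexistence is contradictory. For
length `38` the half-lengths `8` and `16` occur, and these two squares determine the order of the
last entries to such an extent that not every new last entry creates a square. The lengths `7` and
`11` only leave squares of half-length `2` and `4`, which force incompatible shapes at the two ends.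

Existence: an infinite sequence that is a zigzag, whose even part is a zigzag and which reproduces
itself at the multiples of `4` is square-free, as the half-length of a square could be divided by
`4` again and again. Its beginning is replaced by one that is crucial at the front, and it is cut
off with one of four endings, depending on the length modulo `8`. The lengths `13` and `36` are too
short for this and have bicrucial sequences of their own.
-/

namespace BicrucialPerm

/-! ### Squares and crucial ends of sequences -/

section Sequences

variable {α β : Type*} [LinearOrder α] [LinearOrder β] {y : ℕ → α} {z : ℕ → β} {n k l : ℕ}

/-- The factors of length `l` of the sequence `y` at the positions `k` and `k + l` are
order-isomorphic: the sequence version of `HasSquareAt`. -/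
def SquareAt (y : ℕ → α) (k l : ℕ) : Prop :=
  ∀ i < l, ∀ j < l, (y (k + i) < y (k + j) ↔ y (k + l + i) < y (k + l + j))

theorem SquareAt.lt_iff (h : SquareAt y k l) {p q : ℕ} (hp : k ≤ p) (hp' : p < k + l)
    (hq : k ≤ q) (hq' : q < k + l) : y p < y q ↔ y (p + l) < y (q + l) := by
  have := h (p - k) (by omega) (q - k) (by omega)
  rwa [show k + (p - k) = p by omega, show k + (q - k) = q by omega,
    show k + l + (p - k) = p + l by omega, show k + l + (q - k) = q + l by omega] at this

theorem squareAt_of_lt_iff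
    (h : ∀ p q, k ≤ p → p < k + l → k ≤ q → q < k + l → (y p < y q ↔ y (p + l) < y (q + l))) :
    SquareAt y k l := fun i hi j hj => by
  have := h (k + i) (k + j) (by omega) (by omega) (by omega) (by omega)
  rwa [add_right_comm k i, add_right_comm k j] at this

theorem SquareAt.congr (hyz : ∀ i j, k ≤ i → i < k + 2 * l → k ≤ j → j < k + 2 * l →
    (z i < z j ↔ y i < y j)) (h : SquareAt y k l) : SquareAt z k l := fun i hi j hj => by
  rw [hyz _ _ (by omega) (by omega) (by omega) (by omega),
    hyz _ _ (by omega) (by omega) (by omega) (by omega)]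
  exact h i hi j hj

/-- A square read from right to left. -/
theorem SquareAt.reflect {N : ℕ} (hz : ∀ i j, k ≤ i → i < k + 2 * l → k ≤ j → j < k + 2 * l →
    (z i < z j ↔ y (N - i) < y (N - j))) (hN : k + 2 * l ≤ N + 1) (h : SquareAt z k l) :
    SquareAt y (N + 1 - k - 2 * l) l := by
  refine squareAt_of_lt_iff fun p q hp hp' hq hq' => ?_
  have := h.lt_iff (p := N - p - l) (q := N - q - l)
    (by omega) (by omega) (by omega) (by omega)
  rw [hz _ _ (by omega) (by omega) (by omega) (by omega),
    hz _ _ (by omega) (by omega) (by omega) (by omega)] at this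
  rw [show N - (N - p - l) = p + l by omega, show N - (N - q - l) = q + l by omega,
    show N - (N - p - l + l) = p by omega, show N - (N - q - l + l) = q by omega] at this
  exact this.symm

/-- If a new entry that exceeds exactly the entries `y i` with `D i` is put at position `0`, in
front of `y 1, y 2, …`, then a square of half-length `l` starts there. -/
structure FrontSquare (y : ℕ → α) (D : ℕ → Prop) (l : ℕ) : Prop where
  lt_iff : ∀ i j, 1 ≤ i → i < l → 1 ≤ j → j < l → (y i < y j ↔ y (l + i) < y (l + j))
  cut_iff : ∀ i, 1 ≤ i → i < l → (D i ↔ y (l + i) < y l)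

/-- Every way of putting a new entry in front of `y 1, …, y n` creates a square. The new entry is
encoded by the set `D` of the indices of the entries below it. -/
def FrontCrucial (y : ℕ → α) (n : ℕ) : Prop :=
  ∀ D : ℕ → Prop, (∀ i j, 1 ≤ i → i ≤ n → 1 ≤ j → j ≤ n → D j → y i < y j → D i) →
    ∃ l, 2 ≤ l ∧ 2 * l ≤ n + 1 ∧ FrontSquare y D l

theorem FrontCrucial.congr
    (hyz : ∀ i j, 1 ≤ i → i ≤ n → 1 ≤ j → j ≤ n → (z i < z j ↔ y i < y j))
    (hy : FrontCrucial y n) : FrontCrucial z n := by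
  intro D hD
  obtain ⟨l, hl, hln, hsq⟩ := hy D fun i j hi hi' hj hj' hDj hlt =>
    hD i j hi hi' hj hj' hDj ((hyz i j hi hi' hj hj').2 hlt)
  refine ⟨l, hl, hln, fun i j hi hi' hj hj' => ?_, fun i hi hi' => ?_⟩
  · rw [hyz _ _ hi (by omega) hj (by omega),
      hyz _ _ (by omega) (by omega) (by omega) (by omega)]
    exact hsq.lt_iff i j hi hi' hj hj'
  · rw [hyz _ _ (by omega) (by omega) (by omega) (by omega)]
    exact hsq.cut_iff i hi hi'

theorem FrontCrucial.mono {m : ℕ} (hmn : m ≤ n) (hy : FrontCrucial y m) : FrontCrucial y n := by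
  intro D hD
  obtain ⟨l, hl, hlm, hsq⟩ := hy D fun i j hi hi' hj hj' =>
    hD i j hi (hi'.trans hmn) hj (hj'.trans hmn)
  exact ⟨l, hl, by omega, hsq⟩

theorem FrontCrucial.of_antitone (hinj : Set.InjOn y (Set.Icc 1 n))
    (hyz : ∀ i j, 1 ≤ i → i ≤ n → 1 ≤ j → j ≤ n → (z i < z j ↔ y j < y i))
    (hy : FrontCrucial y n) : FrontCrucial z n := by
  intro D hD
  obtain ⟨l, hl, hln, hsq⟩ := hy (fun i => ¬ D i) fun i j hi hi' hj hj' hDj hlt hDi =>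
    hDj (hD j i hj hj' hi hi' hDi ((hyz j i hj hj' hi hi').2 hlt))
  refine ⟨l, hl, hln, fun i j hi hi' hj hj' => ?_, fun i hi hi' => ?_⟩
  · rw [hyz _ _ hi (by omega) hj (by omega),
      hyz _ _ (by omega) (by omega) (by omega) (by omega)]
    exact hsq.lt_iff j i hj hj' hi hi'
  · have hne : y (l + i) ≠ y l := fun e => by
      have := hinj ⟨by omega, by omega⟩ ⟨by omega, by omega⟩ e
      omega
    rw [hyz _ _ (by omega) (by omega) (by omega) (by omega), ← not_iff_not,
      hsq.cut_iff i hi hi', not_lt, hne.le_iff_lt]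

/-- The entries `y 1, …, y n` are distinct and contain no square: the sequence version of
`SquareFree`. -/
structure IsSquareFreeSeq (y : ℕ → α) (n : ℕ) : Prop where
  injOn : Set.InjOn y (Set.Icc 1 n)
  not_squareAt : ∀ k l, 1 ≤ k → 2 ≤ l → k + 2 * l ≤ n + 1 → ¬ SquareAt y k l

/-- A square-free sequence that acquires a square whenever a new entry is put at either end: the
sequence version of `Bicrucial`. -/
structure IsBicrucialSeq (y : ℕ → α) (n : ℕ) : Prop extends IsSquareFreeSeq y n where
  front : FrontCrucial y n
  back : FrontCrucial (fun i => y (n + 1 - i)) n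

theorem squareAt_zero_iff_frontSquare (hz : Set.InjOn z (Set.Iic n)) (hln : 2 * l ≤ n + 1)
    (hzy : ∀ i j, 1 ≤ i → i ≤ n → 1 ≤ j → j ≤ n → (z i < z j ↔ y i < y j)) :
    SquareAt z 0 l ↔ FrontSquare y (fun i => z i < z 0) l := by
  constructor
  · refine fun h => ⟨fun i j hi hi' hj hj' => ?_, fun i hi hi' => ?_⟩
    · rw [← hzy _ _ hi (by omega) hj (by omega),
        ← hzy _ _ (by omega) (by omega) (by omega) (by omega)]
      simpa using h i hi' j hj'
    · rw [← hzy _ _ (by omega) (by omega) (by omega) (by omega)]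
      simpa using h i hi' 0 (by omega)
  · intro h i hi j hj
    have hcut : ∀ t, 1 ≤ t → t < l → (z t < z 0 ↔ z (l + t) < z l) := fun t ht ht' =>
      (h.cut_iff t ht ht').trans (hzy _ _ (by omega) (by omega) (by omega) (by omega)).symm
    have hne : ∀ s t, s < t → t ≤ n → z s ≠ z t := fun s t hst ht e =>
      hst.ne (hz (show s ≤ n by omega) ht e)
    simp only [zero_add]
    rcases Nat.eq_zero_or_pos i with rfl | hi0 <;> rcases Nat.eq_zero_or_pos j with rfl | hj0
    · simp
    · rw [add_zero, ← not_iff_not, not_lt, not_lt, (hne 0 j hj0 (by omega)).symm.le_iff_lt,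
        (hne l (l + j) (by omega) (by omega)).symm.le_iff_lt]
      exact hcut j hj0 hj
    · exact hcut i hi0 hi
    · rw [hzy _ _ hi0 (by omega) hj0 (by omega),
        hzy _ _ (by omega) (by omega) (by omega) (by omega)]
      exact h.lt_iff i j hi0 hi hj0 hj

end Sequences

/-! ### From permutations to sequences -/

section Transfer

variable {α : Type*} [LinearOrder α] {y : ℕ → α} {n : ℕ}

theorem hasSquareAt_iff {σ : Fin n → Fin n} (a : ℕ)
    (hσ : ∀ i j : Fin n, σ i < σ j ↔ y (a + i) < y (a + j)) (k l : ℕ) :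
    HasSquareAt σ k l ↔ 2 ≤ l ∧ k + 2 * l ≤ n ∧ SquareAt y (a + k) l := by
  simp only [HasSquareAt, SquareAt, hσ, exists_prop, add_assoc]
  refine and_congr_right fun _ => ⟨fun ⟨hb, h⟩ => ⟨hb, fun i hi j hj => h i j hi hj⟩,
    fun ⟨hb, h⟩ => ⟨hb, fun i j hi hj => h i hi j hj⟩⟩

theorem squareFree_iff {σ : Fin n → Fin n}
    (hσ : ∀ i j : Fin n, σ i < σ j ↔ y (1 + i) < y (1 + j)) :
    SquareFree σ ↔ ∀ k l, 1 ≤ k → 2 ≤ l → k + 2 * l ≤ n + 1 → ¬ SquareAt y k l := by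
  simp only [SquareFree, ContainsSquare, hasSquareAt_iff 1 hσ, not_exists, not_and]
  constructor
  · intro h k l hk hl hkl hsq
    exact h (k - 1) l hl (by omega) (by rwa [Nat.add_sub_cancel' hk])
  · exact fun h k l hl hkl => h (1 + k) l (by omega) hl (by omega)

/-- The values of a permutation as a sequence, with the junk value `0` from position `n` on. -/
def valSeq (σ : Fin n → Fin n) (i : ℕ) : ℕ := if h : i < n then σ ⟨i, h⟩ else 0

theorem valSeq_coe (σ : Fin n → Fin n) (i : Fin n) : valSeq σ i = σ i := by simp [valSeq]

theorem lt_iff_valSeq_lt (σ : Fin n → Fin n) (i j : Fin n) :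
    σ i < σ j ↔ valSeq σ (0 + i) < valSeq σ (0 + j) := by
  simp only [zero_add, valSeq_coe, Fin.lt_def]

theorem exists_perm_lt_iff {m : ℕ} {w : Fin m → α} (hw : Function.Injective w) :
    ∃ π : Equiv.Perm (Fin m), ∀ i j, π i < π j ↔ w i < w j := by
  classical
  have hcard : (Finset.univ.image w).card = m := by
    rw [Finset.card_image_of_injective _ hw, Finset.card_fin]
  let e := (Finset.univ.image w).orderIsoOfFin hcard
  let f : Fin m → Fin m := fun i => e.symm ⟨w i, by simp⟩
  have hf : Function.Injective f := fun i j hij => hw (by simpa using e.symm.injective hij)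
  refine ⟨Equiv.ofBijective f hf.bijective_of_finite, fun i j => ?_⟩
  simp [f, OrderIso.lt_iff_lt]

theorem exists_lt_iff_of_isLowerSet {E : Set (Fin n)} (hE : IsLowerSet E) :
    ∃ m : Fin (n + 1), ∀ v : Fin n, v ∈ E ↔ v.castSucc < m := by
  by_cases h : ∃ v, v ∉ E
  · obtain ⟨m, hm, hmin⟩ := wellFounded_lt.has_min Eᶜ h
    refine ⟨m.castSucc, fun v => ⟨fun hv => ?_, fun hv => ?_⟩⟩
    · exact lt_of_not_ge fun hle => hm (hE (by simpa using hle) hv)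
    · exact not_not.1 fun hv' => hmin v hv' (by simpa using hv)
  · push Not at h
    exact ⟨Fin.last n, fun v => by simp [h v, Fin.castSucc_lt_last]⟩

/-- The left-extension of `σ` whose new first entry is `m`. -/
def consPerm (σ : Equiv.Perm (Fin n)) (m : Fin (n + 1)) : Equiv.Perm (Fin (n + 1)) :=
  (finSuccEquiv n).trans (σ.optionCongr.trans (finSuccEquiv' m).symm)

theorem consPerm_zero (σ : Equiv.Perm (Fin n)) (m : Fin (n + 1)) : consPerm σ m 0 = m := by
  simp [consPerm]

theorem consPerm_succ (σ : Equiv.Perm (Fin n)) (m : Fin (n + 1)) (i : Fin n) :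
    consPerm σ m i.succ = m.succAbove (σ i) := by
  simp [consPerm]

theorem isLeftExtension_consPerm (σ : Equiv.Perm (Fin n)) (m : Fin (n + 1)) :
    IsLeftExtension σ (consPerm σ m) := fun i j => by
  simp only [consPerm_succ, (Fin.strictMono_succAbove m).lt_iff_lt]

theorem valSeq_consPerm_lt_zero_iff (σ : Equiv.Perm (Fin n)) (m : Fin (n + 1)) (i : Fin n) :
    valSeq (consPerm σ m) (1 + i) < valSeq (consPerm σ m) 0 ↔ (σ i).castSucc < m := by
  have h := lt_iff_valSeq_lt (consPerm σ m) i.succ 0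
  rw [consPerm_zero, consPerm_succ, Fin.succAbove_lt_iff_castSucc_lt] at h
  simpa [add_comm] using h.symm

theorem injOn_valSeq (π : Equiv.Perm (Fin (n + 1))) : Set.InjOn (valSeq π) (Set.Iic n) := by
  intro i hi j hj e
  rw [show i = ((⟨i, Nat.lt_succ_of_le hi⟩ : Fin (n + 1)) : ℕ) from rfl,
    show j = ((⟨j, Nat.lt_succ_of_le hj⟩ : Fin (n + 1)) : ℕ) from rfl, valSeq_coe, valSeq_coe] at e
  simpa using π.injective (Fin.ext e)

theorem valSeq_lt_iff_of_isLeftExtension {σ : Fin n → Fin n} {π : Fin (n + 1) → Fin (n + 1)}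
    (hσ : ∀ i j : Fin n, σ i < σ j ↔ y (1 + i) < y (1 + j)) (hπ : IsLeftExtension σ π) (i j : ℕ)
    (hi : 1 ≤ i) (hi' : i ≤ n) (hj : 1 ≤ j) (hj' : j ≤ n) :
    valSeq π i < valSeq π j ↔ y i < y j := by
  have h := (hπ ⟨i - 1, by omega⟩ ⟨j - 1, by omega⟩).trans (hσ _ _)
  simp only [Nat.add_sub_cancel' hi, Nat.add_sub_cancel' hj] at h
  rw [← h, Fin.lt_def, ← valSeq_coe, ← valSeq_coe]
  simp [Nat.sub_add_cancel hi, Nat.sub_add_cancel hj]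

theorem leftCrucial_iff {σ : Equiv.Perm (Fin n)}
    (hσ : ∀ i j : Fin n, σ i < σ j ↔ y (1 + i) < y (1 + j)) :
    LeftCrucial σ ↔ SquareFree σ ∧ FrontCrucial y n := by
  refine and_congr_right fun hsf => ⟨fun h D hD => ?_, fun h π hπ => ?_⟩
  · have hlower : IsLowerSet {v : Fin n | D (1 + σ.symm v)} := by
      intro v w hwv hv
      rcases hwv.eq_or_lt with rfl | hlt
      · exact hv
      · refine hD _ _ (by omega) (by omega) (by omega) (by omega) hv ?_
        simpa [← hσ] using hlt
    obtain ⟨m, hm⟩ := exists_lt_iff_of_isLowerSet hlower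
    have hπ := isLeftExtension_consPerm σ m
    have hcut (i : ℕ) (hi : 1 ≤ i) (hi' : i ≤ n) :
        valSeq (consPerm σ m) i < valSeq (consPerm σ m) 0 ↔ D i := by
      have h0 := valSeq_consPerm_lt_zero_iff σ m ⟨i - 1, by omega⟩
      rw [Nat.add_sub_cancel' hi, ← hm] at h0
      rw [h0]
      simp [Nat.add_sub_cancel' hi]
    obtain ⟨k, l, hkl⟩ := h _ hπ
    obtain ⟨hl, hln, hsq⟩ := (hasSquareAt_iff 0 (lt_iff_valSeq_lt _) k l).1 hkl
    rw [zero_add] at hsq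
    have hlt := valSeq_lt_iff_of_isLeftExtension hσ hπ
    rcases Nat.eq_zero_or_pos k with rfl | hk
    · have := (squareAt_zero_iff_frontSquare (injOn_valSeq _) (by omega) hlt).1 hsq
      refine ⟨l, hl, by omega, this.lt_iff, fun i hi hi' => ?_⟩
      rw [← hcut i hi (by omega)]
      exact this.cut_iff i hi hi'
    · refine absurd (squareAt_of_lt_iff fun p q hp hp' hq hq' => ?_)
        ((squareFree_iff hσ).1 hsf k l hk hl hln)
      rw [← hlt _ _ (by omega) (by omega) (by omega) (by omega),
        ← hlt _ _ (by omega) (by omega) (by omega) (by omega)]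
      exact hsq.lt_iff hp hp' hq hq'
  · have hlt := valSeq_lt_iff_of_isLeftExtension hσ hπ
    obtain ⟨l, hl, hln, hsq⟩ := h (fun i => valSeq π i < valSeq π 0)
      fun i j hi hi' hj hj' hDj hij => ((hlt i j hi hi' hj hj').2 hij).trans hDj
    exact ⟨0, l, (hasSquareAt_iff 0 (lt_iff_valSeq_lt π) 0 l).2 ⟨hl, by omega,
      (squareAt_zero_iff_frontSquare (injOn_valSeq π) hln hlt).2 hsq⟩⟩

theorem containsSquare_comp_rev {σ : Fin n → Fin n} (h : ContainsSquare σ) :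
    ContainsSquare (σ ∘ Fin.rev) := by
  obtain ⟨k, l, hkl⟩ := h
  obtain ⟨hl, hln, hsq⟩ := (hasSquareAt_iff 0 (lt_iff_valSeq_lt σ) k l).1 hkl
  refine ⟨n - k - 2 * l, l, (hasSquareAt_iff 0 (lt_iff_valSeq_lt _) _ l).2 ⟨hl, by omega, ?_⟩⟩
  rw [zero_add] at hsq ⊢
  have hrev (i : ℕ) (hi : i < n) : valSeq (σ ∘ Fin.rev) (n - 1 - i) = valSeq σ i := by
    have h := valSeq_coe (σ ∘ Fin.rev) (Fin.rev ⟨i, hi⟩)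
    rwa [Function.comp_apply, Fin.rev_rev, Fin.val_rev, ← valSeq_coe σ, Nat.add_comm i,
      ← Nat.sub_sub] at h
  have := hsq.reflect (y := valSeq (σ ∘ Fin.rev)) (N := n - 1) (fun i j _ _ _ _ => by
    rw [hrev i (by omega), hrev j (by omega)]) (by omega)
  rwa [show n - 1 + 1 - k - 2 * l = n - k - 2 * l by omega] at this

theorem containsSquare_comp_rev_iff {σ : Fin n → Fin n} :
    ContainsSquare (σ ∘ Fin.rev) ↔ ContainsSquare σ := by
  refine ⟨fun h => ?_, containsSquare_comp_rev⟩
  simpa [Function.comp_assoc, Fin.rev_involutive.comp_self] using containsSquare_comp_rev h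

theorem isLeftExtension_comp_rev_iff {σ : Fin n → Fin n} {π : Fin (n + 1) → Fin (n + 1)} :
    IsLeftExtension (σ ∘ Fin.rev) (π ∘ Fin.rev) ↔ IsRightExtension σ π := by
  simp only [IsLeftExtension, IsRightExtension, Function.comp_apply, Fin.rev_succ]
  exact ⟨fun h i j => by simpa using h i.rev j.rev, fun h i j => h i.rev j.rev⟩

theorem rightCrucial_iff_leftCrucial (σ : Equiv.Perm (Fin n)) :
    RightCrucial σ ↔ LeftCrucial (Fin.revPerm.trans σ) := by
  have hrev {m : ℕ} (τ : Equiv.Perm (Fin m)) : ⇑(Fin.revPerm.trans τ) = τ ∘ Fin.rev := rfl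
  rw [RightCrucial, LeftCrucial, hrev, SquareFree, SquareFree, containsSquare_comp_rev_iff]
  refine and_congr_right fun _ => ⟨fun h π hπ => ?_, fun h π hπ => ?_⟩
  · rw [← containsSquare_comp_rev_iff, ← hrev]
    refine h _ (isLeftExtension_comp_rev_iff.1 ?_)
    rwa [hrev, Function.comp_assoc, Fin.rev_involutive.comp_self]
  · rw [← containsSquare_comp_rev_iff]
    exact h (Fin.revPerm.trans π) (isLeftExtension_comp_rev_iff.2 hπ)

theorem bicrucial_iff {σ : Equiv.Perm (Fin n)}
    (hσ : ∀ i j : Fin n, σ i < σ j ↔ y (1 + i) < y (1 + j)) :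
    Bicrucial σ ↔ IsBicrucialSeq y n := by
  have hσrev (i j : Fin n) : Fin.revPerm.trans σ i < Fin.revPerm.trans σ j ↔
      y (n + 1 - (1 + i)) < y (n + 1 - (1 + j)) := by
    rw [show n + 1 - (1 + i : ℕ) = 1 + i.rev by simp [Fin.val_rev]; omega,
      show n + 1 - (1 + j : ℕ) = 1 + j.rev by simp [Fin.val_rev]; omega]
    exact hσ _ _
  have hinj : Set.InjOn y (Set.Icc 1 n) := by
    rintro i ⟨hi, hi'⟩ j ⟨hj, hj'⟩ e
    have h1 := hσ ⟨i - 1, by omega⟩ ⟨j - 1, by omega⟩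
    have h2 := hσ ⟨j - 1, by omega⟩ ⟨i - 1, by omega⟩
    simp only [Nat.add_sub_cancel' hi, Nat.add_sub_cancel' hj, e, lt_irrefl, iff_false,
      not_lt] at h1 h2
    have := σ.injective (le_antisymm h2 h1)
    simp only [Fin.mk.injEq] at this
    omega
  have hsf : SquareFree (Fin.revPerm.trans σ) ↔ SquareFree σ :=
    not_congr containsSquare_comp_rev_iff
  rw [Bicrucial, rightCrucial_iff_leftCrucial, leftCrucial_iff hσ,
    leftCrucial_iff (y := fun i => y (n + 1 - i)) hσrev, hsf, squareFree_iff hσ]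
  exact ⟨fun h => ⟨⟨hinj, h.1.1⟩, h.1.2, h.2.2⟩,
    fun h => ⟨⟨h.not_squareAt, h.front⟩, h.not_squareAt, h.back⟩⟩

theorem exists_bicrucial_of_isBicrucialSeq (h : IsBicrucialSeq y n) :
    ∃ σ : Equiv.Perm (Fin n), Bicrucial σ := by
  obtain ⟨σ, hσ⟩ := exists_perm_lt_iff (w := fun i : Fin n => y (1 + i)) fun i j e =>
    Fin.ext (by simpa using h.injOn ⟨by omega, by omega⟩ ⟨by omega, by omega⟩ e)
  exact ⟨σ, (bicrucial_iff hσ).2 h⟩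

theorem exists_isBicrucialSeq_of_bicrucial {σ : Equiv.Perm (Fin n)} (h : Bicrucial σ) :
    ∃ y : ℕ → ℤ, IsBicrucialSeq y n :=
  ⟨fun i => valSeq σ (i - 1), (bicrucial_iff fun i j => by
    simp only [Nat.add_sub_cancel_left, valSeq_coe, Fin.lt_def, Nat.cast_lt]).1 h⟩

end Transfer

/-! ### Lengths without bicrucial sequences -/

/-- Both halves of a square have the same ascents, and a sequence of ascents alternating with
period `4` coincides with its shift by `l` at two consecutive places only if `4 ∣ l`. -/
theorem four_dvd_of_alternating {d : ℕ → Prop} {k l : ℕ} (hl : 2 ≤ l)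
    (hd : ∀ i, k ≤ i → i + 4 ≤ k + 2 * l → (d i ↔ ¬ d (i + 2))) (h0 : d k ↔ d (k + l))
    (h1 : 3 ≤ l → (d (k + 1) ↔ d (k + 1 + l))) : 4 ∣ l := by
  have hper : ∀ q i, k ≤ i → i + 4 * q + 2 ≤ k + 2 * l → (d i ↔ d (i + 4 * q)) := by
    intro q
    induction q with
    | zero => simp
    | succ q ih =>
      intro i hi hiq
      rw [ih i hi (by omega), hd _ (by omega) (by omega), hd _ (by omega) (by omega), not_not]
      rfl
  obtain ⟨q, r, hr, rfl⟩ : ∃ q r, r < 4 ∧ l = 4 * q + r := ⟨l / 4, l % 4, by omega, by omega⟩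
  have hshift (i : ℕ) (hi : k ≤ i) (hi' : i + 4 * q + 2 ≤ k + 2 * (4 * q + r)) :=
    hper q i hi hi'
  interval_cases r
  · exact ⟨q, by simp⟩
  all_goals exfalso
  · have e0 := hshift (k + 1) (by omega) (by omega)
    have e1 := hshift (k + 2) (by omega) (by omega)
    have e2 := hd k le_rfl (by omega)
    have := h1 (by omega)
    simp only [show k + 1 + 4 * q = k + (4 * q + 1) by omega,
      show k + 2 + 4 * q = k + 1 + (4 * q + 1) by omega] at e0 e1
    tauto
  · have e0 := hshift (k + 2) (by omega) (by omega)
    have e2 := hd k le_rfl (by omega)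
    rw [show k + 2 + 4 * q = k + (4 * q + 2) by omega] at e0
    tauto
  · have e0 := hshift (k + 3) (by omega) (by omega)
    have e1 := hshift (k + 4) (by omega) (by omega)
    have e2 := hd k le_rfl (by omega)
    have e3 := hd (k + 1) (by omega) (by omega)
    have e4 := hd (k + 2) (by omega) (by omega)
    have := h1 (by omega)
    simp only [show k + 3 + 4 * q = k + (4 * q + 3) by omega,
      show k + 4 + 4 * q = k + 1 + (4 * q + 3) by omega] at e0 e1
    simp only [add_assoc, Nat.reduceAdd] at *
    tauto

section Nonexistence

variable {y : ℕ → ℤ} {n : ℕ}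

namespace IsSquareFreeSeq

theorem ne (h : IsSquareFreeSeq y n) {i j : ℕ} (hi : 1 ≤ i) (hij : i < j) (hj : j ≤ n) :
    y i ≠ y j :=
  fun e => hij.ne (h.injOn ⟨hi, by omega⟩ ⟨by omega, hj⟩ e)

theorem lt_succ_iff (h : IsSquareFreeSeq y n) {i : ℕ} (hi : 1 ≤ i) (hi' : i + 3 ≤ n) :
    y i < y (i + 1) ↔ ¬ y (i + 2) < y (i + 3) := by
  have h01 := h.ne hi (Nat.lt_add_one i) (by omega)
  have h23 := h.ne (i := i + 2) (j := i + 3) (by omega) (by omega) (by omega)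
  by_contra hc
  refine h.not_squareAt i 2 hi le_rfl (by omega) fun a ha b hb => ?_
  interval_cases a <;> interval_cases b <;> simp only [add_zero, add_assoc, Nat.reduceAdd] <;> omega

theorem lt_succ_iff_add_four_mul (h : IsSquareFreeSeq y n) {i : ℕ} (hi : 1 ≤ i) (q : ℕ)
    (hq : i + 4 * q + 1 ≤ n) : y i < y (i + 1) ↔ y (i + 4 * q) < y (i + 4 * q + 1) := by
  induction q with
  | zero => simp
  | succ q ih =>
    rw [ih (by omega), h.lt_succ_iff (by omega) (by omega),
      h.lt_succ_iff (i := i + 4 * q + 2) (by omega) (by omega), not_not]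
    rfl

theorem reflect (h : IsSquareFreeSeq y n) : IsSquareFreeSeq (fun i => y (n + 1 - i)) n where
  injOn := by
    rintro i ⟨hi, hi'⟩ j ⟨hj, hj'⟩ e
    have := h.injOn (x₁ := n + 1 - i) (x₂ := n + 1 - j) ⟨by omega, by omega⟩
      ⟨by omega, by omega⟩ e
    omega
  not_squareAt k l hk hl hkl hsq :=
    h.not_squareAt _ l (by omega) hl (by omega)
      (hsq.reflect (N := n + 1) (fun _ _ _ _ _ _ => Iff.rfl) (by omega))

theorem neg (h : IsSquareFreeSeq y n) : IsSquareFreeSeq (fun i => -y i) n where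
  injOn i hi j hj e := h.injOn hi hj (neg_injective e)
  not_squareAt k l hk hl hkl hsq := h.not_squareAt k l hk hl hkl fun i hi j hj => by
    simpa only [neg_lt_neg_iff] using hsq j hj i hi

end IsSquareFreeSeq

namespace IsBicrucialSeq

theorem reflect (h : IsBicrucialSeq y n) : IsBicrucialSeq (fun i => y (n + 1 - i)) n where
  toIsSquareFreeSeq := h.toIsSquareFreeSeq.reflect
  front := h.back
  back := h.front.congr fun i j hi hi' hj hj' => by
    rw [show n + 1 - (n + 1 - i) = i by omega, show n + 1 - (n + 1 - j) = j by omega]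

theorem neg (h : IsBicrucialSeq y n) : IsBicrucialSeq (fun i => -y i) n where
  toIsSquareFreeSeq := h.toIsSquareFreeSeq.neg
  front := h.front.of_antitone h.injOn fun _ _ _ _ _ _ => neg_lt_neg_iff
  back := h.back.of_antitone h.reflect.injOn fun _ _ _ _ _ _ => neg_lt_neg_iff

/-- If the new entry continues the alternation of the ascents, then the square which it creates has
half-length divisible by `4`. -/
theorem exists_frontSquare_four_mul (h : IsBicrucialSeq y n) {D : ℕ → Prop}
    (hD : ∀ i j, 1 ≤ i → i ≤ n → 1 ≤ j → j ≤ n → D j → y i < y j → D i)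
    (hD1 : D 1 ↔ ¬ y 3 < y 2) :
    ∃ m, 1 ≤ m ∧ 8 * m ≤ n + 1 ∧ FrontSquare y D (4 * m) := by
  obtain ⟨l, hl, hln, hsq⟩ := h.front D hD
  have hne := h.ne (i := 2) (j := 3) (by omega) (by omega) (by omega)
  have hcut := hsq.cut_iff 1 le_rfl (by omega)
  have hlne := h.ne (i := l) (j := l + 1) (by omega) (by omega) (by omega)
  obtain ⟨m, rfl⟩ : 4 ∣ l := by
    refine four_dvd_of_alternating (k := 0) (d := fun i => if i = 0 then ¬ D 1 else y i < y (i + 1))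
      hl (fun i _ hi => ?_) ?_ fun hl3 => ?_
    · rcases Nat.eq_zero_or_pos i with rfl | hi0
      · simp only [↓reduceIte, zero_add, OfNat.ofNat_ne_zero, Nat.reduceAdd, hD1]
        omega
      · simpa [hi0.ne'] using h.lt_succ_iff hi0 (by omega)
    · simp only [↓reduceIte, zero_add, show l ≠ 0 by omega, hcut]
      omega
    · simpa [add_comm 1 l, add_assoc] using hsq.lt_iff 1 2 (by omega) (by omega) (by omega) hl3
  exact ⟨m, by omega, by omega, hsq⟩

theorem exists_frontSquare_le (h : IsBicrucialSeq y n) (h23 : y 2 < y 3) {c : ℤ} (hc : y 1 ≤ c) :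
    ∃ m, 1 ≤ m ∧ 8 * m ≤ n + 1 ∧ FrontSquare y (fun i => y i ≤ c) (4 * m) :=
  h.exists_frontSquare_four_mul (fun _ _ _ _ _ _ hj hij => hij.le.trans hj) (by omega)

/-- In front of `y 1 < y 2 < y 3` the new entry may lie just above `y 1`, `y 2` or `y 3`. The
squares that arise differ, since they place `y l` differently relative to `y (l + 2)` and
`y (l + 3)`. -/
theorem exists_three_frontSquares (h : IsBicrucialSeq y n) (h12 : y 1 < y 2) (h23 : y 2 < y 3) :
    ∃ a b c : ℕ, (1 ≤ a ∧ 8 * a ≤ n + 1 ∧ y (4 * a) ≤ y (4 * a + 2)) ∧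
      (1 ≤ b ∧ 8 * b ≤ n + 1 ∧ y (4 * b + 2) < y (4 * b) ∧ y (4 * b) ≤ y (4 * b + 3)) ∧
      (1 ≤ c ∧ 8 * c ≤ n + 1 ∧ y (4 * c + 2) < y (4 * c) ∧ y (4 * c + 3) < y (4 * c)) ∧
      ∀ m, m = a ∨ m = b ∨ m = c → ∀ i j, 1 ≤ i → i < 4 * m → 1 ≤ j → j < 4 * m →
        (y i < y j ↔ y (4 * m + i) < y (4 * m + j)) := by
  obtain ⟨a, ha, han, hsa⟩ := h.exists_frontSquare_le h23 le_rfl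
  obtain ⟨b, hb, hbn, hsb⟩ := h.exists_frontSquare_le h23 h12.le
  obtain ⟨c, hc, hcn, hsc⟩ := h.exists_frontSquare_le h23 (h12.trans h23).le
  have ha2 := hsa.cut_iff 2 (by omega) (by omega)
  have hb2 := hsb.cut_iff 2 (by omega) (by omega)
  have hb3 := hsb.cut_iff 3 (by omega) (by omega)
  have hc2 := hsc.cut_iff 2 (by omega) (by omega)
  have hc3 := hsc.cut_iff 3 (by omega) (by omega)
  refine ⟨a, b, c, ⟨ha, han, by omega⟩, ⟨hb, hbn, by omega⟩, ⟨hc, hcn, by omega⟩, ?_⟩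
  rintro m (rfl | rfl | rfl)
  exacts [hsa.lt_iff, hsb.lt_iff, hsc.lt_iff]

/-- The half-lengths `4`, `8` and `12` all occur, but a square of half-length `8` makes `y 12` lie
relative to `y 14` and `y 15` as `y 4` does relative to `y 6` and `y 7`. -/
theorem not_lt_lt_of_le_thirty (h : IsBicrucialSeq y n) (hn : n ≤ 30) (h12 : y 1 < y 2)
    (h23 : y 2 < y 3) : False := by
  obtain ⟨a, b, c, ha, hb, hc, hsq⟩ := h.exists_three_frontSquares h12 h23
  have hab : a ≠ b := by rintro rfl; omega
  have hac : a ≠ c := by rintro rfl; omega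
  have hbc : b ≠ c := by rintro rfl; omega
  have h8 := hsq 2 (by omega)
  have h46 := h8 4 6 (by omega) (by omega) (by omega) (by omega)
  have h74 := h8 7 4 (by omega) (by omega) (by omega) (by omega)
  have hne := h.ne (i := 4) (j := 6) (by omega) (by omega) (by omega)
  have hne' := h.ne (i := 12) (j := 14) (by omega) (by omega) (by omega)
  clear h8 hsq h
  obtain ⟨ha1, han, ha⟩ := ha
  obtain ⟨hb1, hbn, hb⟩ := hb
  obtain ⟨hc1, hcn, hc⟩ := hc
  have ha3 : a ≤ 3 := by omega
  have hb3 : b ≤ 3 := by omega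
  have hc3 : c ≤ 3 := by omega
  interval_cases a <;> interval_cases b <;> interval_cases c <;>
    simp only [Nat.reduceMul, Nat.reduceAdd] at * <;> omega

end IsBicrucialSeq

namespace IsSquareFreeSeq

theorem ascents_of_lt_lt (h : IsSquareFreeSeq y n) (h12 : y 1 < y 2) (h23 : y 2 < y 3) (q : ℕ)
    (hq : 4 * q + 3 ≤ n) :
    y (4 * q + 1) < y (4 * q + 2) ∧ y (4 * q + 2) < y (4 * q + 3) := by
  have h1 := (h.lt_succ_iff_add_four_mul (i := 1) le_rfl q (by omega)).1 h12
  have h2 := (h.lt_succ_iff_add_four_mul (i := 2) (by omega) q (by omega)).1 h23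
  rw [add_comm 1] at h1
  rw [add_comm 2] at h2
  exact ⟨h1, h2⟩

theorem descents_of_lt_lt (h : IsSquareFreeSeq y n) (h12 : y 1 < y 2) (h23 : y 2 < y 3) (q : ℕ)
    (hq : 4 * q + 5 ≤ n) :
    y (4 * q + 4) < y (4 * q + 3) ∧ y (4 * q + 5) < y (4 * q + 4) := by
  obtain ⟨h1, h2⟩ := h.ascents_of_lt_lt h12 h23 q (by omega)
  have h3 := h.ne (i := 4 * q + 3) (j := 4 * q + 4) (by omega) (by omega) (by omega)
  have h4 := h.ne (i := 4 * q + 4) (j := 4 * q + 5) (by omega) (by omega) (by omega)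
  have h13 := (h.lt_succ_iff (i := 4 * q + 1) (by omega) (by omega)).1 h1
  have h24 := (h.lt_succ_iff (i := 4 * q + 2) (by omega) (by omega)).1 h2
  simp only [add_assoc, Nat.reduceAdd] at h13 h24
  exact ⟨by omega, by omega⟩

theorem lt_add_two_of_add_two_lt (h : IsSquareFreeSeq y n) (h12 : y 1 < y 2) (h23 : y 2 < y 3)
    {m : ℕ} (hm : 1 ≤ m) (hmn : 4 * m + 7 ≤ n) (hlt : y (4 * m + 2) < y (4 * m)) :
    y (4 * m + 4) < y (4 * m + 6) := by
  obtain ⟨q, rfl⟩ := Nat.exists_eq_add_of_le' hm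
  have ha := h.ascents_of_lt_lt h12 h23 (q + 1) (by omega)
  have hd := h.descents_of_lt_lt h12 h23 q (by omega)
  have hd' := h.descents_of_lt_lt h12 h23 (q + 1) (by omega)
  have ha' := (h.ascents_of_lt_lt h12 h23 (q + 2) (by omega))
  by_contra hge
  have hne := h.ne (i := 4 * (q + 1) + 4) (j := 4 * (q + 1) + 6) (by omega) (by omega) (by omega)
  refine h.not_squareAt (4 * q + 3) 4 (by omega) (by omega) (by omega) fun i hi j hj => ?_
  simp only [mul_add, add_assoc, Nat.reduceMul, Nat.reduceAdd] at *
  interval_cases i <;> interval_cases j <;> simp only [Nat.reduceAdd] <;> omega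

theorem add_two_lt_of_lt_add_two (h : IsSquareFreeSeq y n) (h12 : y 1 < y 2) (h23 : y 2 < y 3)
    {m : ℕ} (hm : 1 ≤ m) (hmn : 4 * m + 7 ≤ n) (hlt : y (4 * m) < y (4 * m + 2)) :
    y (4 * m + 6) < y (4 * m + 4) := by
  obtain ⟨q, rfl⟩ := Nat.exists_eq_add_of_le' hm
  have ha := h.ascents_of_lt_lt h12 h23 (q + 1) (by omega)
  have hd := h.descents_of_lt_lt h12 h23 q (by omega)
  have hd' := h.descents_of_lt_lt h12 h23 (q + 1) (by omega)
  have ha' := (h.ascents_of_lt_lt h12 h23 (q + 2) (by omega))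
  by_contra hge
  have hne := h.ne (i := 4 * (q + 1) + 4) (j := 4 * (q + 1) + 6) (by omega) (by omega) (by omega)
  refine h.not_squareAt (4 * q + 4) 4 (by omega) (by omega) (by omega) fun i hi j hj => ?_
  simp only [mul_add, add_assoc, Nat.reduceMul, Nat.reduceAdd] at *
  interval_cases i <;> interval_cases j <;> simp only [Nat.reduceAdd] <;> omega

end IsSquareFreeSeq

namespace IsBicrucialSeq

theorem seven_le (h : IsBicrucialSeq y n) : 7 ≤ n := by
  rcases lt_or_ge n 3 with hn | _
  · obtain ⟨l, hl, hln, _⟩ := h.front (fun _ => False) fun _ _ _ _ _ _ hj _ => hj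
    omega
  · obtain ⟨m, hm, hmn, _⟩ := h.exists_frontSquare_four_mul (D := fun _ => ¬ y 3 < y 2)
      (fun _ _ _ _ _ _ hj _ => hj) Iff.rfl
    omega

theorem front_shape_of_le_fourteen (h : IsBicrucialSeq y n) (hn : n ≤ 14) (h12 : y 1 < y 2) :
    y 1 < y 3 ∧ y 3 < y 2 ∧ y 5 < y 7 := by
  have hn7 := h.seven_le
  have h32 : y 3 < y 2 := by
    have := h.ne (i := 2) (j := 3) (by omega) (by omega) (by omega)
    by_contra h23
    exact h.not_lt_lt_of_le_thirty (by omega) h12 (by omega)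
  obtain ⟨a, ha, han, hsa⟩ := h.exists_frontSquare_four_mul (D := fun _ => False)
    (fun _ _ _ _ _ _ hj _ => hj) (by tauto)
  obtain ⟨b, hb, hbn, hsb⟩ := h.exists_frontSquare_four_mul (D := fun i => y i < y 1)
    (fun _ _ _ _ _ _ hj hij => hij.trans hj) (by omega)
  obtain rfl : a = 1 := by omega
  obtain rfl : b = 1 := by omega
  have h7 := hsa.cut_iff 3 (by omega) (by omega)
  have h7' := hsb.cut_iff 3 (by omega) (by omega)
  have h57 := hsa.lt_iff 1 3 (by omega) (by omega) (by omega) (by omega)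
  have h13 := h.ne (i := 1) (j := 3) (by omega) (by omega) (by omega)
  simp only [mul_one, Nat.reduceAdd, false_iff] at *
  omega

theorem ne_seven (h : IsBicrucialSeq y n) (h12 : y 1 < y 2) : n ≠ 7 := by
  rintro rfl
  have hfront := h.front_shape_of_le_fourteen (by omega) h12
  have h67 := h.ne (i := 6) (j := 7) (by omega) (by omega) (by omega)
  have h25 := h.lt_succ_iff (i := 2) (by omega) (by omega)
  have h47 := h.lt_succ_iff (i := 4) (by omega) (by omega)
  have hback := h.reflect.front_shape_of_le_fourteen (by omega)
    (by simp only [Nat.reduceAdd, Nat.reduceSub] at *; omega)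
  simp only [Nat.reduceAdd, Nat.reduceSub] at *
  omega

theorem ne_eleven (h : IsBicrucialSeq y n) (h12 : y 1 < y 2) : n ≠ 11 := by
  rintro rfl
  have hfront := h.front_shape_of_le_fourteen (by omega) h12
  have h1011 := h.ne (i := 10) (j := 11) (by omega) (by omega) (by omega)
  have h210 := h.lt_succ_iff_add_four_mul (i := 2) (by omega) 2 (by omega)
  have hback := h.reflect.front_shape_of_le_fourteen (by omega)
    (by simp only [Nat.reduceAdd, Nat.reduceSub, Nat.reduceMul] at *; omega)
  simp only [Nat.reduceAdd, Nat.reduceSub] at *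
  omega

/-- The half-lengths `4 * b` and `4 * c` of two squares that start in front of
`y 1 < y 2 < y 3` are `8` and `16`, where `U m` and `V m` say that `y (4 * m + 2)` and
`y (4 * m + 3)` are less than `y (4 * m)`. Indeed `U` excludes neighbours, a square of half-length
`12` excludes `1, 3`, and a third square, of half-length `8` or `12`, excludes `1, 4`. -/
theorem two_four_of_three_frontSquares {U V : ℕ → Prop} {a b c : ℕ} (ha : 1 ≤ a ∧ a ≤ 4 ∧ ¬ U a)
    (hb : 1 ≤ b ∧ b ≤ 4 ∧ U b ∧ ¬ V b) (hc : 1 ≤ c ∧ c ≤ 4 ∧ U c ∧ V c)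
    (hU : ∀ m, 1 ≤ m → m ≤ 3 → U m → ¬ U (m + 1))
    (h2 : 2 = a ∨ 2 = b ∨ 2 = c → (U 1 ↔ U 3) ∧ (V 1 ↔ V 3))
    (h3 : 3 = a ∨ 3 = b ∨ 3 = c → (U 1 ↔ U 4) ∧ (V 1 ↔ V 4)) :
    b = 2 ∧ c = 4 ∨ b = 4 ∧ c = 2 := by
  obtain ⟨ha1, ha4, ha⟩ := ha
  obtain ⟨hb1, hb4, hb⟩ := hb
  obtain ⟨hc1, hc4, hc⟩ := hc
  have hU1 := hU 1 (by omega) (by omega)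
  have hU2 := hU 2 (by omega) (by omega)
  have hU3 := hU 3 (by omega) (by omega)
  interval_cases a <;> interval_cases b <;> interval_cases c <;> grind

theorem frontSquares_eight_sixteen (h : IsBicrucialSeq y n) (hn : 19 ≤ n) (hn' : n < 39)
    (h12 : y 1 < y 2) (h23 : y 2 < y 3) :
    (∀ m, m = 2 ∨ m = 4 → ∀ i j, 1 ≤ i → i < 4 * m → 1 ≤ j → j < 4 * m →
      (y i < y j ↔ y (4 * m + i) < y (4 * m + j))) ∧
    y 4 < y 6 ∧ y 10 < y 8 ∧ y 18 < y 16 ∧ (y 11 < y 8 ↔ ¬ y 19 < y 16) := by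
  obtain ⟨a, b, c, ⟨ha1, han, ha⟩, ⟨hb1, hbn, hb⟩, ⟨hc1, hcn, hc⟩, hsq⟩ :=
    h.exists_three_frontSquares h12 h23
  have hsame (m : ℕ) (hm2 : 2 ≤ m) (hm : m = a ∨ m = b ∨ m = c) :
      (y 6 < y 4 ↔ y (4 * m + 6) < y (4 * m + 4)) ∧
        (y 7 < y 4 ↔ y (4 * m + 7) < y (4 * m + 4)) :=
    ⟨hsq m hm 6 4 (by omega) (by omega) (by omega) (by omega),
      hsq m hm 7 4 (by omega) (by omega) (by omega) (by omega)⟩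
  have hbc : b = 2 ∧ c = 4 ∨ b = 4 ∧ c = 2 :=
    two_four_of_three_frontSquares (a := a) (U := fun m => y (4 * m + 2) < y (4 * m))
      (V := fun m => y (4 * m + 3) < y (4 * m)) ⟨ha1, by omega, ha.not_gt⟩
      ⟨hb1, by omega, hb.1, hb.2.not_gt⟩ ⟨hc1, by omega, hc⟩
      (fun m hm hm' hlt => (h.lt_add_two_of_add_two_lt h12 h23 hm (by omega) hlt).not_gt)
      (hsame 2 le_rfl) (hsame 3 (by omega))
  have h46 (h108 : y 10 < y 8) : y 4 < y 6 :=
    (h.ne (i := 4) (j := 6) (by omega) (by omega) (by omega)).lt_or_gt.resolve_right fun hlt =>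
      (h.lt_add_two_of_add_two_lt h12 h23 (m := 1) le_rfl (by omega) hlt).not_gt h108
  refine ⟨fun m hm => hsq m (by omega), ?_⟩
  rcases hbc with ⟨rfl, rfl⟩ | ⟨rfl, rfl⟩
  · exact ⟨h46 hb.1, hb.1, hc.1, iff_of_false hb.2.not_gt (not_not.2 hc.2)⟩
  · exact ⟨h46 hc.1, hc.1, hb.1, iff_of_true hc.2 hb.2.not_gt⟩

/-- Otherwise the new entry may lie just above or just below `y 7`, and both squares have
half-length `8`, `12` or `16`. -/
theorem seven_lt_two (h : IsBicrucialSeq y n) (hn : 23 ≤ n) (hn' : n < 39) (h12 : y 1 < y 2)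
    (h23 : y 2 < y 3) : y 7 < y 2 := by
  obtain ⟨hsq, h46, h108, h1816, hclass⟩ := h.frontSquares_eight_sixteen (by omega) hn' h12 h23
  have h1214 : y 12 < y 14 :=
    (hsq 2 (by omega) 4 6 (by omega) (by omega) (by omega) (by omega)).1 h46
  by_contra h72
  have hne2 := h.ne (i := 2) (j := 7) (by omega) (by omega) (by omega)
  have hne3 := h.ne (i := 3) (j := 7) (by omega) (by omega) (by omega)
  obtain ⟨a, ha, han, hsa⟩ := h.exists_frontSquare_le h23 (c := y 7) (by omega)
  obtain ⟨b, hb, hbn, hsb⟩ := h.exists_frontSquare_four_mul (D := fun i => y i < y 7)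
    (fun _ _ _ _ _ _ hj hij => hij.trans hj) (by omega)
  have ha2 := hsa.cut_iff 2 (by omega) (by omega)
  have ha3 := hsa.cut_iff 3 (by omega) (by omega)
  have hb2 := hsb.cut_iff 2 (by omega) (by omega)
  have hb3 := hsb.cut_iff 3 (by omega) (by omega)
  have ha1 : a ≠ 1 := by rintro rfl; simp only [Nat.reduceMul, Nat.reduceAdd] at ha2; omega
  have hb1 : b ≠ 1 := by rintro rfl; simp only [Nat.reduceMul, Nat.reduceAdd] at hb2; omega
  have ha7 := hsa.cut_iff 7 (by omega) (by omega)
  have hb7 := hsb.cut_iff 7 (by omega) (by omega)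
  obtain rfl | rfl | rfl : a = 2 ∨ a = 3 ∨ a = 4 := by omega
  all_goals obtain rfl | rfl | rfl : b = 2 ∨ b = 3 ∨ b = 4 := by omega
  all_goals simp only [Nat.reduceMul, Nat.reduceAdd] at ha2 ha3 ha7 hb2 hb3 hb7; omega

theorem last_entries (h : IsBicrucialSeq y 38) (h12 : y 1 < y 2) (h23 : y 2 < y 3) :
    y 37 < y 36 ∧ y 34 < y 32 ∧ y 31 < y 26 ∧ y 23 < y 18 ∧ y 28 < y 30 ∧ y 20 < y 22 := by
  obtain ⟨hsq, h46, -, -, -⟩ := h.frontSquares_eight_sixteen (by omega) (by omega) h12 h23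
  have h72 := h.seven_lt_two (by omega) (by omega) h12 h23
  have h8 := hsq 2 (by omega)
  have h16 := hsq 4 (by omega)
  have h1510 := (h8 7 2 (by omega) (by omega) (by omega) (by omega)).1 h72
  have h1214 := (h8 4 6 (by omega) (by omega) (by omega) (by omega)).1 h46
  have h2830 := (h16 12 14 (by omega) (by omega) (by omega) (by omega)).1 h1214
  exact ⟨(h.descents_of_lt_lt h12 h23 8 (by omega)).2,
    h.add_two_lt_of_lt_add_two h12 h23 (m := 7) (by omega) (by omega) h2830,
    (h16 15 10 (by omega) (by omega) (by omega) (by omega)).1 h1510,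
    (h16 7 2 (by omega) (by omega) (by omega) (by omega)).1 h72, h2830,
    (h16 4 6 (by omega) (by omega) (by omega) (by omega)).1 h46⟩

/-- Behind the last entry, a new largest entry and a new entry just above `y 38` cannot both create
a square. -/
theorem ne_thirtyEight (h : IsBicrucialSeq y n) (h12 : y 1 < y 2) (h23 : y 2 < y 3) : n ≠ 38 := by
  rintro rfl
  obtain ⟨h3736, h3432, h3126, h2318, h2830, h2022⟩ := h.last_entries h12 h23
  obtain ⟨a, ha, han, hsa⟩ := h.reflect.exists_frontSquare_four_mul (D := fun _ => True)
    (fun _ _ _ _ _ _ _ _ => trivial) (iff_of_true trivial h3736.not_gt)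
  obtain ⟨b, hb, hbn, hsb⟩ := h.reflect.exists_frontSquare_le h3736 le_rfl
  have ha13 := hsa.lt_iff 1 3 (by omega) (by omega) (by omega) (by omega)
  have ha3 := hsa.cut_iff 3 (by omega) (by omega)
  have hb13 := hsb.lt_iff 1 3 (by omega) (by omega) (by omega) (by omega)
  have hb3 := hsb.cut_iff 3 (by omega) (by omega)
  have ha57 (ha1 : a ≠ 1) := hsa.lt_iff 5 7 (by omega) (by omega) (by omega) (by omega)
  have ha5 (ha1 : a ≠ 1) := hsa.cut_iff 5 (by omega) (by omega)
  have hb57 (hb1 : b ≠ 1) := hsb.lt_iff 5 7 (by omega) (by omega) (by omega) (by omega)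
  have ha4 : a ≤ 4 := by omega
  have hb4 : b ≤ 4 := by omega
  clear hsa hsb
  interval_cases a <;> interval_cases b <;>
    simp only [Nat.reduceMul, Nat.reduceAdd, Nat.reduceSub, true_iff] at * <;> omega

theorem not_lt_iff_lt (h : IsBicrucialSeq y n) (hn : n ≤ 30 ∨ n = 38) :
    ¬ (y 1 < y 2 ↔ y 2 < y 3) := by
  have not_ascents {z : ℕ → ℤ} (hz : IsBicrucialSeq z n) (h12 : z 1 < z 2) : ¬ z 2 < z 3 :=
    fun h23 => hn.elim (fun hn => hz.not_lt_lt_of_le_thirty hn h12 h23) (hz.ne_thirtyEight h12 h23)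
  intro hiff
  have h7 := h.seven_le
  have hne12 := h.ne (i := 1) (j := 2) (by omega) (by omega) (by omega)
  have hne23 := h.ne (i := 2) (j := 3) (by omega) (by omega) (by omega)
  have hpos := not_ascents h
  have hneg := not_ascents h.neg
  simp only [neg_lt_neg_iff] at hneg
  omega

/-- The ascents alternate with period `4`, so in even length exactly one end has its two outer steps
in the same direction. -/
theorem odd_of_le_thirty (h : IsBicrucialSeq y n) (hn : n ≤ 30 ∨ n = 38) : Odd n := by
  rw [← Nat.not_even_iff_odd]
  rintro ⟨r, hr⟩
  have h7 := h.seven_le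
  have hfront := h.not_lt_iff_lt hn
  have h13 := h.lt_succ_iff (i := 1) le_rfl (by omega)
  have h24 := h.lt_succ_iff (i := 2) (by omega) (by omega)
  obtain ⟨q, rfl | rfl⟩ : ∃ q, n = 4 * q + 4 ∨ n = 4 * q + 6 := ⟨(n - 4) / 4, by omega⟩
  · have hback : ¬ (y (4 * q + 4) < y (4 * q + 3) ↔ y (4 * q + 3) < y (4 * q + 2)) :=
      h.reflect.not_lt_iff_lt hn
    have h2 := h.lt_succ_iff_add_four_mul (i := 2) (by omega) q (by omega)
    have h3 := h.lt_succ_iff_add_four_mul (i := 3) (by omega) q (by omega)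
    have hne := h.ne (i := 4 * q + 2) (j := 4 * q + 3) (by omega) (by omega) (by omega)
    have hne' := h.ne (i := 4 * q + 3) (j := 4 * q + 4) (by omega) (by omega) (by omega)
    simp only [Nat.reduceAdd, add_comm _ (4 * q), add_assoc] at *
    omega
  · have hback : ¬ (y (4 * q + 6) < y (4 * q + 5) ↔ y (4 * q + 5) < y (4 * q + 4)) :=
      h.reflect.not_lt_iff_lt hn
    have h4 := h.lt_succ_iff_add_four_mul (i := 4) (by omega) q (by omega)
    have h5 := h.lt_succ_iff_add_four_mul (i := 5) (by omega) q (by omega)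
    have h35 := h.lt_succ_iff (i := 3) (by omega) (by omega)
    have hne := h.ne (i := 4 * q + 4) (j := 4 * q + 5) (by omega) (by omega) (by omega)
    have hne' := h.ne (i := 4 * q + 5) (j := 4 * q + 6) (by omega) (by omega) (by omega)
    simp only [Nat.reduceAdd, add_comm _ (4 * q), add_assoc] at *
    omega

theorem length_cases (h : IsBicrucialSeq y n) :
    n = 9 ∨ (Odd n ∧ 13 ≤ n) ∨ (Even n ∧ 32 ≤ n ∧ n ≠ 38) := by
  by_contra! hn
  obtain ⟨h9, hodd, heven⟩ := hn
  have h7 := h.seven_le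
  have ho : Odd n := by
    by_contra he
    rw [Nat.not_odd_iff_even] at he
    refine Nat.not_odd_iff_even.2 he (h.odd_of_le_thirty ?_)
    have := heven he
    obtain ⟨r, hr⟩ := he
    omega
  have h711 : n = 7 ∨ n = 11 := by
    have := hodd ho
    obtain ⟨r, hr⟩ := ho
    omega
  have not_lt {z : ℕ → ℤ} (hz : IsBicrucialSeq z n) : ¬ z 1 < z 2 := fun h12 =>
    h711.elim (hz.ne_seven h12) (hz.ne_eleven h12)
  have hne := h.ne (i := 1) (j := 2) (by omega) (by omega) (by omega)
  have := not_lt h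
  have := not_lt h.neg
  omega

end IsBicrucialSeq

end Nonexistence

/-! ### A self-similar square-free sequence -/

section Waves

variable {α : Type*} [LinearOrder α] {v : ℕ → α} {s e k l : ℕ}

theorem SquareAt.comp_mul {c : ℕ} (hc : 0 < c) (h : SquareAt v k (c * l)) :
    SquareAt (fun i => v (c * i)) ((k + (c - 1)) / c) l := by
  have hceil : k ≤ c * ((k + (c - 1)) / c) ∧ c * ((k + (c - 1)) / c) < k + c := by
    have := Nat.div_add_mod (k + (c - 1)) c
    have := Nat.mod_lt (k + (c - 1)) hc
    omega
  refine squareAt_of_lt_iff fun p q hp hp' hq hq' => ?_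
  have hmem : ∀ t, (k + (c - 1)) / c ≤ t → t < (k + (c - 1)) / c + l →
      k ≤ c * t ∧ c * t < k + c * l := fun t ht ht' => by
    have := Nat.mul_le_mul_left c ht
    have := Nat.mul_le_mul_left c (Nat.succ_le_of_lt ht')
    rw [Nat.succ_eq_add_one, mul_add, mul_add] at this
    omega
  simp only [mul_add]
  exact h.lt_iff (hmem p hp hp').1 (hmem p hp hp').2 (hmem q hq hq').1 (hmem q hq hq').2

/-- The steps of `v` between the positions `s + 1` and `e` go up, down, down, up periodically. Up
to a shift this holds for every square-free sequence. -/
structure Zigzag (v : ℕ → α) (s e : ℕ) : Prop where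
  lt : ∀ i, s < i → i + 1 ≤ e → i % 4 = 0 ∨ i % 4 = 3 → v i < v (i + 1)
  gt : ∀ i, s < i → i + 1 ≤ e → i % 4 = 1 ∨ i % 4 = 2 → v (i + 1) < v i

/-- The steps between the entries of `v` at even positions form a zigzag, too. -/
structure EvenZigzag (v : ℕ → α) (s e : ℕ) : Prop where
  lt : ∀ i, s < i → i + 2 ≤ e → i % 8 = 2 ∨ i % 8 = 4 → v i < v (i + 2)
  gt : ∀ i, s < i → i + 2 ≤ e → i % 8 = 0 ∨ i % 8 = 6 → v (i + 2) < v i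

theorem Zigzag.four_dvd (hv : Zigzag v s e) (hk : s < k) (hl : 2 ≤ l) (hkl : k + 2 * l ≤ e + 1)
    (h : SquareAt v k l) : 4 ∣ l := by
  refine four_dvd_of_alternating (k := k) (d := fun i => v i < v (i + 1)) hl
    (fun i hi hi' => ?_) ?_ fun hl3 => ?_
  · obtain hi4 | hi4 : (i % 4 = 0 ∨ i % 4 = 3) ∨ i % 4 = 1 ∨ i % 4 = 2 := by omega
    · exact iff_of_true (hv.lt i (by omega) (by omega) hi4)
        (hv.gt (i + 2) (by omega) (by omega) (by omega)).not_gt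
    · exact iff_of_false (hv.gt i (by omega) (by omega) hi4).not_gt
        (not_not.2 (hv.lt (i + 2) (by omega) (by omega) (by omega)))
  · simpa only [add_right_comm] using
      h.lt_iff (p := k) (q := k + 1) le_rfl (by omega) (by omega) (by omega)
  · simpa only [add_right_comm _ l] using
      h.lt_iff (p := k + 1) (q := k + 1 + 1) (by omega) (by omega) (by omega) (by omega)

theorem EvenZigzag.eight_dvd (hv : EvenZigzag v s e) (h4 : 4 ∣ l) (hl : 2 ≤ l)
    (hk : s < k ∨ s = k ∧ 4 < l) (hkl : k + 2 * l ≤ e + 1) (h : SquareAt v k l) : 8 ∣ l := by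
  by_contra h8
  obtain ⟨p, hp, hsp, hkp, hpl⟩ : ∃ p, p % 2 = 0 ∧ s < p ∧ k ≤ p ∧ p + 2 < k + l := by
    obtain hk | ⟨rfl, hl4⟩ := hk
    · exact ⟨2 * ((k + 1) / 2), by omega, by omega, by omega, by omega⟩
    · exact ⟨2 * (s / 2) + 2, by omega, by omega, by omega, by omega⟩
  have hstep := h.lt_iff hkp (by omega) (by omega) hpl
  rw [add_right_comm p 2] at hstep
  obtain hp8 | hp8 : (p % 8 = 2 ∨ p % 8 = 4) ∨ p % 8 = 0 ∨ p % 8 = 6 := by omega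
  · exact (hv.gt (p + l) (by omega) (by omega) (by omega)).not_gt
      (hstep.1 (hv.lt p hsp (by omega) hp8))
  · exact (hv.gt p hsp (by omega) hp8).not_gt
      (hstep.2 (hv.lt (p + l) (by omega) (by omega) (by omega)))

end Waves

/-- The sequence `q` with ties broken by the position, in increasing order. -/
def lexSeq (q : ℕ → ℚ) (i : ℕ) : ℚ ×ₗ ℕ := toLex (q i, i)

section LexSeq

variable {q w : ℕ → ℚ} {i j k l : ℕ}

theorem lexSeq_lt_iff : lexSeq q i < lexSeq q j ↔ q i < q j ∨ q i = q j ∧ i < j :=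
  Prod.Lex.toLex_lt_toLex

theorem lexSeq_lt_of_lt (h : q i < q j) : lexSeq q i < lexSeq q j := lexSeq_lt_iff.2 (.inl h)

theorem lexSeq_injective : Function.Injective (lexSeq q) := fun _ _ h =>
  congrArg (fun x => (ofLex x).2) h

theorem lexSeq_congr (h : q i = w i) : lexSeq q i = lexSeq w i := by rw [lexSeq, lexSeq, h]

theorem not_squareAt_lexSeq {p r p' r' : ℕ} (hkp : k ≤ p) (hpl : p < k + l) (hkr : k ≤ r)
    (hrl : r < k + l) (hp' : p' = p + l) (hr' : r' = r + l) (hlt : q p < q r)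
    (hgt : q r' < q p') : ¬ SquareAt (lexSeq q) k l := fun h => by
  subst hp' hr'
  exact (lexSeq_lt_of_lt hgt).not_gt ((h.lt_iff hkp hpl hkr hrl).1 (lexSeq_lt_of_lt hlt))

end LexSeq

/-- A lower bound for the values of `base` at positions congruent to `r` modulo `8`, attained by
all of them if `r` is not divisible by `4`. -/
def baseLower (r : ℕ) : ℕ := [30, 48, 8, 0, 30, 70, 60, 20].getD r 0

/-- An upper bound for the values of `base` at positions congruent to `r` modulo `8`. -/
def baseUpper (r : ℕ) : ℕ := [40, 48, 8, 0, 40, 70, 60, 20].getD r 0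

/-- An infinite sequence without squares, up to ties. It is a zigzag, its even part is a zigzag, and
its entries at multiples of `4` reproduce the whole sequence. -/
def base (i : ℕ) : ℚ :=
  if _ : 0 < i ∧ i % 4 = 0 then 30 + base (i / 4) / 8 else baseLower (i % 8)

section Base

variable {i j : ℕ}

theorem base_four_mul (hi : 0 < i) : base (4 * i) = 30 + base i / 8 := by
  rw [base, dif_pos ⟨by omega, by omega⟩, Nat.mul_div_cancel_left i four_pos]

theorem base_of_mod_ne (hi : i % 4 ≠ 0) : base i = baseLower (i % 8) := by
  rw [base, dif_neg (by omega)]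

theorem baseLower_le_base_and_base_le_baseUpper (hi : 0 < i) :
    (baseLower (i % 8) : ℚ) ≤ base i ∧ base i ≤ baseUpper (i % 8) := by
  induction i using Nat.strong_induction_on with
  | _ i ih =>
    have hlevel (r : ℕ) (hr : r < 8) : baseUpper r ≤ 70 ∧
        (r % 4 = 0 → baseLower r = 30 ∧ baseUpper r = 40) ∧
        (r % 4 ≠ 0 → baseLower r = baseUpper r) := by
      interval_cases r <;> decide
    obtain ⟨-, h0, h1⟩ := hlevel (i % 8) (by omega)
    by_cases h4 : i % 4 = 0
    · obtain ⟨j, rfl⟩ : 4 ∣ i := Nat.dvd_of_mod_eq_zero h4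
      obtain ⟨hl, hu⟩ := ih j (by omega) (by omega)
      have hu' : (baseUpper (j % 8) : ℚ) ≤ 70 := by
        exact_mod_cast (hlevel (j % 8) (by omega)).1
      have : (0 : ℚ) ≤ baseLower (j % 8) := Nat.cast_nonneg _
      rw [base_four_mul (by omega), (h0 (by omega)).1, (h0 (by omega)).2]
      constructor <;> push_cast <;> linarith
    · rw [base_of_mod_ne h4, h1 (by omega)]
      simp

theorem base_lt_base (hi : 0 < i) (hj : 0 < j) (h : baseUpper (i % 8) < baseLower (j % 8)) :
    base i < base j :=
  (baseLower_le_base_and_base_le_baseUpper hi).2.trans_lt <|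
    lt_of_lt_of_le (Nat.cast_lt.2 h) (baseLower_le_base_and_base_le_baseUpper hj).1

/-- In this form `interval_cases r` evaluates all residues. -/
theorem base_lt_base_of_mod {r d : ℕ} (hi : 0 < i) (hr : i % 8 = r)
    (h : baseUpper r < baseLower ((r + d) % 8)) : base i < base (i + d) :=
  base_lt_base hi (by omega) (by rwa [hr, Nat.add_mod, hr, Nat.add_mod_mod])

theorem base_add_lt_base_of_mod {r d : ℕ} (hi : 0 < i) (hr : i % 8 = r)
    (h : baseUpper ((r + d) % 8) < baseLower r) : base (i + d) < base i :=
  base_lt_base (by omega) hi (by rwa [hr, Nat.add_mod, hr, Nat.add_mod_mod])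

theorem zigzag_base (e : ℕ) : Zigzag base 0 e where
  lt i hi _ h := by
    obtain h | h | h | h : i % 8 = 0 ∨ i % 8 = 3 ∨ i % 8 = 4 ∨ i % 8 = 7 := by omega
    all_goals exact base_lt_base_of_mod hi h (by decide)
  gt i hi _ h := by
    obtain h | h | h | h : i % 8 = 1 ∨ i % 8 = 2 ∨ i % 8 = 5 ∨ i % 8 = 6 := by omega
    all_goals exact base_add_lt_base_of_mod hi h (by decide)

theorem evenZigzag_base (e : ℕ) : EvenZigzag base 0 e where
  lt i hi _ h := by
    obtain h | h := h
    all_goals exact base_lt_base_of_mod hi h (by decide)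
  gt i hi _ h := by
    obtain h | h := h
    all_goals exact base_add_lt_base_of_mod hi h (by decide)

theorem Zigzag.lexSeq {q : ℕ → ℚ} {s e : ℕ} (hq : Zigzag q s e) : Zigzag (lexSeq q) s e where
  lt i hi hi' h := lexSeq_lt_of_lt (hq.lt i hi hi' h)
  gt i hi hi' h := lexSeq_lt_of_lt (hq.gt i hi hi' h)

theorem EvenZigzag.lexSeq {q : ℕ → ℚ} {s e : ℕ} (hq : EvenZigzag q s e) :
    EvenZigzag (lexSeq q) s e where
  lt i hi hi' h := lexSeq_lt_of_lt (hq.lt i hi hi' h)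
  gt i hi hi' h := lexSeq_lt_of_lt (hq.gt i hi hi' h)

theorem not_squareAt_base {k l : ℕ} (hk : 0 < k) (hl : 2 ≤ l) : ¬ SquareAt (lexSeq base) k l := by
  induction l using Nat.strong_induction_on generalizing k with
  | _ l ih =>
    intro h
    have h4 := (zigzag_base (k + 2 * l)).lexSeq.four_dvd hk hl (by omega) h
    have h8 := (evenZigzag_base (k + 2 * l)).lexSeq.eight_dvd h4 hl (.inl hk) (by omega) h
    obtain ⟨m, rfl⟩ := h4
    refine ih m (by omega) (by omega) (by omega) <|
      SquareAt.congr (fun i j hi _ hj _ => ?_) (h.comp_mul four_pos)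
    have hlt : base (4 * i) < base (4 * j) ↔ base i < base j := by
      rw [base_four_mul (by omega), base_four_mul (by omega)]
      constructor <;> intro <;> linarith
    have heq : base (4 * i) = base (4 * j) ↔ base i = base j := by
      rw [base_four_mul (by omega), base_four_mul (by omega)]
      constructor <;> intro <;> linarith
    rw [lexSeq_lt_iff, lexSeq_lt_iff, hlt, heq, Nat.mul_lt_mul_left four_pos]

end Base

/-! ### Finite verifications -/

theorem injOn_Icc_of_ne {α : Type*} {y : ℕ → α} {n : ℕ}
    (h : ∀ j < n + 1, ∀ i < j, 1 ≤ i → y i ≠ y j) :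
    Set.InjOn y (Set.Icc 1 n) := by
  rintro i ⟨hi, hin⟩ j ⟨hj, hjn⟩ hij
  obtain hlt | rfl | hlt := lt_trichotomy i j
  · exact (h j (by omega) i hlt hi hij).elim
  · rfl
  · exact (h i (by omega) j hlt hj hij.symm).elim

section Crux

variable {α : Type*} [LinearOrder α] {y : ℕ → α} {n l : ℕ}

theorem lt_iff_lt_of_pairwise {ι : Type*} {f g : ι → α} {P : List ι}
    (hf : P.Pairwise (f · < f ·)) (hg : P.Pairwise (g · < g ·)) :
    ∀ ⦃i⦄, i ∈ P → ∀ ⦃j⦄, j ∈ P → (f i < f j ↔ g i < g j) :=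
  List.Pairwise.forall_of_forall_of_flip (fun _ _ => by simp only [lt_self_iff_false])
    (hf.and hg |>.imp fun ⟨h, h'⟩ => iff_of_true h h')
    (hf.and hg |>.imp fun ⟨h, h'⟩ => iff_of_false h.not_gt h'.not_gt)

/-- If `y 1` is the smallest of `y 1, …, y (l - 1)`, then a new entry in front of `y` creates a
square of half-length `2` when it exceeds `y 1`, and one of half-length `l` when it does not. -/
theorem frontCrucial_of_isChain {P : List ℕ} (hl : 2 ≤ l) (h32 : y 3 < y 2)
    (hP : ∀ i < l, 2 ≤ i → i ∈ P) (h : List.IsChain (y · < y ·) (1 :: P))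
    (h' : List.IsChain (y · < y ·) (l :: (1 :: P).map (l + ·))) :
    FrontCrucial y (2 * l - 1) := by
  have hP1 : ∀ i, 1 ≤ i → i < l → i ∈ 1 :: P := fun i hi hi' => by
    obtain rfl | hi := hi.eq_or_lt
    · exact List.mem_cons_self
    · exact List.mem_cons_of_mem 1 (hP i hi' hi)
  have hpw := List.pairwise_cons.1 h.pairwise
  have hpw' := List.pairwise_cons.1 h'.pairwise
  have hshift : (1 :: P).Pairwise fun i j => y (l + i) < y (l + j) := by
    simpa only [List.pairwise_map] using hpw'.2
  have hiso := lt_iff_lt_of_pairwise h.pairwise hshift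
  intro D hD
  by_cases h1 : D 1
  · refine ⟨2, le_rfl, by omega, fun i j hi hi' hj hj' => ?_, fun i hi hi' => ?_⟩
    · obtain rfl : i = 1 := by omega
      obtain rfl : j = 1 := by omega
      simp only [lt_self_iff_false]
    · obtain rfl : i = 1 := by omega
      exact iff_of_true h1 h32
  · have hempty : ∀ i, 1 ≤ i → i < l → ¬ D i := fun i hi hi' hDi => by
      obtain rfl | hi1 := hi.eq_or_lt
      · exact h1 hDi
      · exact h1 (hD 1 i le_rfl (by omega) hi (by omega) hDi (hpw.1 i (hP i hi' hi1)))
    exact ⟨l, hl, by omega, fun i j hi hi' hj hj' =>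
        hiso (hP1 i hi hi') (hP1 j hj hj'),
      fun i hi hi' => iff_of_false (hempty i hi hi')
        (hpw'.1 _ (List.mem_map_of_mem (hP1 i hi hi'))).not_gt⟩

theorem frontCrucial_of_isChain_gt {P : List ℕ} (hinj : Set.InjOn y (Set.Icc 1 (2 * l - 1)))
    (hl : 2 ≤ l) (h23 : y 2 < y 3) (hP : ∀ i < l, 2 ≤ i → i ∈ P)
    (h : List.IsChain (y · > y ·) (1 :: P))
    (h' : List.IsChain (y · > y ·) (l :: (1 :: P).map (l + ·))) :
    FrontCrucial y (2 * l - 1) :=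
  .of_antitone (y := fun i => OrderDual.toDual (y i)) hinj (fun _ _ _ _ _ _ => Iff.rfl) <|
    frontCrucial_of_isChain hl h23 hP h h'

/-- Only finitely many new entries have to be tried: one above all others and one just below each
`y t`. -/
theorem frontCrucial_of_list (hinj : Set.InjOn y (Set.Icc 1 n)) (L : List ℕ)
    (hL : ∀ l ∈ L, 2 ≤ l ∧ 2 * l ≤ n + 1) (htop : ∃ l ∈ L, FrontSquare y (fun _ => True) l)
    (hbelow : ∀ t < n + 1, 1 ≤ t → ∃ l ∈ L, FrontSquare y (fun i => y i < y t) l) :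
    FrontCrucial y n := by
  intro D hD
  suffices ∃ D' : ℕ → Prop, (∀ i, 1 ≤ i → i ≤ n → (D i ↔ D' i)) ∧ ∃ l ∈ L, FrontSquare y D' l by
    obtain ⟨D', hDD', l, hl, hsq⟩ := this
    obtain ⟨hl2, hln⟩ := hL l hl
    exact ⟨l, hl2, hln, hsq.lt_iff, fun i hi hi' =>
      (hDD' i hi (by omega)).trans (hsq.cut_iff i hi hi')⟩
  by_cases hall : ∀ i, 1 ≤ i → i ≤ n → D i
  · exact ⟨fun _ => True, fun i hi hi' => iff_of_true (hall i hi hi') trivial, htop⟩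
  · push Not at hall
    obtain ⟨i, hi, hin, hDi⟩ := hall
    obtain ⟨t, ⟨⟨ht, htn⟩, hDt⟩, hmin⟩ := Set.exists_min_image {t | t ∈ Set.Icc 1 n ∧ ¬ D t} y
      ((Set.finite_Icc 1 n).subset fun _ h => h.1) ⟨i, ⟨hi, hin⟩, hDi⟩
    refine ⟨fun i => y i < y t, fun i hi hin => ⟨fun hDi => ?_, fun hlt => ?_⟩,
      hbelow t (by omega) ht⟩
    · refine lt_of_not_ge fun hle => ?_
      obtain heq | hlt := hle.eq_or_lt
      · exact hDt (hinj ⟨ht, htn⟩ ⟨hi, hin⟩ heq ▸ hDi)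
      · exact hDt (hD t i ht htn hi hin hDi hlt)
    · by_contra hDi
      exact (hmin i ⟨⟨hi, hin⟩, hDi⟩).not_gt hlt

instance {k : ℕ} : Decidable (SquareAt y k l) :=
  inferInstanceAs (Decidable (∀ i < l, ∀ j < l, _))

instance {D : ℕ → Prop} [DecidablePred D] : Decidable (FrontSquare y D l) :=
  decidable_of_iff ((∀ i < l, ∀ j < l, 1 ≤ i → 1 ≤ j → (y i < y j ↔ y (l + i) < y (l + j))) ∧
    ∀ i < l, 1 ≤ i → (D i ↔ y (l + i) < y l))
    ⟨fun ⟨h, h'⟩ => ⟨fun i j hi hi' hj hj' => h i hi' j hj' hi hj, fun i hi hi' => h' i hi' hi⟩,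
      fun h => ⟨fun i hi j hj hi' hj' => h.lt_iff i j hi' hi hj' hj,
        fun i hi hi' => h.cut_iff i hi' hi⟩⟩

theorem isSquareFreeSeq_of_ne (hne : ∀ j < n + 1, ∀ i < j, 1 ≤ i → y i ≠ y j)
    (hsq : ∀ l < n, 2 ≤ l → ∀ k < n + 2 - 2 * l, 1 ≤ k → ¬ SquareAt y k l) :
    IsSquareFreeSeq y n :=
  ⟨injOn_Icc_of_ne hne, fun k l hk hl hkl => hsq l (by omega) hl k (by omega) hk⟩

end Crux

/-- The entries of `L` at the positions `1, 2, …`. -/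
def seqOfList (L : List ℕ) (i : ℕ) : ℕ := L.getD (i - 1) 0

theorem isBicrucialSeq_thirteen :
    IsBicrucialSeq (seqOfList [2, 4, 3, 0, 1, 7, 6, 5, 11, 12, 9, 8, 10]) 13 where
  toIsSquareFreeSeq := isSquareFreeSeq_of_ne (by decide +kernel) (by decide +kernel)
  front := frontCrucial_of_list (injOn_Icc_of_ne (by decide +kernel)) [2, 4]
    (by decide) (by decide +kernel) (by decide +kernel)
  back := frontCrucial_of_list (injOn_Icc_of_ne (by decide +kernel)) [2, 4]
    (by decide) (by decide +kernel) (by decide +kernel)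

theorem isBicrucialSeq_thirtySix :
    IsBicrucialSeq (seqOfList [0, 33, 4, 3, 6, 10, 5, 1, 2, 12, 11, 8, 17, 18, 13, 7, 9, 34, 19, 16,
      22, 25, 20, 14, 15, 27, 26, 23, 30, 31, 28, 21, 24, 35, 32, 29]) 36 where
  toIsSquareFreeSeq := isSquareFreeSeq_of_ne (by decide +kernel) (by decide +kernel)
  front := frontCrucial_of_list (injOn_Icc_of_ne (by decide +kernel)) [2, 16]
    (by decide) (by decide +kernel) (by decide +kernel)
  back := frontCrucial_of_list (injOn_Icc_of_ne (by decide +kernel)) [2, 4, 8, 16]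
    (by decide) (by decide +kernel) (by decide +kernel)

/-- The beginning of `evenStart`, found by computer search. From position `28` on it agrees with
`base`, shifted by `6`. -/
def evenStartList : List ℕ :=
  [87, 94, 95, 13, 3, 30, 93, 91, 88, 90, 92, 12, 2, 38, 89, 86, 37, 84, 85, 11, 1, 33, 83, 81, 65,
    80, 82, 8, 0, 36, 70, 60, 20, 31]

theorem frontCrucial_evenStartList : FrontCrucial (seqOfList evenStartList) 31 :=
  frontCrucial_of_list (injOn_Icc_of_ne (by decide +kernel)) [2, 4, 8, 16]
    (by decide) (by decide +kernel) (by decide +kernel)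

/-! ### Beginnings and endings -/

section Starts

variable {q : ℕ → ℚ} {s b m : ℕ}

/-- The beginning of a bicrucial sequence: the entries of `q` after position `s` contain no square,
the first `m` of them are crucial at the front, and from position `b` on `q` agrees with `base`.
The last three fields hold for `base`, and are used to destroy squares when the end of `q` is
modified. -/
structure IsStart (q : ℕ → ℚ) (s b m : ℕ) : Prop where
  lt : s < b
  zigzag : ∀ e, Zigzag q s e
  evenZigzag : ∀ e, EvenZigzag q (s + 1) e
  not_squareAt : ∀ k l, s < k → 2 ≤ l → ¬ SquareAt (lexSeq q) k l
  front : FrontCrucial (fun i => lexSeq q (s + i)) m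
  eq_base : ∀ i, b ≤ i → q i = base i
  add_three_lt : ∀ i, s < i → i % 4 = 1 ∨ i % 8 = 7 → q (i + 3) < q i
  lt_add_five : ∀ i, s < i → i % 8 = 2 ∨ i % 8 = 4 → q i < q (i + 5)
  lt_add_seven : ∀ i, s < i → i % 8 = 3 → q i < q (i + 7)

theorem not_squareAt_of_eq_base {b k l : ℕ} (hq : ∀ i, b ≤ i → q i = base i) (hk : 0 < k)
    (hbk : b ≤ k) (hl : 2 ≤ l) : ¬ SquareAt (lexSeq q) k l := fun h =>
  not_squareAt_base hk hl <| h.congr fun i j hi _ hj _ => by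
    rw [lexSeq_congr (hq i (hbk.trans hi)), lexSeq_congr (hq j (hbk.trans hj))]

theorem base_add_three_lt {i : ℕ} (hi : 0 < i) (h : i % 4 = 1 ∨ i % 8 = 7) :
    base (i + 3) < base i := by
  obtain h | h | h : i % 8 = 1 ∨ i % 8 = 5 ∨ i % 8 = 7 := by omega
  all_goals exact base_add_lt_base_of_mod hi h (by decide)

theorem base_lt_add_five {i : ℕ} (hi : 0 < i) (h : i % 8 = 2 ∨ i % 8 = 4) :
    base i < base (i + 5) := by
  obtain h | h := h
  all_goals exact base_lt_base_of_mod hi h (by decide)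

theorem base_lt_add_seven {i : ℕ} (hi : 0 < i) (h : i % 8 = 3) : base i < base (i + 7) :=
  base_lt_base_of_mod hi h (by decide)

/-- The start for odd lengths, to be read from position `8` on. -/
def oddStart (i : ℕ) : ℚ := if i = 8 then -1 else base i

theorem oddStart_of_ne {i : ℕ} (hi : i ≠ 8) : oddStart i = base i := if_neg hi

theorem oddStart_eight_lt {i : ℕ} (hi : 8 < i) : oddStart 8 < oddStart i := by
  rw [oddStart_of_ne hi.ne', oddStart, if_pos rfl]
  linarith [(baseLower_le_base_and_base_le_baseUpper (show 0 < i by omega)).1,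
    (baseLower (i % 8)).cast_nonneg (α := ℚ)]

theorem zigzag_oddStart (e : ℕ) : Zigzag oddStart 7 e where
  lt i hi _ h := by
    obtain rfl | hi := (Nat.succ_le_of_lt hi).eq_or_lt
    · exact oddStart_eight_lt (by omega)
    · rw [oddStart_of_ne (by omega), oddStart_of_ne (by omega)]
      exact (zigzag_base (i + 1)).lt i (by omega) le_rfl h
  gt i hi _ h := by
    rw [oddStart_of_ne (by omega), oddStart_of_ne (by omega)]
    exact (zigzag_base (i + 1)).gt i (by omega) le_rfl h

theorem evenZigzag_oddStart (e : ℕ) : EvenZigzag oddStart 8 e where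
  lt i hi _ h := by
    rw [oddStart_of_ne (by omega), oddStart_of_ne (by omega)]
    exact (evenZigzag_base (i + 2)).lt i (by omega) le_rfl h
  gt i hi _ h := by
    rw [oddStart_of_ne (by omega), oddStart_of_ne (by omega)]
    exact (evenZigzag_base (i + 2)).gt i (by omega) le_rfl h

theorem isStart_oddStart : IsStart oddStart 7 9 7 where
  lt := by decide
  zigzag := zigzag_oddStart
  evenZigzag := evenZigzag_oddStart
  not_squareAt k l hk hl h := by
    obtain rfl | hk := (Nat.succ_le_of_lt hk).eq_or_lt
    · have h4 := (zigzag_oddStart (8 + 2 * l)).lexSeq.four_dvd hk hl (by omega) h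
      refine not_squareAt_lexSeq (p := 8) (r := 11) le_rfl (by omega) (by omega) (by omega) rfl rfl
        (oddStart_eight_lt (by norm_num)) ?_ h
      rw [oddStart_of_ne (by omega), oddStart_of_ne (by omega)]
      obtain h8 | h8 : (8 + l) % 8 = 0 ∨ (8 + l) % 8 = 4 := by omega
      all_goals
        rw [show 11 + l = 8 + l + 3 by omega]
        exact base_add_lt_base_of_mod (by omega) h8 (by decide)
    · exact not_squareAt_of_eq_base (fun i hi => oddStart_of_ne (show i ≠ 8 by omega))
        (by omega) hk hl h
  front := by
    have hlt : ∀ i j, 8 < i → 8 < j → baseUpper (i % 8) < baseLower (j % 8) →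
        lexSeq oddStart i < lexSeq oddStart j := fun i j hi hj h => lexSeq_lt_of_lt <| by
      rw [oddStart_of_ne hi.ne', oddStart_of_ne hj.ne']
      exact base_lt_base (by omega) (by omega) h
    have h8 : ∀ i, 8 < i → lexSeq oddStart 8 < lexSeq oddStart i := fun i hi =>
      lexSeq_lt_of_lt (oddStart_eight_lt hi)
    exact frontCrucial_of_isChain (l := 4) (P := [3, 2]) (by decide)
      (hlt 10 9 (by decide) (by decide) (by decide)) (by decide)
      (by simp [h8, hlt, baseUpper, baseLower]) (by simp [hlt, baseUpper, baseLower])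
  eq_base i hi := oddStart_of_ne (by omega)
  add_three_lt i hi h := by
    rw [oddStart_of_ne (by omega), oddStart_of_ne (by omega)]
    exact base_add_three_lt (by omega) h
  lt_add_five i hi h := by
    rw [oddStart_of_ne (by omega), oddStart_of_ne (by omega)]
    exact base_lt_add_five (by omega) h
  lt_add_seven i hi h := by
    rw [oddStart_of_ne (by omega), oddStart_of_ne (by omega)]
    exact base_lt_add_seven (by omega) h

/-- The start for even lengths, to be read from position `7` on. -/
def evenStart (i : ℕ) : ℚ := if i ≤ 40 then seqOfList evenStartList (i - 6) else base i

theorem evenStart_of_le {i : ℕ} (hi : i ≤ 40) :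
    evenStart i = seqOfList evenStartList (i - 6) := if_pos hi

theorem evenStart_of_ge {i : ℕ} (hi : 34 ≤ i) : evenStart i = base i := by
  obtain h | h := le_or_gt i 40
  · have h36 : base 36 = 36 := by
      rw [base_four_mul (i := 9) (by decide), base_of_mod_ne (by decide)]
      norm_num [baseLower]
    have h40 : base 40 = 31 := by
      rw [base_four_mul (i := 10) (by decide), base_of_mod_ne (by decide)]
      norm_num [baseLower]
    have hlist : ∀ i < 41, 34 ≤ i → i % 4 ≠ 0 →
        seqOfList evenStartList (i - 6) = baseLower (i % 8) := by decide
    rw [evenStart_of_le h]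
    obtain rfl | rfl | h4 : i = 36 ∨ i = 40 ∨ i % 4 ≠ 0 := by omega
    · exact h36.symm
    · exact h40.symm
    · rw [base_of_mod_ne h4, hlist i (by omega) hi h4]
  · exact if_neg h.not_ge

theorem evenStart_lt_evenStart {i j : ℕ} (hi : i ≤ 40) (hj : j ≤ 40)
    (h : seqOfList evenStartList (i - 6) < seqOfList evenStartList (j - 6)) :
    evenStart i < evenStart j := by
  rw [evenStart_of_le hi, evenStart_of_le hj]
  exact Nat.cast_lt.2 h

theorem evenStart_lt_add {P : ℕ → Prop} {d i : ℕ} (hd : d ≤ 7)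
    (hbase : ∀ i, 0 < i → P i → base i < base (i + d))
    (hlist : ∀ i < 34, 6 < i → P i →
      seqOfList evenStartList (i - 6) < seqOfList evenStartList (i + d - 6))
    (hi : 6 < i) (h : P i) : evenStart i < evenStart (i + d) := by
  obtain hi' | hi' := le_or_gt 34 i
  · rw [evenStart_of_ge hi', evenStart_of_ge (by omega)]
    exact hbase i (by omega) h
  · exact evenStart_lt_evenStart (by omega) (by omega) (hlist i hi' hi h)

theorem evenStart_add_lt {P : ℕ → Prop} {d i : ℕ} (hd : d ≤ 7)
    (hbase : ∀ i, 0 < i → P i → base (i + d) < base i)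
    (hlist : ∀ i < 34, 6 < i → P i →
      seqOfList evenStartList (i + d - 6) < seqOfList evenStartList (i - 6))
    (hi : 6 < i) (h : P i) : evenStart (i + d) < evenStart i := by
  obtain hi' | hi' := le_or_gt 34 i
  · rw [evenStart_of_ge hi', evenStart_of_ge (by omega)]
    exact hbase i (by omega) h
  · exact evenStart_lt_evenStart (by omega) (by omega) (hlist i hi' hi h)

theorem zigzag_evenStart (e : ℕ) : Zigzag evenStart 6 e where
  lt _ hi _ h := evenStart_lt_add (by decide)
    (fun i hi => (zigzag_base (i + 1)).lt i hi le_rfl) (by decide +kernel) hi h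
  gt _ hi _ h := evenStart_add_lt (by decide)
    (fun i hi => (zigzag_base (i + 1)).gt i hi le_rfl) (by decide +kernel) hi h

theorem evenZigzag_evenStart (e : ℕ) : EvenZigzag evenStart 6 e where
  lt _ hi _ h := evenStart_lt_add (by decide)
    (fun i hi => (evenZigzag_base (i + 2)).lt i hi le_rfl) (by decide +kernel) hi h
  gt _ hi _ h := evenStart_add_lt (by decide)
    (fun i hi => (evenZigzag_base (i + 2)).gt i hi le_rfl) (by decide +kernel) hi h

theorem exists_evenStartList_inversion : ∀ l ∈ [8, 16, 24], ∀ k < 34 - l, 6 < k →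
    ∃ p < l, ∃ r < l, k + p + l ≤ 40 ∧ k + r + l ≤ 40 ∧
      seqOfList evenStartList (k + p - 6) < seqOfList evenStartList (k + r - 6) ∧
      seqOfList evenStartList (k + r + l - 6) < seqOfList evenStartList (k + p + l - 6) := by
  decide +kernel

theorem not_squareAt_evenStart {k l : ℕ} (hk : 6 < k) (hl : 2 ≤ l) :
    ¬ SquareAt (lexSeq evenStart) k l := fun h => by
  obtain hk34 | hk34 := le_or_gt 34 k
  · exact not_squareAt_of_eq_base (fun _ => evenStart_of_ge) (by omega) hk34 hl h
  have h4 := (zigzag_evenStart (k + 2 * l)).lexSeq.four_dvd hk hl (by omega) h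
  have h8 := (evenZigzag_evenStart (k + 2 * l)).lexSeq.eight_dvd h4 hl (.inl hk) (by omega) h
  obtain hkl | hkl := lt_or_ge (k + l) 34
  · obtain ⟨p, hp, r, hr, hp', hr', hlt, hgt⟩ :=
      exists_evenStartList_inversion l (by simp; omega) k (by omega) hk
    exact not_squareAt_lexSeq (p := k + p) (r := k + r) (by omega) (by omega) (by omega) (by omega)
      rfl rfl (evenStart_lt_evenStart (by omega) (by omega) hlt)
      (evenStart_lt_evenStart hr' hp' hgt) h
  obtain hk30 | hk30 := le_or_gt k 30
  · refine not_squareAt_lexSeq (p := 30) (r := 33) hk30 (by omega) (by omega) (by omega) rfl rfl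
      (evenStart_lt_evenStart (by decide) (by decide) (by decide)) ?_ h
    rw [evenStart_of_ge (by omega), evenStart_of_ge (by omega), show 33 + l = 30 + l + 3 by omega]
    exact base_add_lt_base_of_mod (r := 6) (by omega) (by omega) (by decide)
  · refine not_squareAt_lexSeq (p := 37) (r := 33) (by omega) (by omega) (by omega) (by omega)
      rfl rfl (evenStart_lt_evenStart (by decide) (by decide) (by decide)) ?_ h
    rw [evenStart_of_ge (by omega), evenStart_of_ge (by omega), show 37 + l = 33 + l + 4 by omega]
    exact base_lt_base_of_mod (r := 1) (by omega) (by omega) (by decide)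

theorem isStart_evenStart : IsStart evenStart 6 34 31 where
  lt := by decide
  zigzag := zigzag_evenStart
  evenZigzag e :=
    ⟨fun i hi => (evenZigzag_evenStart e).lt i (by omega),
      fun i hi => (evenZigzag_evenStart e).gt i (by omega)⟩
  not_squareAt _ _ := not_squareAt_evenStart
  front := frontCrucial_evenStartList.congr fun i j hi hi' hj hj' => by
    have hinj : Set.InjOn (seqOfList evenStartList) (Set.Icc 1 31) :=
      injOn_Icc_of_ne (by decide +kernel)
    rw [lexSeq_lt_iff, evenStart_of_le (by omega), evenStart_of_le (by omega), Nat.cast_lt,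
      Nat.cast_inj, Nat.add_sub_cancel_left, Nat.add_sub_cancel_left]
    refine or_iff_left fun ⟨heq, _⟩ => ?_
    have := hinj ⟨hi, hi'⟩ ⟨hj, hj'⟩ heq
    omega
  eq_base _ := evenStart_of_ge
  add_three_lt _ hi h :=
    evenStart_add_lt (by decide) (fun _ => base_add_three_lt) (by decide +kernel) hi h
  lt_add_five _ hi h :=
    evenStart_lt_add (by decide) (fun _ => base_lt_add_five) (by decide +kernel) hi h
  lt_add_seven _ hi h :=
    evenStart_lt_add (by decide) (fun _ => base_lt_add_seven) (by decide +kernel) hi h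

end Starts

section Ends

variable {q w : ℕ → ℚ} {s b m a c e k l i : ℕ}

theorem IsStart.eq_baseLower (hq : IsStart q s b m) (hw : ∀ i < a, w i = q i)
    (hb : b ≤ 8 * c + i) (ha : 8 * c + i < a) (h4 : i % 4 ≠ 0) :
    w (8 * c + i) = baseLower (i % 8) := by
  rw [hw _ ha, hq.eq_base _ hb, base_of_mod_ne (by omega), Nat.mul_add_mod]

theorem IsStart.mem_Icc (hq : IsStart q s b m) (hw : ∀ i < a, w i = q i) (hb : b ≤ 8 * c + i)
    (ha : 8 * c + i < a) (h4 : i % 4 = 0) : w (8 * c + i) ∈ Set.Icc 30 40 := by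
  have hi : 0 < 8 * c + i := by have := hq.lt; omega
  have hbounds := baseLower_le_base_and_base_le_baseUpper hi
  rw [Nat.mul_add_mod] at hbounds
  rw [hw _ ha, hq.eq_base _ hb]
  obtain h | h : i % 8 = 0 ∨ i % 8 = 4 := by omega
  all_goals
    rw [h] at hbounds
    exact_mod_cast hbounds

theorem IsStart.lt_apply {x : ℚ} (hq : IsStart q s b m) (hw : ∀ i < a, w i = q i) (hx : x < 30)
    (hb : b ≤ 8 * c + i) (ha : 8 * c + i < a) (h4 : i % 4 = 0) : x < w (8 * c + i) :=
  hx.trans_le (hq.mem_Icc hw hb ha h4).1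

theorem IsStart.apply_lt {x : ℚ} (hq : IsStart q s b m) (hw : ∀ i < a, w i = q i) (hx : 40 < x)
    (hb : b ≤ 8 * c + i) (ha : 8 * c + i < a) (h4 : i % 4 = 0) : w (8 * c + i) < x :=
  (hq.mem_Icc hw hb ha h4).2.trans_lt hx

/-- The sequence `q` with the entries from position `a` on replaced by those of `L`. -/
def withTail (q : ℕ → ℚ) (a : ℕ) (L : List ℚ) (i : ℕ) : ℚ := if i < a then q i else L.getD (i - a) 0

theorem withTail_of_lt {L : List ℚ} (hi : i < a) : withTail q a L i = q i := if_pos hi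

theorem withTail_add (L : List ℚ) (j : ℕ) : withTail q a L (a + j) = L.getD j 0 := by
  rw [withTail, if_neg (by omega), Nat.add_sub_cancel_left]

theorem Zigzag.of_eq (hq : Zigzag q s a) (hw : ∀ i < a, w i = q i)
    (hlt : ∀ i, a ≤ i + 1 → i + 1 ≤ e → i % 4 = 0 ∨ i % 4 = 3 → w i < w (i + 1))
    (hgt : ∀ i, a ≤ i + 1 → i + 1 ≤ e → i % 4 = 1 ∨ i % 4 = 2 → w (i + 1) < w i) :
    Zigzag w s e where
  lt i hi hie h := by
    obtain hia | hia := lt_or_ge (i + 1) a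
    · rw [hw i (by omega), hw (i + 1) hia]
      exact hq.lt i hi hia.le h
    · exact hlt i hia hie h
  gt i hi hie h := by
    obtain hia | hia := lt_or_ge (i + 1) a
    · rw [hw i (by omega), hw (i + 1) hia]
      exact hq.gt i hi hia.le h
    · exact hgt i hia hie h

theorem EvenZigzag.of_eq (hq : EvenZigzag q s a) (hw : ∀ i < a, w i = q i)
    (hlt : ∀ i, a ≤ i + 2 → i + 2 ≤ e → i % 8 = 2 ∨ i % 8 = 4 → w i < w (i + 2))
    (hgt : ∀ i, a ≤ i + 2 → i + 2 ≤ e → i % 8 = 0 ∨ i % 8 = 6 → w (i + 2) < w i) :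
    EvenZigzag w s e where
  lt i hi hie h := by
    obtain hia | hia := lt_or_ge (i + 2) a
    · rw [hw i (by omega), hw (i + 2) hia]
      exact hq.lt i hi hia.le h
    · exact hlt i hia hie h
  gt i hi hie h := by
    obtain hia | hia := lt_or_ge (i + 2) a
    · rw [hw i (by omega), hw (i + 2) hia]
      exact hq.gt i hi hia.le h
    · exact hgt i hia hie h

theorem injOn_lexSeq_sub {m' : ℕ} (hm' : m' ≤ e + 1) :
    Set.InjOn (fun i => lexSeq w (e + 1 - i)) (Set.Icc 1 m') := fun i hi j hj hij => by
  have := lexSeq_injective hij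
  have := hi.2
  have := hj.2
  omega

theorem IsStart.isBicrucialSeq {m' : ℕ} (hq : IsStart q s b m) (hw : ∀ i < a, w i = q i)
    (hma : s + m < a) (hae : a ≤ e + 1)
    (hsq : ∀ k l, s < k → 2 ≤ l → a < k + 2 * l → k + 2 * l ≤ e + 1 → ¬ SquareAt (lexSeq w) k l)
    (hback : FrontCrucial (fun i => lexSeq w (e + 1 - i)) m') (hm' : s + m' ≤ e) :
    IsBicrucialSeq (fun i => lexSeq w (s + i)) (e - s) where
  injOn i _ j _ hij := Nat.add_left_cancel (lexSeq_injective hij)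
  not_squareAt k l hk hl hkl h := by
    replace h : SquareAt (lexSeq w) (s + k) l := by simpa only [SquareAt, add_assoc] using h
    obtain hka | hka := le_or_gt (s + k + 2 * l) a
    · refine hq.not_squareAt (s + k) l (by omega) hl (h.congr fun i j _ hi _ hj => ?_)
      rw [lexSeq_congr (hw i (by omega)), lexSeq_congr (hw j (by omega))]
    · exact hsq (s + k) l (by omega) hl hka (by omega) h
  front := by
    refine (hq.front.congr fun i j _ hi _ hj => ?_).mono (show m ≤ e - s by omega)
    rw [lexSeq_congr (hw (s + i) (by omega)), lexSeq_congr (hw (s + j) (by omega))]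
  back := by
    refine (hback.congr fun i j _ hi _ hj => ?_).mono (show m' ≤ e - s by omega)
    simp only [show s + (e - s + 1 - i) = e + 1 - i by omega,
      show s + (e - s + 1 - j) = e + 1 - j by omega]

/-- The sequence `q` with a new last entry, a maximum, at position `8 * c + 8`. -/
def endZero (q : ℕ → ℚ) (c : ℕ) : ℕ → ℚ := withTail q (8 * c + 8) [200]

theorem endZero_of_lt : ∀ i < 8 * c + 8, endZero q c i = q i := fun _ => withTail_of_lt

theorem endZero_last : endZero q c (8 * c + 8) = 200 := withTail_add [200] 0

theorem IsStart.not_squareAt_endZero (hq : IsStart q s b m) (hb : b ≤ 8 * c + 5) (hk : s < k)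
    (hl : 2 ≤ l) (hkl : 8 * c + 8 < k + 2 * l) (hkl' : k + 2 * l ≤ 8 * c + 8 + 1) :
    ¬ SquareAt (lexSeq (endZero q c)) k l := fun h => by
  have hval {i} (hi : 5 ≤ i) (hi' : i < 8) : endZero q c (8 * c + i) = baseLower (i % 8) :=
    hq.eq_baseLower endZero_of_lt (by omega) (by omega) (by omega)
  have hzigzag : Zigzag (endZero q c) s (8 * c + 8) := by
    refine (hq.zigzag _).of_eq endZero_of_lt (fun i hi hie h => ?_) fun i hi hie h => by omega
    obtain rfl : i = 8 * c + 7 := by omega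
    norm_num [hval, baseLower, endZero_last]
  have h4 := hzigzag.lexSeq.four_dvd hk hl hkl' h
  obtain ⟨i, hi⟩ : ∃ i, 8 * c + 5 = i + l := ⟨8 * c + 5 - l, by omega⟩
  refine not_squareAt_lexSeq (p := i + 3) (r := i) (p' := 8 * c + 8) (by omega) (by omega)
    (by omega) (by omega) (by omega) hi ?_ (by norm_num [hval, baseLower, endZero_last]) h
  rw [endZero_of_lt _ (by omega), endZero_of_lt _ (by omega)]
  exact hq.add_three_lt i (by omega) (by omega)

theorem IsStart.frontCrucial_endZero (hq : IsStart q s b m) (hb : b ≤ 8 * c + 2) :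
    FrontCrucial (fun i => lexSeq (endZero q c) (8 * c + 8 + 1 - i)) 7 := by
  have hval {i} (hi : 2 ≤ i) (hi' : i < 8) (h4 : i % 4 ≠ 0) :
      endZero q c (8 * c + i) = baseLower (i % 8) :=
    hq.eq_baseLower endZero_of_lt (by omega) (by omega) h4
  have hlo {x} (hx : x < 30) : x < endZero q c (8 * c + 4) :=
    hq.lt_apply endZero_of_lt hx (by omega) (by omega) (by decide)
  have hhi {x} (hx : 40 < x) : endZero q c (8 * c + 4) < x :=
    hq.apply_lt endZero_of_lt hx (by omega) (by omega) (by decide)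
  refine frontCrucial_of_isChain_gt (l := 4) (P := [3, 2]) (injOn_lexSeq_sub (by omega))
    (by decide) ?_ (by decide) ?_ ?_
  all_goals
    norm_num [lexSeq_lt_iff, Nat.add_assoc, Nat.add_sub_assoc, hval, baseLower, hlo, hhi,
      endZero_last]

theorem IsStart.exists_isBicrucialSeq_of_mod_zero (hq : IsStart q s b m) (he : e % 8 = 0)
    (hb : b + 6 ≤ e) (hm : s + m < e) :
    ∃ w, IsBicrucialSeq (fun i => lexSeq w (s + i)) (e - s) := by
  obtain ⟨c, rfl⟩ : ∃ c, e = 8 * c + 8 := ⟨(e - 8) / 8, by omega⟩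
  have hsb := hq.lt
  exact ⟨endZero q c, hq.isBicrucialSeq endZero_of_lt hm (by omega)
    (fun k l => hq.not_squareAt_endZero (by omega)) (hq.frontCrucial_endZero (by omega))
    (by omega)⟩

/-- The sequence `q` with a new last entry at position `8 * c + 6`. -/
def endSix (q : ℕ → ℚ) (c : ℕ) : ℕ → ℚ := withTail q (8 * c + 6) [15]

theorem endSix_of_lt : ∀ i < 8 * c + 6, endSix q c i = q i := fun _ => withTail_of_lt

theorem endSix_last : endSix q c (8 * c + 6) = 15 := withTail_add [15] 0

theorem IsStart.not_squareAt_endSix (hq : IsStart q s b m) (hb : b ≤ 8 * c + 3) (hk : s < k)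
    (hl : 2 ≤ l) (hkl : 8 * c + 6 < k + 2 * l) (hkl' : k + 2 * l ≤ 8 * c + 6 + 1) :
    ¬ SquareAt (lexSeq (endSix q c)) k l := fun h => by
  have hval {i} (hi : 3 ≤ i) (hi' : i < 6) (h4 : i % 4 ≠ 0) :
      endSix q c (8 * c + i) = baseLower (i % 8) :=
    hq.eq_baseLower endSix_of_lt (by omega) (by omega) h4
  have hlo : 15 < endSix q c (8 * c + 4) :=
    hq.lt_apply endSix_of_lt (by norm_num) (by omega) (by omega) (by decide)
  have hzigzag : Zigzag (endSix q c) s (8 * c + 6) := by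
    refine (hq.zigzag _).of_eq endSix_of_lt (fun i hi hie h => by omega) fun i hi hie h => ?_
    obtain rfl : i = 8 * c + 5 := by omega
    norm_num [hval, baseLower, endSix_last]
  have h4 := hzigzag.lexSeq.four_dvd hk hl hkl' h
  obtain h8 | h8 : l % 8 = 4 ∨ l % 8 = 0 := by omega
  · obtain ⟨i, hi⟩ : ∃ i, 8 * c + 3 = i + l := ⟨8 * c + 3 - l, by omega⟩
    refine not_squareAt_lexSeq (p := i + 3) (r := i) (p' := 8 * c + 6) (by omega) (by omega)
      (by omega) (by omega) (by omega) hi ?_ (by norm_num [hval, baseLower, endSix_last]) h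
    rw [endSix_of_lt _ (by omega), endSix_of_lt _ (by omega)]
    exact hq.add_three_lt i (by omega) (by omega)
  · obtain ⟨i, hi⟩ : ∃ i, 8 * c + 4 = i + l := ⟨8 * c + 4 - l, by omega⟩
    refine not_squareAt_lexSeq (p := i) (r := i + 2) (r' := 8 * c + 6) (by omega) (by omega)
      (by omega) (by omega) hi (by omega) ?_ (by rwa [endSix_last]) h
    rw [endSix_of_lt _ (by omega), endSix_of_lt _ (by omega)]
    exact (hq.evenZigzag _).lt i (by omega) le_rfl (by omega)

theorem IsStart.frontCrucial_endSix (hq : IsStart q s b m) (hb : b ≤ 8 * c + 2)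
    (hs : s + 2 ≤ 8 * c) :
    FrontCrucial (fun i => lexSeq (endSix q c) (8 * c + 6 + 1 - i)) 7 := by
  have hval {i} (hi : 2 ≤ i) (hi' : i < 6) (h4 : i % 4 ≠ 0) :
      endSix q c (8 * c + i) = baseLower (i % 8) :=
    hq.eq_baseLower endSix_of_lt (by omega) (by omega) h4
  have hlo {x} (hx : x < 30) : x < endSix q c (8 * c + 4) :=
    hq.lt_apply endSix_of_lt hx (by omega) (by omega) (by decide)
  have hhi {x} (hx : 40 < x) : endSix q c (8 * c + 4) < x :=
    hq.apply_lt endSix_of_lt hx (by omega) (by omega) (by decide)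
  have h01 : endSix q c (8 * c) < endSix q c (8 * c + 1) := by
    rw [endSix_of_lt _ (by omega), endSix_of_lt _ (by omega)]
    exact (hq.zigzag _).lt (8 * c) (by omega) le_rfl (by omega)
  have h20 : 8 < endSix q c (8 * c) := by
    rw [endSix_of_lt _ (by omega)]
    refine ((hq.evenZigzag _).gt (8 * c) (by omega) le_rfl (by omega)).trans_eq' ?_
    rw [← endSix_of_lt (q := q) (c := c) _ (by omega)]
    norm_num [hval, baseLower]
  refine frontCrucial_of_isChain (l := 4) (P := [3, 2]) (by decide) ?_ (by decide) ?_ ?_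
  all_goals
    norm_num [lexSeq_lt_iff, Nat.add_assoc, Nat.add_sub_assoc, hval, baseLower, hlo, hhi,
      endSix_last, h01, h20]

theorem IsStart.exists_isBicrucialSeq_of_mod_six (hq : IsStart q s b m) (he : e % 8 = 6)
    (hb : b + 4 ≤ e) (hm : s + m < e) (hs : s + 8 ≤ e) :
    ∃ w, IsBicrucialSeq (fun i => lexSeq w (s + i)) (e - s) := by
  obtain ⟨c, rfl⟩ : ∃ c, e = 8 * c + 6 := ⟨(e - 6) / 8, by omega⟩
  exact ⟨endSix q c, hq.isBicrucialSeq endSix_of_lt hm (by omega)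
    (fun k l => hq.not_squareAt_endSix (by omega))
    (hq.frontCrucial_endSix (by omega) (by omega)) (by omega)⟩

/-- The sequence `q` with a new ending at the positions `8 * c + 15, …, 8 * c + 18`. Whether the
parameter `x` is above or below the entries at multiples of `4` has to depend on `q`. -/
def endTwo (q : ℕ → ℚ) (c : ℕ) (x : ℚ) : ℕ → ℚ := withTail q (8 * c + 15) [-2, x, 48, -3]

theorem endTwo_of_lt {x : ℚ} : ∀ i < 8 * c + 15, endTwo q c x i = q i :=
  fun _ => withTail_of_lt

theorem endTwo_add {x : ℚ} (hi : 15 ≤ i) :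
    endTwo q c x (8 * c + i) = ([-2, x, 48, -3] : List ℚ).getD (i - 15) 0 := by
  rw [← withTail_add (q := q) (a := 8 * c + 15), add_assoc, Nat.add_sub_cancel' hi, endTwo]

theorem IsStart.zigzag_endTwo {x : ℚ} (hq : IsStart q s b m) (hb : b ≤ 8 * c + 14) (hx : -2 < x)
    (hx' : x < 48) : Zigzag (endTwo q c x) s (8 * c + 18) := by
  have h14 : endTwo q c x (8 * c + 14) = 60 :=
    hq.eq_baseLower endTwo_of_lt hb (by omega) (by decide)
  refine (hq.zigzag _).of_eq endTwo_of_lt (fun i hi hie h => ?_) fun i hi hie h => ?_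
  · obtain rfl | rfl : i = 8 * c + 15 ∨ i = 8 * c + 16 := by omega
    all_goals simpa [Nat.add_assoc, endTwo_add]
  · obtain rfl | rfl : i = 8 * c + 14 ∨ i = 8 * c + 17 := by omega
    all_goals norm_num [Nat.add_assoc, h14, endTwo_add]

theorem IsStart.evenZigzag_endTwo {x : ℚ} (hq : IsStart q s b m) (hb : b ≤ 8 * c + 14)
    (hx : -2 < x) (hx' : x < 48) : EvenZigzag (endTwo q c x) (s + 1) (8 * c + 18) := by
  have h14 : endTwo q c x (8 * c + 14) = 60 :=
    hq.eq_baseLower endTwo_of_lt hb (by omega) (by decide)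
  refine (hq.evenZigzag _).of_eq endTwo_of_lt (fun i hi hie h => by omega) fun i hi hie h => ?_
  obtain rfl | rfl : i = 8 * c + 14 ∨ i = 8 * c + 16 := by omega
  · simpa [Nat.add_assoc, h14, endTwo_add] using hx'.trans (by norm_num)
  · simpa [Nat.add_assoc, endTwo_add] using hx.trans' (by norm_num)

theorem IsStart.not_squareAt_endTwo {x : ℚ} (hq : IsStart q s b m) (hb : b ≤ 8 * c + 7)
    (hx : -2 < x) (hx' : x < 48) (hk : s < k) (hl : 2 ≤ l)
    (hkl : 8 * c + 15 < k + 2 * l) (hkl' : k + 2 * l ≤ 8 * c + 19) :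
    ¬ SquareAt (lexSeq (endTwo q c x)) k l := fun h => by
  have hsb := hq.lt
  have hval {i} (hi : 7 ≤ i) (hi' : i < 15) (h4 : i % 4 ≠ 0) :
      endTwo q c x (8 * c + i) = baseLower (i % 8) :=
    hq.eq_baseLower endTwo_of_lt (by omega) (by omega) h4
  have h4 := (hq.zigzag_endTwo (by omega) hx hx').lexSeq.four_dvd hk hl hkl' h
  have h8 := (hq.evenZigzag_endTwo (by omega) hx hx').lexSeq.eight_dvd h4 hl (by omega) hkl' h
  obtain hkl | hkl := hkl'.eq_or_lt
  · obtain ⟨i, hi⟩ : ∃ i, 8 * c + 11 = i + l := ⟨8 * c + 11 - l, by omega⟩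
    refine not_squareAt_lexSeq (p := i) (r := i + 7) (r' := 8 * c + 18) (by omega) (by omega)
      (by omega) (by omega) hi (by omega) ?_ (by norm_num [hval, baseLower, endTwo_add]) h
    rw [endTwo_of_lt _ (by omega), endTwo_of_lt _ (by omega)]
    exact hq.lt_add_seven i (by omega) (by omega)
  · obtain ⟨i, hi⟩ : ∃ i, 8 * c + 10 = i + l := ⟨8 * c + 10 - l, by omega⟩
    refine not_squareAt_lexSeq (p := i) (r := i + 5) (r' := 8 * c + 15) (by omega) (by omega)
      (by omega) (by omega) hi (by omega) ?_ (by norm_num [hval, baseLower, endTwo_add]) h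
    rw [endTwo_of_lt _ (by omega), endTwo_of_lt _ (by omega)]
    exact hq.lt_add_five i (by omega) (by omega)

theorem IsStart.exists_frontCrucial_endTwo (hq : IsStart q s b m) (hb : b ≤ 8 * c + 4) :
    ∃ x : ℚ, -2 < x ∧ x < 48 ∧
      FrontCrucial (fun i => lexSeq (endTwo q c x) (8 * c + 18 + 1 - i)) 15 := by
  have hval {x i} (hi : 4 ≤ i) (hi' : i < 15) (h4 : i % 4 ≠ 0) :
      endTwo q c x (8 * c + i) = baseLower (i % 8) :=
    hq.eq_baseLower endTwo_of_lt (by omega) (by omega) h4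
  have hlo {x y i} (hy : y < 30) (hi : 4 ≤ i) (hi' : i < 15) (h4 : i % 4 = 0) :
      y < endTwo q c x (8 * c + i) :=
    hq.lt_apply endTwo_of_lt hy (by omega) (by omega) h4
  have hhi {x y i} (hy : 40 < y) (hi : 4 ≤ i) (hi' : i < 15) (h4 : i % 4 = 0) :
      endTwo q c x (8 * c + i) < y :=
    hq.apply_lt endTwo_of_lt hy (by omega) (by omega) h4
  obtain hlt | hle := lt_or_ge (q (8 * c + 8)) (q (8 * c + 4))
  · have hlt' {x} : endTwo q c x (8 * c + 8) < endTwo q c x (8 * c + 4) := by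
      rwa [endTwo_of_lt _ (by omega), endTwo_of_lt _ (by omega)]
    refine ⟨25, by norm_num, by norm_num,
      frontCrucial_of_isChain (l := 8) (P := [4, 3, 7, 2, 5, 6]) (by decide) ?_ (by decide) ?_ ?_⟩
    all_goals norm_num [lexSeq_lt_iff, Nat.add_assoc, Nat.add_sub_assoc, hval, baseLower, hlo,
      hhi, endTwo_add, hlt']
  · have hle' {x} : endTwo q c x (8 * c + 4) ≤ endTwo q c x (8 * c + 8) := by
      rwa [endTwo_of_lt _ (by omega), endTwo_of_lt _ (by omega)]
    refine ⟨45, by norm_num, by norm_num,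
      frontCrucial_of_isChain (l := 8) (P := [4, 7, 3, 2, 5, 6]) (by decide) ?_ (by decide) ?_ ?_⟩
    all_goals norm_num [lexSeq_lt_iff, Nat.add_assoc, Nat.add_sub_assoc, hval, baseLower, hlo,
      hhi, endTwo_add, hle'.lt_or_eq]

theorem IsStart.exists_isBicrucialSeq_of_mod_two (hq : IsStart q s b m) (he : e % 8 = 2)
    (hb : b + 14 ≤ e) (hm : s + m + 3 < e) :
    ∃ w, IsBicrucialSeq (fun i => lexSeq w (s + i)) (e - s) := by
  obtain ⟨c, rfl⟩ : ∃ c, e = 8 * c + 18 := ⟨(e - 18) / 8, by omega⟩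
  have hsb := hq.lt
  obtain ⟨x, hx, hx', hback⟩ := hq.exists_frontCrucial_endTwo (show b ≤ 8 * c + 4 by omega)
  exact ⟨endTwo q c x, hq.isBicrucialSeq endTwo_of_lt (by omega) (by omega)
    (fun k l => hq.not_squareAt_endTwo (by omega) hx hx') hback (by omega)⟩

/-- The sequence `q` with a new ending at the positions `8 * c + 12, …, 8 * c + 20`. -/
def endFour (q : ℕ → ℚ) (c : ℕ) : ℕ → ℚ :=
  withTail q (8 * c + 12) [170, 210, 180, 20, 35, 48, 8, 0, 200]

theorem endFour_of_lt : ∀ i < 8 * c + 12, endFour q c i = q i := fun _ => withTail_of_lt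

theorem endFour_add (hi : 12 ≤ i) : endFour q c (8 * c + i) =
    ([170, 210, 180, 20, 35, 48, 8, 0, 200] : List ℚ).getD (i - 12) 0 := by
  rw [← withTail_add (q := q) (a := 8 * c + 12), add_assoc, Nat.add_sub_cancel' hi, endFour]

theorem IsStart.zigzag_endFour (hq : IsStart q s b m) (hb : b ≤ 8 * c + 11) :
    Zigzag (endFour q c) s (8 * c + 20) := by
  have h11 : endFour q c (8 * c + 11) = 0 :=
    hq.eq_baseLower endFour_of_lt hb (by omega) (by decide)
  refine (hq.zigzag _).of_eq endFour_of_lt (fun i hi hie h => ?_) fun i hi hie h => ?_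
  · obtain rfl | rfl | rfl | rfl | rfl : i = 8 * c + 11 ∨ i = 8 * c + 12 ∨ i = 8 * c + 15 ∨
      i = 8 * c + 16 ∨ i = 8 * c + 19 := by omega
    all_goals norm_num [Nat.add_assoc, h11, endFour_add]
  · obtain rfl | rfl | rfl | rfl : i = 8 * c + 13 ∨ i = 8 * c + 14 ∨ i = 8 * c + 17 ∨
      i = 8 * c + 18 := by omega
    all_goals norm_num [Nat.add_assoc, endFour_add]

theorem IsStart.evenZigzag_endFour (hq : IsStart q s b m) (hb : b ≤ 8 * c + 10) :
    EvenZigzag (endFour q c) (s + 1) (8 * c + 20) := by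
  have h10 : endFour q c (8 * c + 10) = 8 :=
    hq.eq_baseLower endFour_of_lt hb (by omega) (by decide)
  refine (hq.evenZigzag _).of_eq endFour_of_lt (fun i hi hie h => ?_) fun i hi hie h => ?_
  · obtain rfl | rfl | rfl : i = 8 * c + 10 ∨ i = 8 * c + 12 ∨ i = 8 * c + 18 := by omega
    all_goals norm_num [Nat.add_assoc, h10, endFour_add]
  · obtain rfl | rfl : i = 8 * c + 14 ∨ i = 8 * c + 16 := by omega
    all_goals norm_num [Nat.add_assoc, endFour_add]

theorem IsStart.not_squareAt_endFour (hq : IsStart q s b m) (hb : b ≤ 8 * c + 4) (hk : s < k)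
    (hl : 2 ≤ l) (hkl : 8 * c + 12 < k + 2 * l) (hkl' : k + 2 * l ≤ 8 * c + 20 + 1) :
    ¬ SquareAt (lexSeq (endFour q c)) k l := fun h => by
  have hsb := hq.lt
  have hval {i} (hi : 4 ≤ i) (hi' : i < 12) (h4 : i % 4 ≠ 0) :
      endFour q c (8 * c + i) = baseLower (i % 8) :=
    hq.eq_baseLower endFour_of_lt (by omega) (by omega) h4
  have h4 := (hq.zigzag_endFour (by omega)).lexSeq.four_dvd hk hl hkl' h
  have h8 := (hq.evenZigzag_endFour (by omega)).lexSeq.eight_dvd h4 hl (by omega) hkl' h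
  obtain hkl | ⟨rfl, hkl⟩ | ⟨rfl, rfl⟩ : k + l ≤ 8 * c + 9 ∨
      (l = 8 ∧ 8 * c + 1 < k ∧ k ≤ 8 * c + 4) ∨ l = 8 ∧ k = 8 * c + 5 := by omega
  · obtain ⟨i, hi⟩ : ∃ i, 8 * c + 9 = i + l := ⟨8 * c + 9 - l, by omega⟩
    refine not_squareAt_lexSeq (p := i + 3) (r := i) (p' := 8 * c + 12) (by omega) (by omega)
      (by omega) (by omega) (by omega) hi ?_ (by norm_num [hval, baseLower, endFour_add]) h
    rw [endFour_of_lt _ (by omega), endFour_of_lt _ (by omega)]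
    exact hq.add_three_lt i (by omega) (by omega)
  · refine not_squareAt_lexSeq (p := 8 * c + 4) (r := 8 * c + 9) (by omega) (by omega) (by omega)
      (by omega) rfl rfl ?_ (by norm_num [Nat.add_assoc, endFour_add]) h
    rw [endFour_of_lt _ (by omega), endFour_of_lt _ (by omega)]
    exact hq.lt_add_five _ (by omega) (by omega)
  · exact not_squareAt_lexSeq (p := 8 * c + 5) (r := 8 * c + 12) (by omega) (by omega) (by omega)
      (by omega) rfl rfl (by norm_num [hval, baseLower, endFour_add])
      (by norm_num [Nat.add_assoc, endFour_add]) h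

theorem IsStart.frontCrucial_endFour (hq : IsStart q s b m) (hb : b ≤ 8 * c + 5) :
    FrontCrucial (fun i => lexSeq (endFour q c) (8 * c + 20 + 1 - i)) 15 := by
  have hval {i} (hi : 5 ≤ i) (hi' : i < 12) (h4 : i % 4 ≠ 0) :
      endFour q c (8 * c + i) = baseLower (i % 8) :=
    hq.eq_baseLower endFour_of_lt (by omega) (by omega) h4
  have hlo {x} (hx : x < 30) : x < endFour q c (8 * c + 8) :=
    hq.lt_apply endFour_of_lt hx (by omega) (by omega) (by decide)
  have hhi {x} (hx : 40 < x) : endFour q c (8 * c + 8) < x :=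
    hq.apply_lt endFour_of_lt hx (by omega) (by omega) (by decide)
  refine frontCrucial_of_isChain_gt (l := 8) (P := [7, 4, 5, 6, 3, 2])
    (injOn_lexSeq_sub (by omega)) (by decide) ?_ (by decide) ?_ ?_
  all_goals
    norm_num [lexSeq_lt_iff, Nat.add_assoc, Nat.add_sub_assoc, hval, baseLower, hlo, hhi,
      endFour_add]

theorem IsStart.exists_isBicrucialSeq_of_mod_four (hq : IsStart q s b m) (he : e % 8 = 4)
    (hb : b + 16 ≤ e) (hm : s + m + 8 < e) :
    ∃ w, IsBicrucialSeq (fun i => lexSeq w (s + i)) (e - s) := by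
  obtain ⟨c, rfl⟩ : ∃ c, e = 8 * c + 20 := ⟨(e - 20) / 8, by omega⟩
  have hsb := hq.lt
  exact ⟨endFour q c, hq.isBicrucialSeq endFour_of_lt (by omega) (by omega)
    (fun k l => hq.not_squareAt_endFour (by omega)) (hq.frontCrucial_endFour (by omega))
    (by omega)⟩

end Ends

theorem exists_isBicrucialSeq_of_odd {n : ℕ} (hodd : Odd n) (hn : n = 9 ∨ 15 ≤ n) :
    ∃ y : ℕ → ℚ ×ₗ ℕ, IsBicrucialSeq y n := by
  rw [Nat.odd_iff] at hodd
  have hq := isStart_oddStart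
  obtain ⟨w, hw⟩ : ∃ w, IsBicrucialSeq (fun i => lexSeq w (7 + i)) (n + 7 - 7) := by
    obtain h | h | h | h : n % 8 = 1 ∨ n % 8 = 3 ∨ n % 8 = 5 ∨ n % 8 = 7 := by omega
    · exact hq.exists_isBicrucialSeq_of_mod_zero (by omega) (by omega) (by omega)
    · exact hq.exists_isBicrucialSeq_of_mod_two (by omega) (by omega) (by omega)
    · exact hq.exists_isBicrucialSeq_of_mod_four (by omega) (by omega) (by omega)
    · exact hq.exists_isBicrucialSeq_of_mod_six (by omega) (by omega) (by omega) (by omega)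
  exact ⟨_, hw⟩

theorem exists_isBicrucialSeq_of_even {n : ℕ} (heven : Even n) (hn : 32 ≤ n)
    (h36 : n ≠ 36) (h38 : n ≠ 38) :
    ∃ y : ℕ → ℚ ×ₗ ℕ, IsBicrucialSeq y n := by
  rw [Nat.even_iff] at heven
  have hq := isStart_evenStart
  obtain ⟨w, hw⟩ : ∃ w, IsBicrucialSeq (fun i => lexSeq w (6 + i)) (n + 6 - 6) := by
    obtain h | h | h | h : n % 8 = 0 ∨ n % 8 = 2 ∨ n % 8 = 4 ∨ n % 8 = 6 := by omega
    · exact hq.exists_isBicrucialSeq_of_mod_six (by omega) (by omega) (by omega) (by omega)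
    · exact hq.exists_isBicrucialSeq_of_mod_zero (by omega) (by omega) (by omega)
    · exact hq.exists_isBicrucialSeq_of_mod_two (by omega) (by omega) (by omega)
    · exact hq.exists_isBicrucialSeq_of_mod_four (by omega) (by omega) (by omega)
  exact ⟨_, hw⟩

theorem exists_bicrucial {n : ℕ} (hn : n = 9 ∨ (Odd n ∧ 13 ≤ n) ∨ (Even n ∧ 32 ≤ n ∧ n ≠ 38)) :
    ∃ σ : Equiv.Perm (Fin n), Bicrucial σ := by
  obtain rfl | h13 := eq_or_ne n 13
  · exact exists_bicrucial_of_isBicrucialSeq isBicrucialSeq_thirteen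
  obtain rfl | h36 := eq_or_ne n 36
  · exact exists_bicrucial_of_isBicrucialSeq isBicrucialSeq_thirtySix
  obtain hodd | heven := n.even_or_odd.symm
  · obtain ⟨y, hy⟩ := exists_isBicrucialSeq_of_odd hodd (by grind)
    exact exists_bicrucial_of_isBicrucialSeq hy
  · obtain ⟨y, hy⟩ := exists_isBicrucialSeq_of_even heven (by grind) h36 (by grind)
    exact exists_bicrucial_of_isBicrucialSeq hy

end BicrucialPerm

/-- A bicrucial permutation of length `n` exists if and only if `n = 9`,
or `n` is odd with `n ≥ 13`, or `n` is even with `n ≥ 32` and `n ≠ 38`. -/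
theorem bicrucial_exists_iff (n : ℕ) :
    (∃ σ : Equiv.Perm (Fin n), Bicrucial σ) ↔
      (n = 9 ∨ (Odd n ∧ 13 ≤ n) ∨ (Even n ∧ 32 ≤ n ∧ n ≠ 38)) := by
  constructor
  · rintro ⟨σ, hσ⟩
    obtain ⟨y, hy⟩ := BicrucialPerm.exists_isBicrucialSeq_of_bicrucial hσ
    exact hy.length_cases
  · exact BicrucialPerm.exists_bicrucial
end

section
/- For every integer k ≥ 3, there exists a bicrucial permutation of length 8k + 3. -/
/-!
In a Toeplitz sequence that alternates between a large and a small value at the even positions and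
repeats itself at half scale at the odd ones, the up-down pattern has period 4. Hence the
half-length of a square is divisible by 4, the odd positions of the square form a square of half
that size, and infinite descent shows that there are none.

To force squares in all extensions, raise the entries `1`, `9` and `8 * k + 3` above all peaks, the
peak `8` higher still, and lower the entry `3` below `7`, so that `2, …, 7` and `10, …, 15` are
order-isomorphic. Any new first entry then starts a square of half-length 2 or 8, and any new last
entry completes one of half-length 2 or 4. No square arises inside. At half-length 4 the odd
entries rule it out. A longer square lies in the Toeplitz part or contains a raised odd entry;
that entry beats the peaks of its own half while its partner in the other half stays below all
peaks, unless the two are `1` and `9`, where the entries `8` and `16` tell the halves apart.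
-/

/-- The length-`l` factors of the sequences `f` and `g` starting at `a` and `b` are
order-isomorphic. A square of half-length `l` at `s` is the case `FactorIso f s f (s + l) l`. -/
def FactorIso {α β : Type*} [LT α] [LT β] (f : ℕ → α) (a : ℕ) (g : ℕ → β) (b l : ℕ) : Prop :=
  ∀ i < l, ∀ j < l, (f (a + i) < f (a + j) ↔ g (b + i) < g (b + j))

namespace FactorIso

section LT

variable {α β γ : Type*} [LT α] [LT β] [LT γ] {f : ℕ → α} {g : ℕ → β} {h : ℕ → γ}
  {a b c l s : ℕ}

lemma symm (H : FactorIso f a g b l) : FactorIso g b f a l :=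
  fun i hi j hj => (H i hi j hj).symm

lemma trans (H : FactorIso f a g b l) (H' : FactorIso g b h c l) : FactorIso f a h c l :=
  fun i hi j hj => (H i hi j hj).trans (H' i hi j hj)

lemma subfactor (H : FactorIso f a g b l) {a' b' l' : ℕ} (ha : a ≤ a') (hb : a' + b = a + b')
    (hl : a' + l' ≤ a + l) : FactorIso f a' g b' l' := by
  obtain ⟨d, rfl⟩ := Nat.exists_eq_add_of_le ha
  obtain rfl : b' = b + d := by omega
  intro i hi j hj
  simpa only [add_assoc] using H (d + i) (by omega) (d + j) (by omega)

lemma lt_iff_add (H : FactorIso f s f (s + l) l) {p q : ℕ} (hp : s ≤ p) (hp' : p < s + l)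
    (hq : s ≤ q) (hq' : q < s + l) : f p < f q ↔ f (p + l) < f (q + l) := by
  obtain ⟨i, rfl⟩ := Nat.exists_eq_add_of_le hp
  obtain ⟨j, rfl⟩ := Nat.exists_eq_add_of_le hq
  simpa only [add_right_comm] using H i (by omega) j (by omega)

end LT

section Preorder

variable {α β : Type*} [Preorder α] [Preorder β] {f : ℕ → α} {g : ℕ → β} {a b l : ℕ}

variable (f g a b) in
lemma one : FactorIso f a g b 1 := by
  intro i hi j hj
  obtain rfl : i = j := by omega
  exact iff_of_false (lt_irrefl _) (lt_irrefl _)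

lemma cons (H : FactorIso f (a + 1) g (b + 1) l) (ha : ∀ i < l, f (a + 1 + i) < f a)
    (hb : ∀ i < l, g (b + 1 + i) < g b) : FactorIso f a g b (l + 1) := by
  have shift (c i : ℕ) : c + (i + 1) = c + 1 + i := by omega
  rintro (_ | i) hi (_ | j) hj
  · exact iff_of_false (lt_irrefl _) (lt_irrefl _)
  · rw [shift a, shift b]
    exact iff_of_false (ha j (by omega)).asymm (hb j (by omega)).asymm
  · rw [shift a, shift b]
    exact iff_of_true (ha i (by omega)) (hb i (by omega))
  · rw [shift a i, shift a j, shift b i, shift b j]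
    exact H i (by omega) j (by omega)

lemma snoc (H : FactorIso f a g b l) (ha : ∀ i < l, f (a + i) < f (a + l))
    (hb : ∀ i < l, g (b + i) < g (b + l)) : FactorIso f a g b (l + 1) := by
  intro i hi j hj
  rcases Nat.lt_succ_iff_lt_or_eq.1 hi with hi | rfl <;>
    rcases Nat.lt_succ_iff_lt_or_eq.1 hj with hj | rfl
  · exact H i hi j hj
  · exact iff_of_true (ha i hi) (hb i hi)
  · exact iff_of_false (ha j hj).asymm (hb j hj).asymm
  · exact iff_of_false (lt_irrefl _) (lt_irrefl _)

lemma two_of_lt (ha : f a < f (a + 1)) (hb : g b < g (b + 1)) : FactorIso f a g b 2 :=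
  (one f g a b).snoc (by simpa using ha) (by simpa using hb)

lemma two_of_gt (ha : f (a + 1) < f a) (hb : g (b + 1) < g b) : FactorIso f a g b 2 :=
  (one f g (a + 1) (b + 1)).cons (by simpa using ha) (by simpa using hb)

end Preorder

section UpUpDownDown

variable {α : Type*} [LT α] {f : ℕ → α} {s l : ℕ}

lemma four_dvd (H : FactorIso f s f (s + l) l) (hl : 2 ≤ l)
    (hstep : ∀ i, s ≤ i → i + 1 < s + 2 * l → (f i < f (i + 1) ↔ 2 ≤ i % 4)) : 4 ∣ l := by
  have step_shift {i : ℕ} (hi : s ≤ i) (hi' : i + 1 < s + l) :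
      2 ≤ i % 4 ↔ 2 ≤ (i + l) % 4 := by
    rw [← hstep i hi (by omega), ← hstep (i + l) (by omega) (by omega), add_right_comm]
    exact H.lt_iff_add hi (by omega) (by omega) hi'
  have first := step_shift le_rfl (by omega)
  rcases hl.eq_or_lt with rfl | hl
  · omega
  · have second := step_shift s.le_succ (by omega)
    omega

-- A square has half-length divisible by 4, so its odd positions form a square of half the size.
theorem not_of_selfSimilar (hstep : ∀ i, f i < f (i + 1) ↔ 2 ≤ i % 4)
    (hself : ∀ i j, f (2 * i + 1) < f (2 * j + 1) ↔ f i < f j) (hl : 2 ≤ l) :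
    ¬ FactorIso f s f (s + l) l := by
  induction l using Nat.strong_induction_on generalizing s with
  | _ l ih =>
    intro H
    obtain ⟨m, rfl⟩ := H.four_dvd hl fun i _ _ => hstep i
    refine ih (2 * m) (by omega) (s := s / 2) (by omega) fun i hi j hj => ?_
    have hodd := H.lt_iff_add (p := 2 * (s / 2 + i) + 1) (q := 2 * (s / 2 + j) + 1)
      (by omega) (by omega) (by omega) (by omega)
    rw [← hself, ← hself (s / 2 + 2 * m + i)]
    convert hodd using 3 <;> ring

end UpUpDownDown

end FactorIso

section Permutations

variable {n : ℕ}

/-- A map `Fin n → Fin n` as a sequence of naturals, with the junk value `0` from `n` on. -/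
def toSeq (σ : Fin n → Fin n) (i : ℕ) : ℕ :=
  if h : i < n then σ ⟨i, h⟩ else 0

lemma toSeq_of_lt (σ : Fin n → Fin n) {i : ℕ} (h : i < n) : toSeq σ i = σ ⟨i, h⟩ :=
  dif_pos h

lemma toSeq_ne_toSeq (σ : Equiv.Perm (Fin n)) {i j : ℕ} (hi : i < n) (hj : j < n)
    (hij : i ≠ j) : toSeq σ i ≠ toSeq σ j := by
  simpa only [toSeq_of_lt, hi, hj, ne_eq, Fin.val_inj, σ.injective.eq_iff, Fin.mk.injEq] using hij

lemma toSeq_lt_toSeq (σ : Fin n → Fin n) {i j : ℕ} (hi : i < n) (hj : j < n) :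
    toSeq σ i < toSeq σ j ↔ σ ⟨i, hi⟩ < σ ⟨j, hj⟩ := by
  rw [toSeq_of_lt σ hi, toSeq_of_lt σ hj, Fin.val_fin_lt]

lemma containsSquare_iff {σ : Fin n → Fin n} : ContainsSquare σ ↔
    ∃ s l, 2 ≤ l ∧ s + 2 * l ≤ n ∧ FactorIso (toSeq σ) s (toSeq σ) (s + l) l := by
  constructor
  · rintro ⟨s, l, hl, hs, H⟩
    refine ⟨s, l, hl, hs, fun i hi j hj => ?_⟩
    rw [toSeq_lt_toSeq, toSeq_lt_toSeq]
    exact H i j hi hj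
  · rintro ⟨s, l, hl, hs, H⟩
    refine ⟨s, l, hl, hs, fun i j hi hj => ?_⟩
    rw [← toSeq_lt_toSeq, ← toSeq_lt_toSeq]
    exact H i hi j hj

lemma IsLeftExtension.factorIso {σ : Fin n → Fin n} {π : Fin (n + 1) → Fin (n + 1)}
    (hπ : IsLeftExtension σ π) : FactorIso (toSeq π) 1 (toSeq σ) 0 n := by
  intro i hi j hj
  simp only [add_comm 1, zero_add]
  rw [toSeq_lt_toSeq π (by omega) (by omega), toSeq_lt_toSeq σ hi hj]
  exact hπ ⟨i, hi⟩ ⟨j, hj⟩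

lemma IsRightExtension.factorIso {σ : Fin n → Fin n} {π : Fin (n + 1) → Fin (n + 1)}
    (hπ : IsRightExtension σ π) : FactorIso (toSeq π) 0 (toSeq σ) 0 n := by
  intro i hi j hj
  simp only [zero_add]
  rw [toSeq_lt_toSeq π (by omega) (by omega), toSeq_lt_toSeq σ hi hj]
  exact hπ ⟨i, hi⟩ ⟨j, hj⟩

lemma exists_perm_lt_iff_lt {α : Type*} [LinearOrder α] {f : Fin n → α}
    (hf : Function.Injective f) : ∃ σ : Equiv.Perm (Fin n), ∀ i j, σ i < σ j ↔ f i < f j := by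
  have hmono : StrictMono (f ∘ Tuple.sort f) :=
    (Tuple.monotone_sort f).strictMono_of_injective (hf.comp (Tuple.sort f).injective)
  refine ⟨(Tuple.sort f).symm, fun i j => ?_⟩
  simp only [← hmono.lt_iff_lt, Function.comp_apply, Equiv.apply_symm_apply]

lemma exists_perm_factorIso {α : Type*} [LinearOrder α] {f : ℕ → α}
    (hf : Function.Injective f) (n c : ℕ) :
    ∃ σ : Equiv.Perm (Fin n), FactorIso (toSeq σ) 0 f c n := by
  obtain ⟨σ, hσ⟩ := exists_perm_lt_iff_lt (n := n) (f := fun i => f (c + i))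
    (hf.comp ((add_right_injective c).comp Fin.val_injective))
  refine ⟨σ, fun i hi j hj => ?_⟩
  simp only [zero_add]
  rw [toSeq_lt_toSeq σ hi hj, hσ]

lemma squareFree_of_factorIso {α : Type*} [LT α] {f : ℕ → α} {c : ℕ} {σ : Fin n → Fin n}
    (hσ : FactorIso (toSeq σ) 0 f c n)
    (hf : ∀ s l, 2 ≤ l → c ≤ s → s + 2 * l ≤ c + n → ¬ FactorIso f s f (s + l) l) :
    SquareFree σ := by
  rw [SquareFree, containsSquare_iff]
  rintro ⟨s, l, hl, hs, H⟩
  refine hf (c + s) l hl (by omega) (by omega) ?_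
  have left : FactorIso (toSeq σ) s f (c + s) l := hσ.subfactor (by omega) (by omega) (by omega)
  have right : FactorIso (toSeq σ) (s + l) f (c + s + l) l :=
    hσ.subfactor (by omega) (by omega) (by omega)
  exact left.symm.trans (H.trans right)

-- A new first entry below the old one starts a square of half-length 2 with the ascent `f (c + 1)`,
-- `f (c + 2)`; above it, it is the maximum of the first half of a square of half-length `l + 1`.
lemma IsLeftExtension.containsSquare {α : Type*} [Preorder α] {f : ℕ → α} {c l : ℕ}
    {σ : Fin n → Fin n} {π : Equiv.Perm (Fin (n + 1))} (hπ : IsLeftExtension σ π)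
    (hσ : FactorIso (toSeq σ) 0 f c n) (hl : 1 ≤ l) (hn : 2 * l + 1 ≤ n)
    (hasc : f (c + 1) < f (c + 2)) (H : FactorIso f c f (c + l + 1) l)
    (hfirst : ∀ i < l, f (c + i) ≤ f c) (hsecond : ∀ i < l, f (c + l + 1 + i) < f (c + l)) :
    ContainsSquare π := by
  have hπf : FactorIso (toSeq π) 1 f c n := hπ.factorIso.trans hσ
  have lt_iff {i j : ℕ} (hi : i < n) (hj : j < n) :
      toSeq π (i + 1) < toSeq π (j + 1) ↔ f (c + i) < f (c + j) := by
    simpa only [add_comm 1] using hπf i hi j hj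
  refine containsSquare_iff.2 ?_
  rcases lt_or_gt_of_ne (toSeq_ne_toSeq π (i := 0) (j := 1) (by omega) (by omega) (by omega))
    with hnew | hnew
  · exact ⟨0, 2, le_rfl, by omega,
      .two_of_lt hnew ((lt_iff (by omega) (by omega)).2 hasc)⟩
  · refine ⟨0, l + 1, by omega, by omega, ?_⟩
    have left : FactorIso (toSeq π) 1 f c l := hπf.subfactor le_rfl rfl (by omega)
    have right : FactorIso (toSeq π) (l + 1 + 1) f (c + l + 1) l :=
      hπf.subfactor (by omega) (by omega) (by omega)
    rw [zero_add]
    refine (left.trans (H.trans right.symm)).cons (fun i hi => ?_) (fun i hi => ?_)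
    · rw [zero_add, add_comm 1]
      refine (not_lt.1 (mt (lt_iff (i := 0) (by omega) (by omega)).1 ?_)).trans_lt hnew
      exact (hfirst i hi).not_gt
    · rw [add_right_comm (l + 1), lt_iff (by omega) (by omega)]
      simpa only [← add_assoc] using hsecond i hi

-- The mirror image of `IsLeftExtension.containsSquare`, with a descent in place of the ascent.
lemma IsRightExtension.containsSquare {α : Type*} [Preorder α] {f : ℕ → α} {c l m : ℕ}
    {σ : Fin (n + 3) → Fin (n + 3)} {π : Equiv.Perm (Fin (n + 3 + 1))}
    (hπ : IsRightExtension σ π) (hσ : FactorIso (toSeq σ) 0 f c (n + 3)) (hl : 1 ≤ l)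
    (hm : m + 2 * l = n + 2) (hdesc : f (c + (n + 1)) < f (c + n))
    (H : FactorIso f (c + m) f (c + m + l + 1) l)
    (hfirst : ∀ i < l, f (c + m + i) < f (c + m + l))
    (hsecond : ∀ i < l, f (c + m + l + 1 + i) ≤ f (c + (n + 2))) : ContainsSquare π := by
  have hπf : FactorIso (toSeq π) 0 f c (n + 3) := hπ.factorIso.trans hσ
  have lt_iff {i j : ℕ} (hi : i < n + 3) (hj : j < n + 3) :
      toSeq π i < toSeq π j ↔ f (c + i) < f (c + j) := by simpa only [zero_add] using hπf i hi j hj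
  refine containsSquare_iff.2 ?_
  rcases lt_or_gt_of_ne (toSeq_ne_toSeq π (i := n + 3) (j := n + 2) (by omega) (by omega)
    (by omega)) with hnew | hnew
  · exact ⟨n, 2, le_rfl, by omega, .two_of_gt ((lt_iff (by omega) (by omega)).2 hdesc) hnew⟩
  · refine ⟨m, l + 1, by omega, by omega, ?_⟩
    have left : FactorIso (toSeq π) m f (c + m) l :=
      hπf.subfactor (by omega) (by omega) (by omega)
    have right : FactorIso (toSeq π) (m + (l + 1)) f (c + m + l + 1) l :=
      hπf.subfactor (by omega) (by omega) (by omega)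
    refine (left.trans (H.trans right.symm)).snoc (fun i hi => ?_) (fun i hi => ?_)
    · rw [lt_iff (by omega) (by omega), ← add_assoc, ← add_assoc]
      exact hfirst i hi
    · rw [show m + (l + 1) + l = n + 3 by omega]
      refine (not_lt.1 (mt (lt_iff (by omega) (by omega)).1 ?_)).trans_lt hnew
      simpa only [← add_assoc] using (hsecond i hi).not_gt

end Permutations

section TieBreak

variable {α : Type*}

/-- The sequence `V` made injective by breaking ties between equal values by position. -/
def tieBreak (V : ℕ → α) (i : ℕ) : α ×ₗ ℕ :=
  toLex (V i, i)

lemma tieBreak_injective (V : ℕ → α) : Function.Injective (tieBreak V) :=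
  fun _ _ h => congrArg Prod.snd (toLex.injective h)

lemma tieBreak_lt_tieBreak [LT α] {V : ℕ → α} {i j : ℕ} :
    tieBreak V i < tieBreak V j ↔ V i < V j ∨ V i = V j ∧ i < j :=
  Prod.Lex.toLex_lt_toLex

lemma tieBreak_lt_of_lt [LT α] {V : ℕ → α} {i j : ℕ} (h : V i < V j) :
    tieBreak V i < tieBreak V j :=
  tieBreak_lt_tieBreak.2 (.inl h)

lemma FactorIso.tieBreak_of_eq [LT α] {V W : ℕ → α} {a l : ℕ}
    (h : ∀ i, a ≤ i → i < a + l → V i = W i) : FactorIso (tieBreak V) a (tieBreak W) a l := by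
  intro i hi j hj
  rw [tieBreak_lt_tieBreak, tieBreak_lt_tieBreak, h _ (by omega) (by omega),
    h _ (by omega) (by omega)]

end TieBreak

/-- The Toeplitz sequence with values `1, -1` alternating at the even positions and a half-size
copy of itself at the odd ones. Writing `i + 1 = 2 ^ v * m` with `m` odd, its value at `i` is
`± 2 ^ (-v)`, with the sign of the regular paperfolding sequence. -/
def toeplitz (i : ℕ) : ℚ :=
  if i % 4 = 0 then 1 else if i % 4 = 2 then -1 else toeplitz (i / 2) / 2
termination_by i
decreasing_by omega

section Toeplitz

variable {i : ℕ}

lemma toeplitz_of_mod_four_eq_zero (h : i % 4 = 0) : toeplitz i = 1 := by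
  rw [toeplitz, if_pos h]

lemma toeplitz_of_mod_four_eq_two (h : i % 4 = 2) : toeplitz i = -1 := by
  rw [toeplitz, if_neg (by omega), if_pos h]

lemma toeplitz_two_mul_add_one (i : ℕ) : toeplitz (2 * i + 1) = toeplitz i / 2 := by
  rw [toeplitz, if_neg (by omega), if_neg (by omega), show (2 * i + 1) / 2 = i by omega]

lemma toeplitz_of_mod_eight_eq_one (h : i % 8 = 1) : toeplitz i = 1 / 2 := by
  obtain ⟨r, rfl⟩ : ∃ r, i = 2 * r + 1 := ⟨i / 2, by omega⟩
  rw [toeplitz_two_mul_add_one, toeplitz_of_mod_four_eq_zero (by omega)]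

lemma toeplitz_of_mod_eight_eq_five (h : i % 8 = 5) : toeplitz i = -1 / 2 := by
  obtain ⟨r, rfl⟩ : ∃ r, i = 2 * r + 1 := ⟨i / 2, by omega⟩
  rw [toeplitz_two_mul_add_one, toeplitz_of_mod_four_eq_two (by omega)]

lemma abs_toeplitz_two_mul_add_one (i : ℕ) : |toeplitz (2 * i + 1)| = |toeplitz i| / 2 := by
  rw [toeplitz_two_mul_add_one, abs_div, abs_two]

lemma abs_toeplitz_le_one (i : ℕ) : |toeplitz i| ≤ 1 := by
  induction i using Nat.strong_induction_on with
  | _ i ih =>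
    obtain h | h | ⟨r, rfl⟩ : i % 4 = 0 ∨ i % 4 = 2 ∨ ∃ r, i = 2 * r + 1 := by
      rcases i.even_or_odd' with ⟨r, rfl | rfl⟩ <;> grind
    · simp [toeplitz_of_mod_four_eq_zero h]
    · simp [toeplitz_of_mod_four_eq_two h]
    · have := ih r (by omega)
      rw [abs_toeplitz_two_mul_add_one]
      linarith

lemma abs_toeplitz_le_half (h : i % 2 = 1) : |toeplitz i| ≤ 1 / 2 := by
  obtain ⟨r, rfl⟩ : ∃ r, i = 2 * r + 1 := ⟨i / 2, by omega⟩
  rw [abs_toeplitz_two_mul_add_one]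
  linarith [abs_toeplitz_le_one r]

lemma abs_toeplitz_le_quarter (h : i % 4 = 3) : |toeplitz i| ≤ 1 / 4 := by
  obtain ⟨r, rfl⟩ : ∃ r, i = 2 * r + 1 := ⟨i / 2, by omega⟩
  rw [abs_toeplitz_two_mul_add_one]
  linarith [abs_toeplitz_le_half (i := r) (by omega)]

lemma tieBreak_toeplitz_lt_succ_iff (i : ℕ) :
    tieBreak toeplitz i < tieBreak toeplitz (i + 1) ↔ 2 ≤ i % 4 := by
  have half {j : ℕ} (h : j % 2 = 1) := abs_le.1 (abs_toeplitz_le_half h)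
  obtain h | h | h | h : i % 4 = 0 ∨ i % 4 = 1 ∨ i % 4 = 2 ∨ i % 4 = 3 := by omega
  · refine iff_of_false (tieBreak_lt_of_lt ?_).asymm (by omega)
    linarith [toeplitz_of_mod_four_eq_zero h, half (j := i + 1) (by omega)]
  · refine iff_of_false (tieBreak_lt_of_lt ?_).asymm (by omega)
    linarith [toeplitz_of_mod_four_eq_two (i := i + 1) (by omega), half (j := i) (by omega)]
  · refine iff_of_true (tieBreak_lt_of_lt ?_) (by omega)
    linarith [toeplitz_of_mod_four_eq_two h, half (j := i + 1) (by omega)]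
  · refine iff_of_true (tieBreak_lt_of_lt ?_) (by omega)
    linarith [toeplitz_of_mod_four_eq_zero (i := i + 1) (by omega), half (j := i) (by omega)]

lemma tieBreak_toeplitz_two_mul_add_one_lt_iff (i j : ℕ) :
    tieBreak toeplitz (2 * i + 1) < tieBreak toeplitz (2 * j + 1) ↔
      tieBreak toeplitz i < tieBreak toeplitz j := by
  simp only [tieBreak_lt_tieBreak, toeplitz_two_mul_add_one,
    div_lt_div_iff_of_pos_right (two_pos : (0 : ℚ) < 2), div_left_inj' (two_ne_zero' ℚ),
    Nat.add_lt_add_iff_right, Nat.mul_lt_mul_left Nat.zero_lt_two]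

theorem not_factorIso_tieBreak_toeplitz (s : ℕ) {l : ℕ} (hl : 2 ≤ l) :
    ¬ FactorIso (tieBreak toeplitz) s (tieBreak toeplitz) (s + l) l :=
  FactorIso.not_of_selfSimilar tieBreak_toeplitz_lt_succ_iff
    tieBreak_toeplitz_two_mul_add_one_lt_iff hl

end Toeplitz

/-- The positions (counted from `1`, in length `8 * k + 3`) at which the Toeplitz sequence is
raised above all its peaks. -/
def IsCrest (k i : ℕ) : Prop :=
  i = 1 ∨ i = 9 ∨ i = 8 * k + 3

instance (k i : ℕ) : Decidable (IsCrest k i) :=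
  inferInstanceAs (Decidable (_ ∨ _ ∨ _))

/-- The heights whose relative order at the positions `1, …, 8 * k + 3` is the bicrucial
permutation: the Toeplitz sequence with its crests raised to `2`, the peak `8` raised to `3`, and
the entry `3` lowered to `0`. -/
def height (k i : ℕ) : ℚ :=
  if IsCrest k i then 2 else if i = 8 then 3 else if i = 3 then 0 else toeplitz i

/-- The heights of the bicrucial permutation with ties broken by position. -/
def key (k : ℕ) : ℕ → ℚ ×ₗ ℕ :=
  tieBreak (height k)

section Height

variable {k i : ℕ}

lemma height_of_isCrest (h : IsCrest k i) : height k i = 2 :=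
  if_pos h

lemma height_eight (k : ℕ) : height k 8 = 3 := by
  rw [height, if_neg (by grind [IsCrest]), if_pos rfl]

lemma height_three (h : ¬ IsCrest k 3) : height k 3 = 0 := by
  rw [height, if_neg h, if_neg (by omega), if_pos rfl]

lemma height_eq_toeplitz (h : ¬ IsCrest k i) (h8 : i ≠ 8) (h3 : i ≠ 3) :
    height k i = toeplitz i := by
  rw [height, if_neg h, if_neg h8, if_neg h3]

lemma not_isCrest_of_even (h : i % 2 = 0) : ¬ IsCrest k i := by
  unfold IsCrest
  omega

lemma height_of_mod_four_eq_two (h : i % 4 = 2) : height k i = -1 := by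
  rw [height_eq_toeplitz (not_isCrest_of_even (by omega)) (by omega) (by omega),
    toeplitz_of_mod_four_eq_two h]

lemma height_of_mod_four_eq_zero (h : i % 4 = 0) (h8 : i ≠ 8) : height k i = 1 := by
  rw [height_eq_toeplitz (not_isCrest_of_even (by omega)) h8 (by omega),
    toeplitz_of_mod_four_eq_zero h]

lemma one_le_height (h : i % 4 = 0) : 1 ≤ height k i := by
  by_cases h8 : i = 8
  · norm_num [h8, height_eight]
  · exact (height_of_mod_four_eq_zero h h8).ge

lemma half_le_height (h : i % 8 = 1) : 1 / 2 ≤ height k i := by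
  by_cases hc : IsCrest k i
  · norm_num [height_of_isCrest hc]
  · rw [height_eq_toeplitz hc (by omega) (by omega), toeplitz_of_mod_eight_eq_one h]

lemma height_of_mod_eight_eq_five (h : i % 8 = 5) : height k i = -1 / 2 := by
  rw [height_eq_toeplitz (by unfold IsCrest; omega) (by omega) (by omega),
    toeplitz_of_mod_eight_eq_five h]

lemma abs_height_le_quarter (h : i % 4 = 3) (hc : ¬ IsCrest k i) : |height k i| ≤ 1 / 4 := by
  by_cases h3 : i = 3
  · subst h3
    norm_num [height_three hc]
  · rw [height_eq_toeplitz hc (by omega) h3]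
    exact abs_toeplitz_le_quarter h

lemma abs_height_le_half (h : i % 2 = 1) (hc : ¬ IsCrest k i) : |height k i| ≤ 1 / 2 := by
  by_cases h3 : i = 3
  · subst h3
    norm_num [height_three hc]
  · rw [height_eq_toeplitz hc (by omega) h3]
    exact abs_toeplitz_le_half h

lemma neg_one_lt_height (h : i % 2 = 1) : -1 < height k i := by
  by_cases hc : IsCrest k i
  · norm_num [height_of_isCrest hc]
  · linarith [abs_le.1 (abs_height_le_half h hc)]

lemma height_le_one (hc : ¬ IsCrest k i) (h8 : i ≠ 8) : height k i ≤ 1 := by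
  by_cases h3 : i = 3
  · subst h3
    norm_num [height_three hc]
  · rw [height_eq_toeplitz hc h8 h3]
    exact (abs_le.1 (abs_toeplitz_le_one i)).2

end Height

section Key

variable {k i p q : ℕ}

lemma key_lt_key_of_isCrest (hp : ¬ IsCrest k p) (h8 : p ≠ 8) (hq : IsCrest k q) :
    key k p < key k q :=
  tieBreak_lt_of_lt (by linarith [height_of_isCrest hq, height_le_one hp h8])

lemma key_lt_key_eight (hp : p ≠ 8) : key k p < key k 8 := by
  refine tieBreak_lt_of_lt ?_
  rw [height_eight]
  by_cases hc : IsCrest k p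
  · norm_num [height_of_isCrest hc]
  · linarith [height_le_one hc hp]

lemma key_le_key_of_isCrest (hp : IsCrest k p → p = q) (h8 : p ≠ 8) (hq : IsCrest k q) :
    key k p ≤ key k q := by
  by_cases hc : IsCrest k p
  · rw [hp hc]
  · exact (key_lt_key_of_isCrest hc h8 hq).le

lemma key_lt_key_of_mod_four_eq_zero (hp : p % 4 ≠ 0) (hc : ¬ IsCrest k p) (hq : q % 4 = 0) :
    key k p < key k q := by
  refine tieBreak_lt_of_lt (lt_of_lt_of_le ?_ (one_le_height hq))
  by_cases hodd : p % 2 = 1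
  · linarith [abs_le.1 (abs_height_le_half hodd hc)]
  · norm_num [height_of_mod_four_eq_two (k := k) (i := p) (by omega)]

lemma key_succ_lt (hi : i % 4 = 1) : key k (i + 1) < key k i := by
  refine tieBreak_lt_of_lt ?_
  rw [height_of_mod_four_eq_two (by omega)]
  exact neg_one_lt_height (by omega)

lemma key_lt_succ_iff (hi : 0 < i) (hik : i < 8 * k + 3) :
    key k i < key k (i + 1) ↔ 2 ≤ i % 4 := by
  obtain h | h | h | h : i % 4 = 0 ∨ i % 4 = 1 ∨ i % 4 = 2 ∨ i % 4 = 3 := by omega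
  · refine iff_of_false (lt_asymm ?_) (by omega)
    rcases eq_or_ne i 8 with rfl | h8
    · exact key_lt_key_eight (by omega)
    · exact key_lt_key_of_mod_four_eq_zero (by omega) (by unfold IsCrest; omega) h
  · exact iff_of_false (key_succ_lt h).asymm (by omega)
  · refine iff_of_true (tieBreak_lt_of_lt ?_) (by omega)
    rw [height_of_mod_four_eq_two h]
    exact neg_one_lt_height (by omega)
  · refine iff_of_true ?_ (by omega)
    exact key_lt_key_of_mod_four_eq_zero (by omega) (by unfold IsCrest; omega) (by omega)

lemma key_lt_add_two_iff (hi : i % 2 = 1) (hik : i + 2 < 8 * k + 3) :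
    key k i < key k (i + 2) ↔ 4 < i % 8 := by
  have quarter {j : ℕ} (h : j % 4 = 3) (hj : j < 8 * k + 3) :=
    abs_le.1 (abs_height_le_quarter (k := k) h (by unfold IsCrest; omega))
  obtain h | h | h | h : i % 8 = 1 ∨ i % 8 = 3 ∨ i % 8 = 5 ∨ i % 8 = 7 := by omega
  · refine iff_of_false (tieBreak_lt_of_lt ?_).asymm (by omega)
    linarith [half_le_height (k := k) h, quarter (j := i + 2) (by omega) (by omega)]
  · refine iff_of_false (tieBreak_lt_of_lt ?_).asymm (by omega)
    linarith [height_of_mod_eight_eq_five (k := k) (i := i + 2) (by omega),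
      quarter (j := i) (by omega) (by omega)]
  · refine iff_of_true (tieBreak_lt_of_lt ?_) (by omega)
    linarith [height_of_mod_eight_eq_five (k := k) h, quarter (j := i + 2) (by omega) (by omega)]
  · refine iff_of_true (tieBreak_lt_of_lt ?_) (by omega)
    linarith [half_le_height (k := k) (i := i + 2) (by omega),
      quarter (j := i) (by omega) (by omega)]

end Key

section SquareFree

variable {k s l : ℕ}

lemma four_dvd_of_factorIso_key (hl : 2 ≤ l) (hs : 1 ≤ s) (hsl : s + 2 * l ≤ 8 * k + 4)
    (H : FactorIso (key k) s (key k) (s + l) l) : 4 ∣ l :=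
  H.four_dvd hl fun _ _ _ => key_lt_succ_iff (by omega) (by omega)

lemma not_factorIso_key_four (hsl : s + 8 ≤ 8 * k + 3) :
    ¬ FactorIso (key k) s (key k) (s + 4) 4 := by
  intro H
  obtain ⟨i, hi, hsi, his⟩ : ∃ i, i % 2 = 1 ∧ s ≤ i ∧ i ≤ s + 1 := ⟨s + (s + 1) % 2, by omega⟩
  have hshift := H.lt_iff_add (p := i) (q := i + 2) (by omega) (by omega) (by omega) (by omega)
  rw [add_right_comm, key_lt_add_two_iff hi (by omega),
    key_lt_add_two_iff (by omega) (by omega)] at hshift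
  omega

lemma not_factorIso_key_of_crest_left {p q : ℕ} (hs : s ≤ p ∧ s ≤ q)
    (hl : p < s + l ∧ q < s + l) (hp : p % 4 = 0) (h8 : p ≠ 8) (hq : IsCrest k q)
    (hql : ¬ IsCrest k (q + l)) (hdvd : 4 ∣ l) : ¬ FactorIso (key k) s (key k) (s + l) l := by
  have hodd : q % 2 = 1 := by
    unfold IsCrest at hq
    omega
  intro H
  refine (key_lt_key_of_mod_four_eq_zero (p := q + l) (q := p + l) (by omega) hql
    (by omega)).asymm ((H.lt_iff_add hs.1 hl.1 hs.2 hl.2).1 ?_)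
  exact key_lt_key_of_isCrest (not_isCrest_of_even (by omega)) h8 hq

lemma not_factorIso_key_of_crest_right {p q : ℕ} (hs : s ≤ p ∧ s ≤ q)
    (hl : p < s + l ∧ q < s + l) (hp : p % 4 = 0) (h8 : p + l ≠ 8) (hq : ¬ IsCrest k q)
    (hql : IsCrest k (q + l)) (hdvd : 4 ∣ l) : ¬ FactorIso (key k) s (key k) (s + l) l := by
  have hodd : (q + l) % 2 = 1 := by
    unfold IsCrest at hql
    omega
  intro H
  refine (key_lt_key_of_mod_four_eq_zero (p := q) (q := p) (by omega) hq hp).asymm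
    ((H.lt_iff_add hs.1 hl.1 hs.2 hl.2).2 ?_)
  exact key_lt_key_of_isCrest (not_isCrest_of_even (by omega)) h8 hql

lemma not_factorIso_key_of_end (hk : 2 ≤ k) (hdvd : 4 ∣ l) (hl : 0 < l)
    (hsl : s + 2 * l = 8 * k + 4) : ¬ FactorIso (key k) s (key k) (s + l) l := by
  refine not_factorIso_key_of_crest_right (p := s + l - 4) (q := s + l - 1) (by omega) (by omega)
    (by omega) (by omega) ?_ ?_ hdvd <;> unfold IsCrest <;> omega

lemma not_factorIso_key_of_middle (hl : 2 ≤ l) (hs : 9 < s) (hsl : s + 2 * l ≤ 8 * k + 3) :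
    ¬ FactorIso (key k) s (key k) (s + l) l := by
  have agree {a : ℕ} (ha : 9 < a) (hal : a + l ≤ 8 * k + 3) :
      FactorIso (key k) a (tieBreak toeplitz) a l :=
    .tieBreak_of_eq fun i _ _ =>
      height_eq_toeplitz (by unfold IsCrest; omega) (by omega) (by omega)
  exact fun H => not_factorIso_tieBreak_toeplitz s hl <|
    (agree hs (by omega)).symm.trans (H.trans (agree (by omega) (by omega)))

lemma not_factorIso_key_one_eight : ¬ FactorIso (key k) 1 (key k) (1 + 8) 8 := by
  intro H
  have h18 : key k 1 < key k 8 := key_lt_key_eight (by omega)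
  have h16 : key k 16 < key k 9 :=
    key_lt_key_of_isCrest (not_isCrest_of_even (by omega)) (by omega) (.inr (.inl rfl))
  exact h16.asymm ((H.lt_iff_add (by omega) (by omega) (by omega) (by omega)).1 h18)

lemma not_factorIso_key_of_start (hdvd : 4 ∣ l) (hl : 8 ≤ l) (hs : 1 ≤ s) (hs' : s ≤ 9) :
    ¬ FactorIso (key k) s (key k) (s + l) l := by
  have crest_nine : IsCrest k 9 := .inr (.inl rfl)
  have not_crest : ¬ IsCrest k (9 + l) := by
    unfold IsCrest
    omega
  rcases le_or_gt 13 (s + l) with h13 | h13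
  · exact not_factorIso_key_of_crest_left (p := 12) (q := 9) (by omega) (by omega) (by omega)
      (by omega) crest_nine not_crest hdvd
  obtain rfl : l = 8 := by omega
  rcases hs.eq_or_lt with rfl | hs
  · exact not_factorIso_key_one_eight
  · exact not_factorIso_key_of_crest_left (p := 4) (q := 9) (by omega) (by omega) (by omega)
      (by omega) crest_nine not_crest hdvd

theorem not_factorIso_key (hk : 2 ≤ k) (hl : 2 ≤ l) (hs : 1 ≤ s) (hsl : s + 2 * l ≤ 8 * k + 4) :
    ¬ FactorIso (key k) s (key k) (s + l) l := by
  intro H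
  have hdvd : 4 ∣ l := four_dvd_of_factorIso_key hl hs hsl H
  rcases hsl.eq_or_lt with hend | hend
  · exact not_factorIso_key_of_end hk hdvd (by omega) hend H
  rcases eq_or_ne l 4 with rfl | h4
  · exact not_factorIso_key_four (by omega) H
  rcases le_or_gt s 9 with hs9 | hs9
  · exact not_factorIso_key_of_start hdvd (by omega) hs hs9 H
  · exact not_factorIso_key_of_middle hl hs9 (by omega) H

end SquareFree

section Crucial

variable {k : ℕ}

lemma factorIso_key_two_ten (hk : 2 ≤ k) : FactorIso (key k) 2 (key k) 10 6 := by
  have height_three : height k 3 = 0 := height_three (by unfold IsCrest; omega)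
  have height_seven : height k 7 = 1 / 8 := by
    rw [height_eq_toeplitz (by unfold IsCrest; omega) (by omega) (by omega),
      toeplitz_two_mul_add_one 3, toeplitz_two_mul_add_one 1,
      toeplitz_of_mod_eight_eq_one (by omega)]
    norm_num
  have height_eleven : height k 11 = -1 / 4 := by
    rw [height_eq_toeplitz (by unfold IsCrest; omega) (by omega) (by omega),
      toeplitz_two_mul_add_one 5, toeplitz_of_mod_eight_eq_five (by omega)]
    norm_num
  have height_fifteen : height k 15 = 1 / 16 := by
    rw [height_eq_toeplitz (by unfold IsCrest; omega) (by omega) (by omega),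
      toeplitz_two_mul_add_one 7, toeplitz_two_mul_add_one 3, toeplitz_two_mul_add_one 1,
      toeplitz_of_mod_eight_eq_one (by omega)]
    norm_num
  intro i hi j hj
  rw [key, tieBreak_lt_tieBreak, tieBreak_lt_tieBreak]
  interval_cases i <;> interval_cases j <;>
    norm_num [height_three, height_seven, height_eleven, height_fifteen,
      height_of_mod_four_eq_two, height_of_mod_four_eq_zero, height_of_mod_eight_eq_five]

lemma factorIso_key_start (hk : 2 ≤ k) : FactorIso (key k) 1 (key k) 9 7 := by
  refine (factorIso_key_two_ten hk).cons (fun i hi => ?_) (fun i hi => ?_)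
  · exact key_lt_key_of_isCrest (by unfold IsCrest; omega) (by omega) (.inl rfl)
  · exact key_lt_key_of_isCrest (by unfold IsCrest; omega) (by omega) (.inr (.inl rfl))

lemma factorIso_key_end (hk : 2 ≤ k) {i : ℕ} (hi : i + 6 = 8 * k + 3) :
    FactorIso (key k) i (key k) (i + 4) 3 := by
  have descents : FactorIso (key k) i (key k) (i + 4) 2 :=
    .two_of_gt (key_succ_lt (by omega)) (key_succ_lt (by omega))
  refine descents.snoc (fun j hj => ?_) (fun j hj => ?_)
  · interval_cases j
    · exact (key_lt_add_two_iff (by omega) (by omega)).2 (by omega)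
    · exact (key_lt_succ_iff (by omega) (by omega)).2 (by omega)
  · exact key_lt_key_of_isCrest (by unfold IsCrest; omega) (by omega) (.inr (.inr hi))

lemma leftCrucial_of_factorIso_key (hk : 2 ≤ k) {σ : Equiv.Perm (Fin (8 * k + 3))}
    (hσ : FactorIso (toSeq σ) 0 (key k) 1 (8 * k + 3)) : LeftCrucial σ := by
  refine ⟨squareFree_of_factorIso hσ fun s l hl hs hsl =>
    not_factorIso_key hk hl hs (by omega), fun π hπ => ?_⟩
  have ascent : key k 2 < key k 3 := (key_lt_succ_iff (by omega) (by omega)).2 (by omega)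
  refine hπ.containsSquare hσ (l := 7) (by omega) (by omega) ascent (factorIso_key_start hk)
    (fun i hi => ?_) (fun i hi => key_lt_key_eight (by omega))
  exact key_le_key_of_isCrest (by unfold IsCrest; omega) (by omega) (.inl rfl)

lemma rightCrucial_of_factorIso_key (hk : 2 ≤ k) {σ : Equiv.Perm (Fin (8 * k + 3))}
    (hσ : FactorIso (toSeq σ) 0 (key k) 1 (8 * k + 3)) : RightCrucial σ := by
  refine ⟨squareFree_of_factorIso hσ fun s l hl hs hsl =>
    not_factorIso_key hk hl hs (by omega), fun π hπ => ?_⟩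
  obtain ⟨m, hm⟩ : ∃ m, m + 2 * 3 = 8 * k + 2 := ⟨8 * k - 4, by omega⟩
  have descent : key k (1 + (8 * k + 1)) < key k (1 + 8 * k) := by
    simpa only [← add_assoc] using key_succ_lt (k := k) (i := 1 + 8 * k) (by omega)
  refine hπ.containsSquare hσ (l := 3) (by omega) hm descent (factorIso_key_end hk (by omega))
    (fun i hi => ?_) (fun i hi => ?_)
  · exact key_lt_key_of_mod_four_eq_zero (by omega) (by unfold IsCrest; omega) (by omega)
  · exact key_le_key_of_isCrest (by unfold IsCrest; omega) (by omega) (.inr (.inr (by omega)))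

end Crucial

theorem bicrucial_exists_8k_add_3_general (k : ℕ) (hk : 2 ≤ k) :
    ∃ σ : Equiv.Perm (Fin (8 * k + 3)), Bicrucial σ := by
  obtain ⟨σ, hσ⟩ := exists_perm_factorIso (tieBreak_injective (height k)) (8 * k + 3) 1
  exact ⟨σ, leftCrucial_of_factorIso_key hk hσ, rightCrucial_of_factorIso_key hk hσ⟩

/-- For every integer `k ≥ 3`, there exists a bicrucial permutation of length `8k + 3`. -/
theorem bicrucial_exists_8k_add_3 (k : ℕ) (hk : 3 ≤ k) :
    ∃ σ : Equiv.Perm (Fin (8 * k + 3)), Bicrucial σ :=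
  bicrucial_exists_8k_add_3_general k (by omega)
end

section
/- For every even integer n ≥ 48, there exists a bicrucial permutation of length n. -/
/-!
The permutation is a fixed head of 37 entries, a middle part of `8 * j` entries and one of finitely
many tails. Its steps go up, up, down, down, repeatedly, so a square has half-length `ℓ` divisible
by four. If `ℓ` is an odd multiple of `2 ^ (b + 1)`, then in the middle part the translation by `ℓ`
reverses the order of consecutive multiples of `2 ^ b`, so there is no square there. Factors
reaching far into the head, and short factors that meet the tail, are checked one by one: coarsened
to depth `2`, the middle part is periodic, so finitely many `j` suffice. A long factor that meets
the tail fails to be a square at the step into the tail.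

Head and tail are chosen so that any further entry next to them completes a square of half-length
2, 4, 8 or 16, whatever its relative value.
-/

namespace Bicrucial

section Squares

variable {α β : Type*}

/-- The factor of `f` of length `2 * ℓ` starting at `k` is a square. This is `HasSquareAt` for
sequences in any ordered type, with absolute positions and without the length conditions. -/
def IsSquareAt [LT α] (f : ℕ → α) (k ℓ : ℕ) : Prop :=
  ∀ a ∈ Finset.Ico k (k + ℓ), ∀ b ∈ Finset.Ico k (k + ℓ), (f a < f b ↔ f (a + ℓ) < f (b + ℓ))

/-- Some pair of positions in the first half of the factor of `f` of length `2 * ℓ` starting at `k`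
is strictly ordered one way, while the corresponding pair in the second half is strictly ordered
the other way. Unlike not being a square, this is inherited by every refinement of the order. -/
def HasClashAt [LT α] (f : ℕ → α) (k ℓ : ℕ) : Prop :=
  ∃ a ∈ Finset.Ico k (k + ℓ), ∃ b ∈ Finset.Ico k (k + ℓ), f a < f b ∧ f (b + ℓ) < f (a + ℓ)

/-- The steps of `f` on `{0, …, n - 1}` go up, up, down, down, repeatedly. -/
def IsZigzag [LT α] (f : ℕ → α) (n : ℕ) : Prop :=
  ∀ w < n - 1, (w % 4 < 2 → f w < f (w + 1)) ∧ (2 ≤ w % 4 → f (w + 1) < f w)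

instance (f : ℕ → ℕ) (k ℓ : ℕ) : Decidable (IsSquareAt f k ℓ) :=
  inferInstanceAs (Decidable (∀ a ∈ _, _))

instance (f : ℕ → ℕ) (k ℓ : ℕ) : Decidable (HasClashAt f k ℓ) :=
  inferInstanceAs (Decidable (∃ a ∈ _, _))

instance (f : ℕ → ℕ) (n : ℕ) : Decidable (IsZigzag f n) :=
  inferInstanceAs (Decidable (∀ w < _, _))

lemma HasClashAt.not_isSquareAt [Preorder α] {f : ℕ → α} {k ℓ : ℕ} (h : HasClashAt f k ℓ) :
    ¬ IsSquareAt f k ℓ := by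
  obtain ⟨a, ha, b, hb, hab, hba⟩ := h
  exact fun hsq => lt_asymm ((hsq a ha b hb).1 hab) hba

lemma HasClashAt.refine [LT α] [LT β] {f : ℕ → α} {g : ℕ → β} {k ℓ : ℕ} (h : HasClashAt f k ℓ)
    (hfg : ∀ a < k + 2 * ℓ, ∀ b < k + 2 * ℓ, f a < f b → g a < g b) : HasClashAt g k ℓ := by
  obtain ⟨a, ha, b, hb, hab, hba⟩ := h
  have ha' := Finset.mem_Ico.1 ha
  have hb' := Finset.mem_Ico.1 hb
  exact ⟨a, ha, b, hb, hfg a (by omega) b (by omega) hab, hfg _ (by omega) _ (by omega) hba⟩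

lemma HasClashAt.shift [LT α] {f g : ℕ → α} {k ℓ : ℕ} (h : HasClashAt f k ℓ) (c : ℕ)
    (hfg : ∀ a ∈ Finset.Ico k (k + 2 * ℓ), f a = g (c + a)) : HasClashAt g (c + k) ℓ := by
  obtain ⟨a, ha, b, hb, hab, hba⟩ := h
  simp only [Finset.mem_Ico] at ha hb hfg
  refine ⟨c + a, by simp; omega, c + b, by simp; omega, ?_, ?_⟩
  · rwa [← hfg a (by omega), ← hfg b (by omega)]
  · rwa [add_assoc, add_assoc, ← hfg (b + ℓ) (by omega), ← hfg (a + ℓ) (by omega)]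

lemma IsSquareAt.shift [LT α] [LT β] {f : ℕ → α} {g : ℕ → β} {k ℓ : ℕ} (h : IsSquareAt f k ℓ)
    (c : ℕ) (hfg : ∀ a < k + 2 * ℓ, ∀ b < k + 2 * ℓ, (f a < f b ↔ g (c + a) < g (c + b))) :
    IsSquareAt g (c + k) ℓ := by
  intro a ha b hb
  simp only [Finset.mem_Ico] at ha hb
  obtain ⟨a, rfl⟩ := Nat.exists_eq_add_of_le (by omega : c ≤ a)
  obtain ⟨b, rfl⟩ := Nat.exists_eq_add_of_le (by omega : c ≤ b)
  rw [add_assoc, add_assoc, ← hfg a (by omega) b (by omega),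
    ← hfg (a + ℓ) (by omega) (b + ℓ) (by omega)]
  exact h a (by simp; omega) b (by simp; omega)

lemma hasSquareAt_iff [LT α] {n k ℓ : ℕ} {σ : Fin n → Fin n} {f : ℕ → α}
    (hσ : ∀ i j, σ i < σ j ↔ f i < f j) :
    HasSquareAt σ k ℓ ↔ 2 ≤ ℓ ∧ k + 2 * ℓ ≤ n ∧ IsSquareAt f k ℓ := by
  simp only [HasSquareAt, hσ, exists_prop]
  refine and_congr_right fun _ => and_congr_right fun _ =>
    ⟨fun h a ha b hb => ?_, fun h i j hi hj => ?_⟩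
  · simp only [Finset.mem_Ico] at ha hb
    obtain ⟨i, rfl⟩ := Nat.exists_eq_add_of_le ha.1
    obtain ⟨j, rfl⟩ := Nat.exists_eq_add_of_le hb.1
    rw [add_right_comm, add_right_comm k j]
    exact h i j (by omega) (by omega)
  · rw [add_right_comm, add_right_comm k ℓ j]
    exact h (k + i) (by simp [hi]) (k + j) (by simp [hj])

lemma IsZigzag.lt_succ_iff [Preorder α] {f : ℕ → α} {n w : ℕ} (h : IsZigzag f n) (hw : w + 1 < n) :
    f w < f (w + 1) ↔ w % 4 < 2 := by
  refine ⟨fun hlt => ?_, (h w (by omega)).1⟩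
  by_contra hmod
  exact lt_asymm hlt ((h w (by omega)).2 (by omega))

lemma IsZigzag.four_dvd [Preorder α] {f : ℕ → α} {n k ℓ : ℕ} (h : IsZigzag f n) (hℓ : 2 ≤ ℓ)
    (hn : k + 2 * ℓ ≤ n) (hsq : IsSquareAt f k ℓ) : 4 ∣ ℓ := by
  have same_step : ∀ a, k ≤ a → a + 1 < k + ℓ → (a % 4 < 2 ↔ (a + ℓ) % 4 < 2) := fun a ha ha' => by
    rw [← h.lt_succ_iff (by omega), ← h.lt_succ_iff (by omega), ← add_right_comm]
    exact hsq a (by simp; omega) (a + 1) (by simp; omega)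
  have first_step := same_step k le_rfl (by omega)
  obtain rfl | hℓ3 := hℓ.eq_or_lt
  · omega
  · have second_step := same_step (k + 1) (by omega) (by omega)
    omega

end Squares

section Extensions

/-- The order type of `s` with the entry at position `e` replaced by one placed just below the
entries of value at least `c`. Doubling makes room for the new entry. -/
def insertAt (s : ℕ → ℕ) (e c i : ℕ) : ℕ :=
  if i = e then 2 * c else 2 * s i + 1

/-- Whatever the relative value of the entry at position `e`, the sequence `s` restricted to
`{0, …, L}` has a square. To keep this quickly decidable, only prefixes and suffixes of small
lengths are considered. -/
def ForcesSquare (s : ℕ → ℕ) (e L : ℕ) : Prop :=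
  ∀ c ≤ (Finset.range (L + 1)).sup s + 1, ∃ ℓ ∈ [2, 4, 8, 16], ∃ k ∈ [0, L + 1 - 2 * ℓ],
    k + 2 * ℓ ≤ L + 1 ∧ IsSquareAt (insertAt s e c) k ℓ

instance (s : ℕ → ℕ) (e L : ℕ) : Decidable (ForcesSquare s e L) :=
  inferInstanceAs (Decidable (∀ c ≤ _, _))

lemma exists_insertAt_lt_iff {α : Type*} [LinearOrder α] {g : ℕ → α} {s : ℕ → ℕ} {I : Finset ℕ}
    {e : ℕ} (hg : ∀ a ∈ I, ∀ b ∈ I, a ≠ e → b ≠ e → (g a < g b ↔ s a < s b))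
    (hne : ∀ a ∈ I, a ≠ e → g a ≠ g e) :
    ∃ c ≤ I.sup s + 1, ∀ a ∈ I, ∀ b ∈ I, (g a < g b ↔ insertAt s e c a < insertAt s e c b) := by
  set below := I.filter (fun b => b ≠ e ∧ g b < g e) with below_def
  have lt_cut : ∀ a ∈ I, a ≠ e → (s a < below.sup (s · + 1) ↔ g a < g e) := fun a ha hae => by
    simp only [Finset.lt_sup_iff, below_def, Finset.mem_filter, Nat.lt_succ_iff]
    constructor
    · rintro ⟨b, ⟨hb, hbe, hlt⟩, hab⟩
      exact (not_lt.1 ((hg b hb a ha hbe hae).not.2 hab.not_gt)).trans_lt hlt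
    · exact fun hlt => ⟨a, ⟨ha, hae, hlt⟩, le_rfl⟩
  refine ⟨below.sup (s · + 1), Finset.sup_le fun b hb => ?_, fun a ha b hb => ?_⟩
  · exact Nat.succ_le_succ (Finset.le_sup (Finset.mem_filter.1 hb).1)
  · unfold insertAt
    split_ifs with hae hbe hbe
    · simp [hae, hbe]
    · have := lt_cut b hb hbe
      rw [hae, ← not_le, (hne b hb hbe).le_iff_lt, ← this]
      omega
    · rw [hbe, ← lt_cut a ha hae]
      omega
    · rw [hg a ha b hb hae hbe]
      omega

lemma containsSquare_of_forcesSquare {n p e L : ℕ} {s : ℕ → ℕ} (π : Equiv.Perm (Fin n))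
    (he : e ≤ L) (hpL : p + L < n)
    (hπ : ∀ a b (ha : a ≤ L) (hb : b ≤ L), a ≠ e → b ≠ e →
      (π ⟨p + a, by omega⟩ < π ⟨p + b, by omega⟩ ↔ s a < s b))
    (hs : ForcesSquare s e L) : ContainsSquare π := by
  set g : ℕ → ℕ := Function.extend Fin.val (fun i => (π i : ℕ)) 0
  have g_apply : ∀ i : Fin n, g i = π i := Fin.val_injective.extend_apply _ _
  have g_add : ∀ a (ha : a ≤ L), g (p + a) = π ⟨p + a, by omega⟩ := fun a _ => g_apply ⟨p + a, _⟩
  obtain ⟨c, hc, hcut⟩ := exists_insertAt_lt_iff (g := fun a => g (p + a)) (s := s)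
    (I := Finset.range (L + 1)) (e := e)
    (fun a ha b hb hae hbe => by
      rw [Finset.mem_range_succ_iff] at ha hb
      rw [g_add a ha, g_add b hb]
      exact hπ a b ha hb hae hbe)
    (fun a ha hae heq => by
      rw [Finset.mem_range_succ_iff] at ha
      rw [g_add a ha, g_add e he, Fin.val_inj, π.injective.eq_iff, Fin.mk.injEq] at heq
      omega)
  obtain ⟨ℓ, hℓ, k, -, hkℓ, hsq⟩ := hs c hc
  have two_le : ∀ m ∈ [2, 4, 8, 16], 2 ≤ m := by decide
  refine ⟨p + k, ℓ, (hasSquareAt_iff (f := g) fun i j => ?_).2 ⟨two_le ℓ hℓ, by omega, ?_⟩⟩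
  · rw [g_apply, g_apply, Fin.lt_def]
  · exact hsq.shift p fun a ha b hb =>
      (hcut a (by simp; omega) b (by simp; omega)).symm

lemma exists_perm_lt_iff {α : Type*} [LinearOrder α] {n : ℕ} {f : Fin n → α}
    (hf : Function.Injective f) : ∃ σ : Equiv.Perm (Fin n), ∀ i j, σ i < σ j ↔ f i < f j := by
  have sorted : StrictMono (f ∘ Tuple.sort f) :=
    (Tuple.monotone_sort f).strictMono_of_injective (hf.comp (Tuple.sort f).injective)
  refine ⟨(Tuple.sort f)⁻¹, fun i j => ?_⟩
  rw [← sorted.lt_iff_lt]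
  simp

end Extensions

section Level

/-- The middle part of the permutation, to depth `K`. The numbers `1` modulo `4` lie on top, those
`3` modulo `4` at the bottom, and the even ones in between, arranged recursively like their halves;
at depth `0` no numbers are distinguished. -/
def level : ℕ → ℕ → ℕ
  | 0, _ => 0
  | K + 1, m => if m % 4 = 1 then 2 * K + 2 else if m % 4 = 3 then 0 else level K (m / 2) + 1

lemma level_succ_of_mod_eq_one {m : ℕ} (K : ℕ) (h : m % 4 = 1) : level (K + 1) m = 2 * K + 2 := by
  simp [level, h]

lemma level_succ_of_mod_eq_three {m : ℕ} (K : ℕ) (h : m % 4 = 3) : level (K + 1) m = 0 := by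
  simp [level, h]

lemma level_succ_two_mul (K m : ℕ) : level (K + 1) (2 * m) = level K m + 1 := by
  rw [level, if_neg (by omega), if_neg (by omega), Nat.mul_div_cancel_left m two_pos]

lemma level_le (K m : ℕ) : level K m ≤ 2 * K := by
  induction K generalizing m with
  | zero => rfl
  | succ K ih =>
    have := ih (m / 2)
    rw [level]
    split_ifs <;> omega

lemma level_succ_mem_of_even {m : ℕ} (K : ℕ) (h : m % 2 = 0) :
    0 < level (K + 1) m ∧ level (K + 1) m < 2 * K + 2 := by
  obtain ⟨m, rfl⟩ := Nat.dvd_of_mod_eq_zero h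
  rw [level_succ_two_mul]
  have := level_le K m
  omega

lemma level_lt_level_of_even_of_mod_eq_one {u v : ℕ} (K : ℕ) (hu : u % 2 = 0) (hv : v % 4 = 1) :
    level (K + 1) u < level (K + 1) v := by
  rw [level_succ_of_mod_eq_one K hv]
  exact (level_succ_mem_of_even K hu).2

lemma level_lt_level_of_mod_eq_three_of_even {u v : ℕ} (K : ℕ) (hu : u % 4 = 3) (hv : v % 2 = 0) :
    level (K + 1) u < level (K + 1) v := by
  rw [level_succ_of_mod_eq_three K hu]
  exact (level_succ_mem_of_even K hv).1

lemma level_lt_level_succ {u : ℕ} (K : ℕ) (h : u % 4 = 0 ∨ u % 4 = 3) :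
    level (K + 1) u < level (K + 1) (u + 1) := by
  obtain h | h := h
  · exact level_lt_level_of_even_of_mod_eq_one K (by omega) (by omega)
  · exact level_lt_level_of_mod_eq_three_of_even K h (by omega)

lemma level_succ_lt_level {u : ℕ} (K : ℕ) (h : u % 4 = 1 ∨ u % 4 = 2) :
    level (K + 1) (u + 1) < level (K + 1) u := by
  obtain h | h := h
  · exact level_lt_level_of_even_of_mod_eq_one K (by omega) h
  · exact level_lt_level_of_mod_eq_three_of_even K (by omega) (by omega)

lemma level_add_two_pow_mul (K m q : ℕ) : level K (m + 2 ^ (K + 1) * q) = level K m := by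
  induction K generalizing m with
  | zero => rfl
  | succ K ih =>
    have mod_four : (m + 2 ^ (K + 1 + 1) * q) % 4 = m % 4 := by
      rw [show m + 2 ^ (K + 1 + 1) * q = m + 4 * (2 ^ K * q) by ring, Nat.add_mul_mod_self_left]
    have half : (m + 2 ^ (K + 1 + 1) * q) / 2 = m / 2 + 2 ^ (K + 1) * q := by
      rw [show m + 2 ^ (K + 1 + 1) * q = m + 2 * (2 ^ (K + 1) * q) by ring,
        Nat.add_mul_div_left _ _ two_pos]
    simp only [level, mod_four, half, ih]

lemma level_two_pow_mul (K b m : ℕ) : level (K + b) (2 ^ b * m) = level K m + b := by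
  induction b with
  | zero => simp
  | succ b ih => rw [pow_succ', mul_assoc, ← add_assoc, level_succ_two_mul, ih, add_assoc]

lemma level_two_pow_mul_lt {K b u v : ℕ} (huv : ∀ K, level (K + 1) u < level (K + 1) v)
    (hb : b < K) : level K (2 ^ b * u) < level K (2 ^ b * v) := by
  obtain ⟨K, rfl⟩ := Nat.exists_eq_add_of_lt hb
  rw [show b + K + 1 = K + 1 + b by ring, level_two_pow_mul, level_two_pow_mul]
  exact Nat.add_lt_add_right (huv K) b

lemma level_two_pow_mul_le {b u v : ℕ} (K : ℕ) (huv : ∀ K, level (K + 1) u < level (K + 1) v) :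
    level K (2 ^ b * u) ≤ level K (2 ^ b * v) := by
  obtain hb | hb := lt_or_ge b K
  · exact (level_two_pow_mul_lt huv hb).le
  · obtain ⟨b, rfl⟩ := Nat.exists_eq_add_of_le hb
    have level_eq : ∀ m, level K (2 ^ (K + b) * m) = K := fun m => by
      simpa [level, pow_add, mul_assoc] using level_two_pow_mul 0 K (2 ^ b * m)
    rw [level_eq, level_eq]

end Level

section Construction

/-- The first 37 entries of every permutation constructed here. -/
def head : List ℕ :=
  [33, 35, 36, 12, 11, 27, 34, 31, 26, 30, 32, 20, 13, 25, 29, 28, 19, 23, 24, 1, 0, 14, 21, 17, 9,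
    16, 18, 7, 2, 8, 15, 10, 5, 6, 22, 4, 3]

/-- `head` followed by an infinite middle part, truncated to depth `2` and placed above `head`. -/
def body (w : ℕ) : ℕ :=
  if w < 37 then head.getD w 0 else 50 + 10 * level 2 (w - 37)

/-- `head`, followed by `8 * j` middle entries and by `T`, with ties in the middle part. -/
def code (T : List ℕ) (j w : ℕ) : ℕ :=
  if w < 37 + 8 * j then body w else T.getD (w - (37 + 8 * j)) 0

/-- The sequence whose order type is the permutation: `code`, whose ties in the middle part are
broken by a deeper `level`, and then by position. -/
def key (T : List ℕ) (j w : ℕ) : ℕ ×ₗ ℕ ×ₗ ℕ :=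
  toLex (code T j w, toLex (level (8 * j) (w - 37), w))

/-- The properties of the tail `T` that do not depend on the length of the middle part. The first
entry of `T` exceeds `90`, the maximum of `body`. -/
structure IsCrucialTail (T : List ℕ) : Prop where
  length_le : T.length ≤ 17
  nodup : T.Nodup
  zigzag : IsZigzag (fun i => (90 :: T).getD i 0) (T.length + 1)
  forcesSquare : ForcesSquare (fun i => T.getD i 0) T.length T.length

/-- The short factors that meet the tail `T` are no squares, because of clashes in `code`. -/
def TailClashes (T : List ℕ) (j : ℕ) : Prop :=
  ∀ ℓ ∈ [4, 8, 12, 16, 20], ∀ k < 37 + 8 * j + T.length, 37 + 8 * j < k + 2 * ℓ →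
    k + 2 * ℓ ≤ 37 + 8 * j + T.length → HasClashAt (code T j) k ℓ

instance (T : List ℕ) (j : ℕ) : Decidable (TailClashes T j) :=
  inferInstanceAs (Decidable (∀ ℓ ∈ _, _))

lemma forcesSquare_head : ForcesSquare (fun i => head.getD (i - 1) 0) 0 37 := by
  decide +kernel

lemma body_hasClashAt : ∀ k < 37, ∀ a < 19, 0 < a → 2 * k + 4 * a ≤ 74 →
    HasClashAt body k (4 * a) := by
  decide +kernel

lemma body_add (m : ℕ) : body (37 + m) = 50 + 10 * level 2 m := by
  simp [body]

lemma body_add_lt_body_add {u v : ℕ} (huv : ∀ K, level (K + 1) u < level (K + 1) v) :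
    body (37 + u) < body (37 + v) := by
  rw [body_add, body_add]
  have : level 2 u < level 2 v := huv 1
  omega

lemma body_le (w : ℕ) : body w ≤ 90 := by
  obtain hw | hw := lt_or_ge w 37
  · exact (by decide +kernel : ∀ w < 37, body w ≤ 90) w hw
  · obtain ⟨m, rfl⟩ := Nat.exists_eq_add_of_le hw
    rw [body_add]
    have := level_le 2 m
    omega

lemma isZigzag_body (n : ℕ) : IsZigzag body n := by
  intro w _
  obtain hw | hw := lt_or_ge w 37
  · exact (by decide +kernel : IsZigzag body 38) w (by omega)
  · obtain ⟨m, rfl⟩ := Nat.exists_eq_add_of_le hw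
    exact ⟨fun _ => body_add_lt_body_add fun K => level_lt_level_succ K (by omega),
      fun _ => body_add_lt_body_add fun K => level_succ_lt_level K (by omega)⟩

lemma body_lt_body_sub_three {w : ℕ} (hmod : w % 4 = 1) (hw : 3 ≤ w) (hne : w ≠ 37) :
    body w < body (w - 3) := by
  obtain hlt | hlt := lt_or_ge w 40
  · exact (by decide +kernel : ∀ w < 40, w % 4 = 1 → 3 ≤ w → w ≠ 37 → body w < body (w - 3))
      w hlt hmod hw hne
  · obtain ⟨m, rfl⟩ := Nat.exists_eq_add_of_le hlt
    rw [show 40 + m - 3 = 37 + m by omega, show 40 + m = 37 + (m + 3) by omega]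
    exact body_add_lt_body_add fun K =>
      level_lt_level_of_even_of_mod_eq_one K (by omega) (by omega)

variable {T : List ℕ} {j : ℕ}

lemma code_of_lt {w : ℕ} (hw : w < 37 + 8 * j) : code T j w = body w :=
  if_pos hw

lemma code_tail (T : List ℕ) (j i : ℕ) : code T j (37 + 8 * j + i) = T.getD i 0 := by
  simp [code]

lemma code_shift {w : ℕ} (q : ℕ) (hw : 37 ≤ w) : code T j w = code T (j + q) (8 * q + w) := by
  obtain ⟨m, rfl⟩ := Nat.exists_eq_add_of_le hw
  obtain hm | hm := lt_or_ge m (8 * j)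
  · have periodic : level 2 (m + 8 * q) = level 2 m := level_add_two_pow_mul 2 m q
    rw [code_of_lt (by omega), code_of_lt (by omega),
      show 8 * q + (37 + m) = 37 + (m + 8 * q) by ring, body_add, body_add, periodic]
  · obtain ⟨i, rfl⟩ := Nat.exists_eq_add_of_le hm
    rw [← add_assoc, code_tail, show 8 * q + (37 + 8 * j + i) = 37 + 8 * (j + q) + i by ring,
      code_tail]

lemma IsCrucialTail.ninety_lt_getD_zero (hT : IsCrucialTail T) (hlength : 0 < T.length) :
    90 < T.getD 0 0 :=
  (hT.zigzag 0 (by omega)).1 (by decide)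

lemma isZigzag_code (hT : IsCrucialTail T) (j : ℕ) :
    IsZigzag (code T j) (37 + 8 * j + T.length) := by
  intro w hw
  obtain hlt | heq | hgt := lt_trichotomy (w + 1) (37 + 8 * j)
  · rw [code_of_lt (by omega), code_of_lt hlt]
    exact isZigzag_body (w + 2) w (by omega)
  · have first := hT.ninety_lt_getD_zero (by omega)
    have le_ninety := body_le w
    rw [code_of_lt (by omega), heq, ← add_zero (37 + 8 * j), code_tail]
    omega
  · obtain ⟨i, rfl⟩ := Nat.exists_eq_add_of_le (by omega : 37 + 8 * j ≤ w)
    have step := hT.zigzag (i + 1) (by omega)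
    simp only [List.getD_cons_succ] at step
    rw [add_assoc (37 + 8 * j), code_tail, code_tail,
      show (37 + 8 * j + i) % 4 = (i + 1) % 4 by omega]
    exact step

lemma key_lt_key_of_code_lt {a b : ℕ} (h : code T j a < code T j b) : key T j a < key T j b :=
  Prod.Lex.toLex_lt_toLex.2 (Or.inl h)

lemma key_lt_key_iff {a b : ℕ} (hab : code T j a = code T j b → a = b) :
    key T j a < key T j b ↔ code T j a < code T j b := by
  refine ⟨fun h => ?_, key_lt_key_of_code_lt⟩
  obtain hlt | ⟨heq, -⟩ := Prod.Lex.toLex_lt_toLex.1 h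
  · exact hlt
  · exact absurd h (by rw [hab heq]; exact lt_irrefl _)

lemma key_injective (T : List ℕ) (j : ℕ) : Function.Injective (key T j) := by
  intro a b hab
  simp only [key, EmbeddingLike.apply_eq_iff_eq, Prod.mk.injEq] at hab
  exact hab.2.2

lemma key_lt_key_of_level_lt {b u v : ℕ} (huv : ∀ K, level (K + 1) u < level (K + 1) v)
    (hb : b < 8 * j) (hu : 2 ^ b * u < 8 * j) (hv : 2 ^ b * v < 8 * j) :
    key T j (37 + 2 ^ b * u) < key T j (37 + 2 ^ b * v) := by
  have code_le : code T j (37 + 2 ^ b * u) ≤ code T j (37 + 2 ^ b * v) := by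
    rw [code_of_lt (by omega), code_of_lt (by omega), body_add, body_add]
    have := level_two_pow_mul_le (b := b) 2 huv
    omega
  refine Prod.Lex.toLex_lt_toLex'.2 ⟨code_le, fun _ => Prod.Lex.toLex_lt_toLex.2 (Or.inl ?_)⟩
  simpa only [Nat.add_sub_cancel_left] using level_two_pow_mul_lt huv hb

lemma isZigzag_key (hT : IsCrucialTail T) (j : ℕ) :
    IsZigzag (key T j) (37 + 8 * j + T.length) := fun w hw =>
  ⟨fun hmod => key_lt_key_of_code_lt ((isZigzag_code hT j w hw).1 hmod),
    fun hmod => key_lt_key_of_code_lt ((isZigzag_code hT j w hw).2 hmod)⟩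

lemma HasClashAt.key_of_code {k ℓ : ℕ} (h : HasClashAt (code T j) k ℓ) :
    HasClashAt (key T j) k ℓ :=
  h.refine fun _ _ _ _ => key_lt_key_of_code_lt

lemma hasClashAt_key_of_two_mul_add_le {k ℓ : ℕ} (hℓ : 0 < ℓ) (hdvd : 4 ∣ ℓ)
    (hk : 2 * k + ℓ ≤ 74) (hend : k + 2 * ℓ ≤ 37 + 8 * j) : HasClashAt (key T j) k ℓ := by
  obtain ⟨a, rfl⟩ := hdvd
  refine (body_hasClashAt k (by omega) a (by omega) (by omega) hk).refine fun a ha b hb hab => ?_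
  exact key_lt_key_of_code_lt (by rwa [code_of_lt (by omega), code_of_lt (by omega)])

-- The translation by `4 * r + 2` swaps `0` and `2`, and `1` and `3`, modulo `4`, and these residues
-- decide whether `level` goes up or down.
lemma hasClashAt_key_of_consecutive_multiples {b r u k : ℕ} (hb : b < 8 * j)
    (hu : k ≤ 37 + 2 ^ b * u) (hu' : 37 + 2 ^ b * (u + 1) < k + 2 ^ b * (4 * r + 2))
    (hend : k + 2 * (2 ^ b * (4 * r + 2)) ≤ 37 + 8 * j) :
    HasClashAt (key T j) k (2 ^ b * (4 * r + 2)) := by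
  have translate : ∀ v, 37 + 2 ^ b * v + 2 ^ b * (4 * r + 2) = 37 + 2 ^ b * (v + (4 * r + 2)) :=
    fun v => by ring
  have translate_succ := translate (u + 1)
  rw [add_right_comm u 1] at translate_succ
  have le_succ : 2 ^ b * u ≤ 2 ^ b * (u + 1) := Nat.mul_le_mul_left _ u.le_succ
  have translate_le : 2 ^ b * (u + (4 * r + 2)) ≤ 2 ^ b * (u + (4 * r + 2) + 1) :=
    Nat.mul_le_mul_left _ (Nat.le_succ _)
  have mem : 37 + 2 ^ b * u ∈ Finset.Ico k (k + 2 ^ b * (4 * r + 2)) := by simp; omega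
  have succ_mem : 37 + 2 ^ b * (u + 1) ∈ Finset.Ico k (k + 2 ^ b * (4 * r + 2)) := by simp; omega
  obtain up | down : (u % 4 = 0 ∨ u % 4 = 3) ∨ (u % 4 = 1 ∨ u % 4 = 2) := by omega
  · refine ⟨_, mem, _, succ_mem,
      key_lt_key_of_level_lt (fun K => level_lt_level_succ K up) hb (by omega) (by omega), ?_⟩
    rw [translate u, translate_succ]
    exact key_lt_key_of_level_lt (fun K => level_succ_lt_level K (by omega)) hb
      (by omega) (by omega)
  · refine ⟨_, succ_mem, _, mem,
      key_lt_key_of_level_lt (fun K => level_succ_lt_level K down) hb (by omega) (by omega), ?_⟩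
    rw [translate u, translate_succ]
    exact key_lt_key_of_level_lt (fun K => level_lt_level_succ K (by omega)) hb
      (by omega) (by omega)

lemma exists_consecutive_multiples {d ℓ : ℕ} (k : ℕ) (hd : 0 < d) (hℓ : 2 * d ≤ ℓ) :
    ∃ u, k ≤ d * u ∧ d * (u + 1) < k + ℓ := by
  have lower := Nat.lt_mul_div_succ (k + d - 1) hd
  have upper := Nat.mul_div_le (k + d - 1) d
  rw [mul_add] at lower
  exact ⟨(k + d - 1) / d, by omega, by rw [mul_add]; omega⟩

lemma hasClashAt_key_of_lt_two_mul_add {k ℓ : ℕ} (hℓ : 0 < ℓ) (hdvd : 4 ∣ ℓ)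
    (hk : 74 < 2 * k + ℓ) (hend : k + 2 * ℓ ≤ 37 + 8 * j) : HasClashAt (key T j) k ℓ := by
  obtain ⟨b, _, ⟨r, rfl⟩, hbr⟩ := Nat.exists_eq_two_pow_mul_odd (n := ℓ / 2) (by omega)
  obtain rfl : ℓ = 2 ^ b * (4 * r + 2) := by
    rw [show 4 * r + 2 = 2 * (2 * r + 1) by ring, mul_left_comm, ← hbr]
    omega
  have two_mul_le : 2 * 2 ^ b ≤ 2 ^ b * (4 * r + 2) := by
    rw [mul_comm]
    exact Nat.mul_le_mul_left _ (by omega)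
  have b_lt : b < 8 * j := Nat.lt_two_pow_self.trans (by omega)
  obtain ⟨u, hu, hu'⟩ : ∃ u, k ≤ 37 + 2 ^ b * u ∧
      37 + 2 ^ b * (u + 1) < k + 2 ^ b * (4 * r + 2) := by
    obtain hk37 | hk37 := le_total k 37
    · exact ⟨0, by omega, by omega⟩
    · obtain ⟨k, rfl⟩ := Nat.exists_eq_add_of_le hk37
      obtain ⟨u, hu, hu'⟩ := exists_consecutive_multiples k (Nat.two_pow_pos b) two_mul_le
      exact ⟨u, by omega, by omega⟩
  exact hasClashAt_key_of_consecutive_multiples b_lt hu hu' hend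

lemma hasClashAt_code_of_long {k ℓ : ℕ} (hT : IsCrucialTail T) (hℓ : 24 ≤ ℓ) (hdvd : 4 ∣ ℓ)
    (hmeet : 37 + 8 * j < k + 2 * ℓ) (hend : k + 2 * ℓ ≤ 37 + 8 * j + T.length) :
    HasClashAt (code T j) k ℓ := by
  have length_le := hT.length_le
  obtain rfl | hne := eq_or_ne ℓ (8 * j)
  · refine ⟨35, by simp; omega, 32, by simp; omega, ?_, ?_⟩
    · rw [code_of_lt (by omega), code_of_lt (by omega)]
      decide
    · rw [code_of_lt (by omega), code_of_lt (by omega),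
        show 32 + 8 * j = 37 + (8 * j - 5) by omega, show 35 + 8 * j = 37 + (8 * j - 2) by omega]
      exact body_add_lt_body_add fun K =>
        level_lt_level_of_mod_eq_three_of_even K (by omega) (by omega)
  · refine ⟨37 + 8 * j - ℓ, by simp; omega, 37 + 8 * j - ℓ - 3, by simp; omega, ?_, ?_⟩
    · rw [code_of_lt (by omega), code_of_lt (by omega)]
      exact body_lt_body_sub_three (by omega) (by omega) (by omega)
    · have first := hT.ninety_lt_getD_zero (by omega)
      have le_ninety := body_le (37 + 8 * j - ℓ - 3 + ℓ)
      rw [code_of_lt (by omega), show 37 + 8 * j - ℓ + ℓ = 37 + 8 * j + 0 by omega, code_tail]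
      omega

-- Beyond `j = 5`, short factors that meet the tail lie right of `head`, where `code` is periodic.
lemma TailClashes.of_min (h : TailClashes T (min j 5)) : TailClashes T j := by
  obtain hj | hj := le_total j 5
  · rwa [min_eq_left hj] at h
  · rw [min_eq_right hj] at h
    obtain ⟨q, rfl⟩ := Nat.exists_eq_add_of_le hj
    intro ℓ hℓ k hk hmeet hend
    have ℓ_le : ℓ ≤ 20 := (by decide : ∀ ℓ ∈ [4, 8, 12, 16, 20], ℓ ≤ 20) ℓ hℓ
    obtain ⟨k, rfl⟩ := Nat.exists_eq_add_of_le (by omega : 8 * q ≤ k)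
    exact (h ℓ hℓ k (by omega) (by omega) (by omega)).shift (8 * q) fun a ha =>
      code_shift q (by rw [Finset.mem_Ico] at ha; omega)

lemma hasClashAt_key {k ℓ : ℕ} (hT : IsCrucialTail T) (hclash : TailClashes T j) (hℓ : 0 < ℓ)
    (hdvd : 4 ∣ ℓ) (hend : k + 2 * ℓ ≤ 37 + 8 * j + T.length) : HasClashAt (key T j) k ℓ := by
  obtain hmiddle | hmeet := le_or_gt (k + 2 * ℓ) (37 + 8 * j)
  · obtain hk | hk := le_or_gt (2 * k + ℓ) 74
    · exact hasClashAt_key_of_two_mul_add_le hℓ hdvd hk hmiddle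
    · exact hasClashAt_key_of_lt_two_mul_add hℓ hdvd hk hmiddle
  · obtain hlong | hshort := le_or_gt 24 ℓ
    · exact (hasClashAt_code_of_long hT hlong hdvd hmeet hend).key_of_code
    · have ℓ_mem : ℓ ∈ [4, 8, 12, 16, 20] :=
        (by decide : ∀ ℓ < 24, 0 < ℓ → 4 ∣ ℓ → ℓ ∈ [4, 8, 12, 16, 20]) ℓ hshort hℓ hdvd
      exact (hclash ℓ ℓ_mem k (by omega) hmeet hend).key_of_code

lemma squareFree_of_key {σ : Fin (37 + 8 * j + T.length) → Fin (37 + 8 * j + T.length)}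
    (hT : IsCrucialTail T) (hclash : TailClashes T j)
    (hσ : ∀ a b, σ a < σ b ↔ key T j a < key T j b) : SquareFree σ := by
  rintro ⟨k, ℓ, hsq⟩
  obtain ⟨hℓ, hend, hsq⟩ := (hasSquareAt_iff hσ).1 hsq
  have hdvd := (isZigzag_key hT j).four_dvd hℓ hend hsq
  exact (hasClashAt_key hT hclash (by omega) hdvd hend).not_isSquareAt hsq

lemma containsSquare_of_isRightExtension
    {σ : Fin (37 + 8 * j + T.length) → Fin (37 + 8 * j + T.length)} (hT : IsCrucialTail T)
    (hσ : ∀ a b, σ a < σ b ↔ key T j a < key T j b)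
    (π : Equiv.Perm (Fin (37 + 8 * j + T.length + 1))) (hπ : IsRightExtension σ π) :
    ContainsSquare π := by
  refine containsSquare_of_forcesSquare (p := 37 + 8 * j) π le_rfl (by omega)
    (fun a b ha hb hae hbe => ?_) hT.forcesSquare
  have inj : code T j (37 + 8 * j + a) = code T j (37 + 8 * j + b) →
      37 + 8 * j + a = 37 + 8 * j + b := fun h => by
    rw [code_tail, code_tail, List.getD_eq_getElem _ _ (by omega),
      List.getD_eq_getElem _ _ (by omega), hT.nodup.getElem_inj_iff] at h
    rw [h]
  rw [← code_tail T j a, ← code_tail T j b, ← key_lt_key_iff inj]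
  exact (hπ ⟨37 + 8 * j + a, by omega⟩ ⟨37 + 8 * j + b, by omega⟩).trans (hσ _ _)

lemma containsSquare_of_isLeftExtension
    {σ : Fin (37 + 8 * j + T.length) → Fin (37 + 8 * j + T.length)}
    (hσ : ∀ a b, σ a < σ b ↔ key T j a < key T j b)
    (π : Equiv.Perm (Fin (37 + 8 * j + T.length + 1))) (hπ : IsLeftExtension σ π) :
    ContainsSquare π := by
  refine containsSquare_of_forcesSquare (p := 0) π (Nat.zero_le _) (by omega)
    (fun a b ha hb hae hbe => ?_) forcesSquare_head
  obtain ⟨a, rfl⟩ := Nat.exists_eq_succ_of_ne_zero hae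
  obtain ⟨b, rfl⟩ := Nat.exists_eq_succ_of_ne_zero hbe
  have code_eq : ∀ i < 37, code T j i = head.getD i 0 := fun i hi => by
    rw [code_of_lt (by omega), body, if_pos hi]
  have inj : code T j a = code T j b → a = b := by
    rw [code_eq a (by omega), code_eq b (by omega)]
    exact (by decide +kernel : ∀ a < 37, ∀ b < 37, head.getD a 0 = head.getD b 0 → a = b)
      a (by omega) b (by omega)
  simp only [Nat.succ_sub_one, zero_add]
  rw [← code_eq a (by omega), ← code_eq b (by omega), ← key_lt_key_iff inj]
  exact (hπ ⟨a, by omega⟩ ⟨b, by omega⟩).trans (hσ _ _)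

lemma exists_bicrucial {n : ℕ} (hT : IsCrucialTail T) (hclash : TailClashes T (min j 5))
    (hn : n = 37 + 8 * j + T.length) : ∃ σ : Equiv.Perm (Fin n), Bicrucial σ := by
  subst hn
  obtain ⟨σ, hσ⟩ := exists_perm_lt_iff ((key_injective T j).comp Fin.val_injective)
  have squareFree := squareFree_of_key hT (.of_min hclash) hσ
  exact ⟨σ, ⟨squareFree, containsSquare_of_isLeftExtension hσ⟩,
    squareFree, containsSquare_of_isRightExtension hT hσ⟩

end Construction

section Tails

/-- The tail of the permutations of length `48 + 8 * j`. -/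
def tail48 : List ℕ :=
  [106, 111, 110, 107, 108, 109, 103, 101, 104, 105, 102]

/-- The tail of the permutations of length `50 + 8 * j`. -/
def tail50 : List ℕ :=
  [101, 111, 110, 104, 105, 109, 103, 102, 107, 112, 108, 106, 113]

/-- The tail of the permutations of length `52 + 8 * j`. -/
def tail52 : List ℕ :=
  [103, 105, 104, 71, 101, 102, 51, 45, 52, 54, 53, 42, 43, 44, 41]

/-- The tail of the permutation of length `54`. -/
def tail54 : List ℕ :=
  [101, 103, 102, 41, 44, 104, 43, 42, 105, 113, 110, 106, 109, 111, 108, 107, 112]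

/-- The tail of the permutations of length `62 + 8 * j`. Neither it nor `tail54`
yields square-free permutations of all lengths `54 + 8 * j`. -/
def tail62 : List ℕ :=
  [101, 108, 103, 43, 61, 102, 42, 41, 104, 106, 105, 64, 65, 66, 63, 62, 107]

lemma isCrucialTail_tail48 : IsCrucialTail tail48 := by constructor <;> decide +kernel
lemma isCrucialTail_tail50 : IsCrucialTail tail50 := by constructor <;> decide +kernel
lemma isCrucialTail_tail52 : IsCrucialTail tail52 := by constructor <;> decide +kernel
lemma isCrucialTail_tail54 : IsCrucialTail tail54 := by constructor <;> decide +kernel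
lemma isCrucialTail_tail62 : IsCrucialTail tail62 := by constructor <;> decide +kernel

lemma tailClashes_tail48 : ∀ j ≤ 5, TailClashes tail48 j := by decide +kernel
lemma tailClashes_tail50 : ∀ j ≤ 5, TailClashes tail50 j := by decide +kernel
lemma tailClashes_tail52 : ∀ j ≤ 5, TailClashes tail52 j := by decide +kernel
lemma tailClashes_tail54 : TailClashes tail54 0 := by decide +kernel
lemma tailClashes_tail62 : ∀ j ≤ 5, 1 ≤ j → TailClashes tail62 j := by decide +kernel

lemma exists_isCrucialTail {n : ℕ} (hn : Even n) (h48 : 48 ≤ n) :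
    ∃ T j, IsCrucialTail T ∧ TailClashes T (min j 5) ∧ n = 37 + 8 * j + T.length := by
  obtain ⟨j, hj⟩ : ∃ j, n = 48 + 8 * j ∨ n = 50 + 8 * j ∨ n = 52 + 8 * j ∨ n = 54 + 8 * j :=
    ⟨(n - 48) / 8, by have := Nat.even_iff.1 hn; omega⟩
  have le_five : min j 5 ≤ 5 := min_le_right j 5
  rcases hj with hj | hj | hj | hj
  · exact ⟨tail48, j, isCrucialTail_tail48, tailClashes_tail48 _ le_five,
      hj.trans (add_right_comm 37 11 (8 * j))⟩
  · exact ⟨tail50, j, isCrucialTail_tail50, tailClashes_tail50 _ le_five,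
      hj.trans (add_right_comm 37 13 (8 * j))⟩
  · exact ⟨tail52, j, isCrucialTail_tail52, tailClashes_tail52 _ le_five,
      hj.trans (add_right_comm 37 15 (8 * j))⟩
  · obtain rfl | hpos := j.eq_zero_or_pos
    · exact ⟨tail54, 0, isCrucialTail_tail54, tailClashes_tail54, hj⟩
    · exact ⟨tail62, j, isCrucialTail_tail62,
        tailClashes_tail62 _ le_five (le_min hpos (by decide)),
        hj.trans (add_right_comm 37 17 (8 * j))⟩

end Tails

end Bicrucial

/-- For every even integer `n ≥ 48`, there exists a bicrucial permutation of length `n`. -/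
theorem bicrucial_exists_even (n : ℕ) (hn : Even n) (h48 : 48 ≤ n) :
    ∃ σ : Equiv.Perm (Fin n), Bicrucial σ := by
  obtain ⟨T, j, hT, hclash, hlength⟩ := Bicrucial.exists_isCrucialTail hn h48
  exact Bicrucial.exists_bicrucial hT hclash hlength
end
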